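/- (Corollary 4.2, global algebraic growth of the Morrey norm) Let 0 ≤ α < 1/2. There exists a constant K > 0, depending only on α, with the following property. Let u be a classical Yudovich solution of the 2D Euler equations on [0,∞) × ℝ² such that sup_{0 ≤ t ≤ T} ‖u(t,·)‖_{L²_α} < ∞ for every T > 0, and such that |curl u(t,x)| ≤ W for all (t,x), where W := sup_x |curl u(0,x)| < ∞. Set M₀ := ‖u(0,·)‖_{L²_α}. Then for all t ≥ 0: ‖u(t,·)‖_{L²_α} ≤ K ( M₀ + t^{(1+α)/(1−α)} M₀^{2/(1−α)} + t^{2(1+α)/(1−α)} W^{(1+α)/(1−α)} M₀^{2/(1−α)} ). -/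

import Mathlib

/-! The growth of the Morrey norm is governed by the localised energies `enr u r t = ∫ χ_r |u(t)|²`,
where `χ_r` is a cut-off at radius `r`. Multiplying the Euler equations by `χ_r u` leaves a transport
term, which only sees `∇χ_r`, and the work of the pressure on `χ_r u`. If all balls of radius
`ρ ≥ r` carry energy at most `M² ρ^(2+2α)` and `|u| ≤ U` on the ball of radius `5r`, both
terms are `≲ U M² r^(1+2α)`.

For the pressure, let `L_s` be `log|x|` smoothed out below radius `2s`. The kernel splits as
`L_δ - L_r`, which is compactly supported at scale `r`, plus `L_r`, plus an error which vanishes as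
`δ → 0` (`pressure_decomp`). In the far part all derivatives of the source `∂ⱼ∂ₖ(uⱼuₖ)` fall on
`L_r`, whose third derivatives are `≲ (r + |x|)⁻³`; summing over dyadic balls converges because
`α < 1/2` (`far_bound`). In the near part two integrations by parts move the convolution onto
`u · ∇χ_r`, and the double Riesz transform that appears is handled without singular
integrals: the `L²` norm of a compactly supported Hessian is at most that of the Laplacian, and
`Δ(L_δ - L_r)` is bounded in `L¹` uniformly in `δ` (`near_bound`).

The velocity itself is bounded by interpolating between the local energy and the vorticity
(`sup_bound`, `sup_cor`): `U ≲ M r^α + (W M r^(1+α))^(1/2)`. Altogether (`energy_rate`)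

  `d/dt enr u r ≲ M² (M r^(α-1) + (W M r^(α-1))^(1/2)) r^(2+2α)`.

The factor `r^(α-1)` is the gain: it is decreasing in `r`, so on scales `r ≥ R` with
`R^(1-α) ≈ 1 + T m + T² W m` the energies can grow on `[0, T]` only by a fixed fraction of their initial
budget `m² r^(2+2α)`. The local boundedness of the Morrey norm gives a common, uncontrolled growth
rate for all `r ≥ R`, which is what a continuity argument in small time steps needs (`bootstrap`), and
yields the bound on scales `≥ R` (`energy_global`). Balls of radius `r < R` are enlarged to radius
`R`, at the price of a factor `R^(1+α)` in the Morrey norm; this is the claimed algebraic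
growth for every `m > M₀` (`morrey_real`), and `m → M₀` gives the statement, including the
case `M₀ = 0`. -/

open MeasureTheory Metric ENNReal

noncomputable section

/-- The plane `ℝ²` as a Euclidean space. -/
abbrev E2 := EuclideanSpace ℝ (Fin 2)

/-- The `i`-th standard basis vector of `ℝ²`. -/
def e2 (i : Fin 2) : E2 := EuclideanSpace.single i 1

/-- Partial derivative `∂ᵢ F` of a scalar function on `ℝ²`. -/
def pd (i : Fin 2) (F : E2 → ℝ) (z : E2) : ℝ := fderiv ℝ F z (e2 i)

/-- Partial derivative `∂ⱼ uᵢ` of a vector field on `ℝ²`. -/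
def pdv (j i : Fin 2) (u : E2 → E2) (y : E2) : ℝ := fderiv ℝ u y (e2 j) i

/-- Divergence `∂₁u₁ + ∂₂u₂` of a vector field on `ℝ²`. -/
def div2 (u : E2 → E2) (x : E2) : ℝ := ∑ i, pdv i i u x

/-- Scalar vorticity `∂₁u₂ − ∂₂u₁` of a vector field on `ℝ²`. -/
def curl2 (u : E2 → E2) (x : E2) : ℝ := pdv 0 1 u x - pdv 1 0 u x

/-- Truncated local Morrey `L²` norm
`‖f‖_{L²_α(R)} = sup_{r ≥ R} ( r^{-(d+2α)} ∫_{B(0,r)} |f|² )^{1/2}`, valued in `ℝ≥0∞`. -/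
def morreyR {d : ℕ} {F : Type*} [NormedAddCommGroup F] (α R : ℝ)
    (f : EuclideanSpace ℝ (Fin d) → F) : ℝ≥0∞ :=
  ⨆ r : {r : ℝ // R ≤ r},
    ((∫⁻ x in ball (0 : EuclideanSpace ℝ (Fin d)) (r : ℝ), (‖f x‖₊ : ℝ≥0∞) ^ 2) /
      ENNReal.ofReal ((r : ℝ) ^ ((d : ℝ) + 2 * α))) ^ ((1 : ℝ) / 2)

/-- Truncated `L^∞_β` norm `sup_{r ≥ R} r^{-β} sup_{|x| ≤ r} |f(x)|`, valued in `ℝ≥0∞`. -/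
def morreyInfR {d : ℕ} {F : Type*} [NormedAddCommGroup F] (β R : ℝ)
    (f : EuclideanSpace ℝ (Fin d) → F) : ℝ≥0∞ :=
  ⨆ r : {r : ℝ // R ≤ r},
    (⨆ x : {x : EuclideanSpace ℝ (Fin d) // ‖x‖ ≤ (r : ℝ)}, (‖f x.1‖₊ : ℝ≥0∞)) /
      ENNReal.ofReal ((r : ℝ) ^ β)

/-- The fundamental solution `E(x) = −(2π)⁻¹ log |x|` of `−Δ` on `ℝ²`. -/
def fundE (z : E2) : ℝ := -(2 * Real.pi)⁻¹ * Real.log ‖z‖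

/-- A cut-off function: smooth, `0 ≤ θ ≤ 1`, `θ ≡ 1` on `B(0,1)`, supported in `B(0,2)`. -/
def IsCutoff (θ : E2 → ℝ) : Prop :=
  ContDiff ℝ (⊤ : ℕ∞) θ ∧ (∀ x, 0 ≤ θ x ∧ θ x ≤ 1) ∧ (∀ x : E2, ‖x‖ ≤ 1 → θ x = 1) ∧
    (∀ x : E2, 2 ≤ ‖x‖ → θ x = 0)

/-- The near-field kernel `θE`. -/
def thetaE (θ : E2 → ℝ) (w : E2) : ℝ := θ w * fundE w

/-- The far-field kernel `(1−θ)E` (which vanishes near the origin). -/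
def oneThetaE (θ : E2 → ℝ) (w : E2) : ℝ := (1 - θ w) * fundE w

/-- The pressure force `∇Π(u⊗u)` of Definition 3.1:
`∂ᵢΠ = ∂ᵢ(θE) * (Σ_{jk} ∂ⱼu_k ∂_k uⱼ) + Σ_{jk} ∂ᵢ∂ⱼ∂ₖ((1−θ)E) * (uⱼ u_k)`. -/
def pressureForce (θ : E2 → ℝ) (u : E2 → E2) (i : Fin 2) (x : E2) : ℝ :=
  (∫ y, pd i (thetaE θ) (x - y) * ∑ j, ∑ k, pdv j k u y * pdv k j u y) +
  ∑ j, ∑ k, ∫ y, pd i (pd j (pd k (oneThetaE θ))) (x - y) * (u y j * u y k)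

/-- Absolute convergence of all the integrals defining the pressure force. -/
def PressureIntegrable (θ : E2 → ℝ) (u : E2 → E2) (x : E2) : Prop :=
  (∀ i : Fin 2,
    Integrable (fun y => pd i (thetaE θ) (x - y) * ∑ j, ∑ k, pdv j k u y * pdv k j u y)) ∧
  (∀ i j k : Fin 2,
    Integrable (fun y => pd i (pd j (pd k (oneThetaE θ))) (x - y) * (u y j * u y k)))

/-- A classical Yudovich solution of the 2D incompressible Euler equations on `[0,∞) × ℝ²`:
a smooth divergence-free vector field satisfying
`∂ₜuᵢ + Σⱼ uⱼ∂ⱼuᵢ + Pᵢ = 0` with the integral pressure force `Pᵢ`, all pressure integrals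
being absolutely convergent. -/
def IsYudovichSolution (θ : E2 → ℝ) (u : ℝ → E2 → E2) : Prop :=
  ContDiffOn ℝ (⊤ : ℕ∞) (fun q : ℝ × E2 => u q.1 q.2) (Set.Ici 0 ×ˢ Set.univ) ∧
  (∀ t, 0 ≤ t → ∀ x, div2 (u t) x = 0) ∧
  (∀ t, 0 ≤ t → ∀ x, PressureIntegrable θ (u t) x) ∧
  (∀ t, 0 ≤ t → ∀ x, ∀ i : Fin 2,
    HasDerivWithinAt (fun s => u s x i)
      (-(∑ j, u t x j * pdv j i (u t) x) - pressureForce θ (u t) i x) (Set.Ici 0) t)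

/-! ### Partial derivatives and integration by parts -/

/-- Smooth scalar functions on the plane. -/
abbrev Sm (f : E2 → ℝ) : Prop := ContDiff ℝ (⊤ : ℕ∞) f

lemma Sm.diff {f : E2 → ℝ} (hf : Sm f) : Differentiable ℝ f :=
  ContDiff.differentiable hf (by simp)

lemma Sm.cont {f : E2 → ℝ} (hf : Sm f) : Continuous f := ContDiff.continuous hf

lemma Sm.pd {f : E2 → ℝ} (hf : Sm f) (i : Fin 2) : Sm (pd i f) := by
  have h : ContDiff ℝ (⊤ : ℕ∞) (fderiv ℝ f) := ContDiff.fderiv_right hf (by simp)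
  exact h.clm_apply contDiff_const

lemma pd_comm {f : E2 → ℝ} (hf : Sm f) (i j : Fin 2) : pd i (pd j f) = pd j (pd i f) := by
  funext x
  have h : ContDiff ℝ (⊤ : ℕ∞) (fderiv ℝ f) := ContDiff.fderiv_right hf (by simp)
  have hd : DifferentiableAt ℝ (fderiv ℝ f) x := (h.differentiable (by simp)) x
  have key : ∀ a b : Fin 2, pd a (pd b f) x = fderiv ℝ (fderiv ℝ f) x (e2 a) (e2 b) := by
    intro a b
    unfold pd
    rw [fderiv_clm_apply hd (differentiableAt_const _)]
    simp
  rw [key, key]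
  have hs : IsSymmSndFDerivAt ℝ f x :=
    ContDiffAt.isSymmSndFDerivAt (ContDiff.contDiffAt hf)
      (by simpa using (WithTop.coe_le_coe.2 le_top : (2 : WithTop ℕ∞) ≤ ((⊤ : ℕ∞) : WithTop ℕ∞)))
  exact hs _ _

lemma pd_mul {f g : E2 → ℝ} (hf : Differentiable ℝ f) (hg : Differentiable ℝ g) (i : Fin 2)
    (x : E2) : pd i (fun y => f y * g y) x = pd i f x * g x + f x * pd i g x := by
  unfold pd
  rw [fderiv_fun_mul (hf x) (hg x)]
  simp; ring

lemma pd_add {f g : E2 → ℝ} (hf : Differentiable ℝ f) (hg : Differentiable ℝ g) (i : Fin 2)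
    (x : E2) : pd i (fun y => f y + g y) x = pd i f x + pd i g x := by
  unfold pd
  rw [fderiv_fun_add (hf x) (hg x)]
  simp

lemma pd_sub {f g : E2 → ℝ} (hf : Differentiable ℝ f) (hg : Differentiable ℝ g) (i : Fin 2)
    (x : E2) : pd i (fun y => f y - g y) x = pd i f x - pd i g x := by
  unfold pd
  rw [fderiv_fun_sub (hf x) (hg x)]
  simp

lemma pd_const_mul {f : E2 → ℝ} (hf : Differentiable ℝ f) (c : ℝ) (i : Fin 2)
    (x : E2) : pd i (fun y => c * f y) x = c * pd i f x := by
  unfold pd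
  rw [fderiv_const_mul (hf x)]
  simp

lemma pd_const_add {f : E2 → ℝ} (c : ℝ) (i : Fin 2)
    (x : E2) : pd i (fun y => c + f y) x = pd i f x := by
  unfold pd
  rw [fderiv_const_add]

lemma pd_congr {f g : E2 → ℝ} {x : E2} (h : f =ᶠ[nhds x] g) (i : Fin 2) : pd i f x = pd i g x := by
  unfold pd
  rw [h.fderiv_eq]

lemma pd_congr_ev {f g : E2 → ℝ} {x : E2} (h : f =ᶠ[nhds x] g) (i : Fin 2) :
    pd i f =ᶠ[nhds x] pd i g := by
  filter_upwards [h.eventuallyEq_nhds] with y hy using pd_congr hy i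

lemma pd_const (c : ℝ) (i : Fin 2) (x : E2) : pd i (fun _ => c) x = 0 := by
  unfold pd
  simp

lemma pd_comp_sub {K : E2 → ℝ} (hK : Differentiable ℝ K) (x : E2) (i : Fin 2) (y : E2) :
    pd i (fun y => K (x - y)) y = - pd i K (x - y) := by
  unfold pd
  have h1 : HasFDerivAt (fun y : E2 => x - y) (-ContinuousLinearMap.id ℝ E2) y :=
    (hasFDerivAt_id y).const_sub x
  have := ((hK (x - y)).hasFDerivAt.comp y h1).fderiv
  rw [show (fun y => K (x - y)) = K ∘ (fun y => x - y) from rfl, this]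
  simp

lemma pd_scale {K : E2 → ℝ} (hK : Differentiable ℝ K) (c : ℝ) (i : Fin 2) (y : E2) :
    pd i (fun y => K (c • y)) y = c * pd i K (c • y) := by
  unfold pd
  have h1 : HasFDerivAt (fun y : E2 => c • y) (c • ContinuousLinearMap.id ℝ E2) y :=
    (hasFDerivAt_id y).const_smul c
  have := ((hK (c • y)).hasFDerivAt.comp y h1).fderiv
  rw [show (fun y => K (c • y)) = K ∘ (fun y => c • y) from rfl, this]
  simp

lemma hcs_pd {f : E2 → ℝ} (hf : HasCompactSupport f) (i : Fin 2) : HasCompactSupport (pd i f) :=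
  hf.fderiv_apply (𝕜 := ℝ) (e2 i)

lemma int_cs {f : E2 → ℝ} (hf : Continuous f) (h : HasCompactSupport f) : Integrable f :=
  hf.integrable_of_hasCompactSupport h

lemma ibp {f g : E2 → ℝ} (hf : Sm f) (hg : Sm g) (h : HasCompactSupport f) (i : Fin 2) :
    ∫ x, f x * pd i g x = - ∫ x, pd i f x * g x := by
  apply integral_mul_fderiv_eq_neg_fderiv_mul_of_integrable
  · exact int_cs ((hf.pd i).cont.mul hg.cont) ((hcs_pd h i).mul_right)
  · exact int_cs (hf.cont.mul (hg.pd i).cont) (h.mul_right)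
  · exact int_cs (hf.cont.mul hg.cont) (h.mul_right)
  · intro x _; exact hf.diff x
  · intro x _; exact hg.diff x

lemma Sm.comp_sub {K : E2 → ℝ} (hK : Sm K) (x : E2) : Sm (fun y => K (x - y)) :=
  ContDiff.comp hK (contDiff_const.sub contDiff_id)

lemma hcs_comp_sub {K : E2 → ℝ} (hK : HasCompactSupport K) (x : E2) :
    HasCompactSupport (fun y => K (x - y)) :=
  hK.comp_homeomorph (Homeomorph.subLeft x)

/-- Cauchy–Schwarz for real integrals, in squared form. -/
lemma cs_sq {X : Type*} [MeasurableSpace X] {μ : Measure X} {f g : X → ℝ}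
    (hf : Integrable (fun x => f x ^ 2) μ) (hg : Integrable (fun x => g x ^ 2) μ)
    (hfg : Integrable (fun x => f x * g x) μ) :
    (∫ x, f x * g x ∂μ) ^ 2 ≤ (∫ x, f x ^ 2 ∂μ) * ∫ x, g x ^ 2 ∂μ := by
  have h : ∀ t : ℝ, 0 ≤ (∫ x, f x ^ 2 ∂μ) * (t * t) + (2 * ∫ x, f x * g x ∂μ) * t
      + ∫ x, g x ^ 2 ∂μ := by
    intro t
    have h1 : 0 ≤ ∫ x, (t * f x + g x) ^ 2 ∂μ := integral_nonneg fun x => sq_nonneg _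
    have h2 : ∫ x, (t * f x + g x) ^ 2 ∂μ
        = ∫ x, ((t * t) * f x ^ 2 + (2 * t) * (f x * g x) + g x ^ 2) ∂μ := by
      congr 1; funext x; ring
    have h3 : Integrable (fun x => (t * t) * f x ^ 2 + (2 * t) * (f x * g x)) μ :=
      (hf.const_mul _).add (hfg.const_mul _)
    rw [h2, integral_add h3 hg,
      integral_add (hf.const_mul _) (hfg.const_mul _), integral_const_mul,
      integral_const_mul] at h1
    linarith
  have := discrim_le_zero h
  unfold discrim at this
  nlinarith

lemma abs_le_of_cs {a A B : ℝ} (hA : 0 ≤ A) (hB : 0 ≤ B) (h : a ^ 2 ≤ A ^ 2 * B ^ 2) :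
    |a| ≤ A * B := by
  rw [← mul_pow] at h
  exact abs_le_of_sq_le_sq h (by positivity)

/-! ### A smooth truncation of the logarithm -/

/-- Profile of the truncated logarithm as a function of the squared radius: it vanishes for
`t ≤ 1` and equals `log √t` for `t ≥ 2`. -/
def Fp (t : ℝ) : ℝ := 1 / 2 * (Real.smoothTransition (t - 1) * Real.log t)

lemma Fp_smooth : ContDiff ℝ (⊤ : ℕ∞) Fp := by
  rw [contDiff_iff_contDiffAt]
  intro t
  by_cases h : t < 1
  · have : Fp =ᶠ[nhds t] fun _ => 0 := by
      filter_upwards [eventually_lt_nhds h] with s hs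
      simp [Fp, Real.smoothTransition.zero_of_nonpos (by linarith : s - 1 ≤ 0)]
    exact contDiffAt_const.congr_of_eventuallyEq this
  · have h1 : ContDiff ℝ (⊤ : ℕ∞) fun t : ℝ => Real.smoothTransition (t - 1) :=
      Real.smoothTransition.contDiff.comp (contDiff_id.sub contDiff_const)
    exact contDiffAt_const.mul (h1.contDiffAt.mul (Real.contDiffAt_log.2 (by linarith)))

lemma Fp_eq {t : ℝ} (h : 2 ≤ t) : Fp t = 1 / 2 * Real.log t := by
  simp [Fp, Real.smoothTransition.one_of_one_le (by linarith : 1 ≤ t - 1)]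

lemma Fp1_smooth : ContDiff ℝ (⊤ : ℕ∞) (deriv Fp) :=
  (contDiff_infty_iff_deriv.1 Fp_smooth).2

lemma Fp2_smooth : ContDiff ℝ (⊤ : ℕ∞) (deriv (deriv Fp)) :=
  (contDiff_infty_iff_deriv.1 Fp1_smooth).2

lemma Fp_hasDeriv (t : ℝ) : HasDerivAt Fp (deriv Fp t) t :=
  ((contDiff_infty_iff_deriv.1 Fp_smooth).1 t).hasDerivAt

lemma Fp1_hasDeriv (t : ℝ) : HasDerivAt (deriv Fp) (deriv (deriv Fp) t) t :=
  ((contDiff_infty_iff_deriv.1 Fp1_smooth).1 t).hasDerivAt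

lemma Fp1_eq {t : ℝ} (h : 2 < t) : deriv Fp t = 1 / 2 * t⁻¹ := by
  have h1 : Fp =ᶠ[nhds t] fun s => 1 / 2 * Real.log s := by
    filter_upwards [eventually_gt_nhds h] with s hs using Fp_eq hs.le
  rw [h1.deriv_eq]
  exact ((Real.hasDerivAt_log (by linarith)).const_mul (1 / 2)).deriv

lemma Fp2_eq {t : ℝ} (h : 2 < t) : deriv (deriv Fp) t = - (1 / 2 * (t ^ 2)⁻¹) := by
  have h1 : deriv Fp =ᶠ[nhds t] fun s => 1 / 2 * s⁻¹ := by
    filter_upwards [eventually_gt_nhds h] with s hs using Fp1_eq hs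
  rw [h1.deriv_eq, ((hasDerivAt_inv (by linarith : t ≠ 0)).const_mul (1 / 2)).deriv]
  ring

/-- A smooth function on the plane, equal to `log ‖x‖` for `‖x‖ ≥ 2`. -/
def Lk (x : E2) : ℝ := Fp (‖x‖ ^ 2)

lemma Lk_smooth : Sm Lk := Fp_smooth.comp (contDiff_norm_sq ℝ)

lemma Lk_eq {x : E2} (h : 2 ≤ ‖x‖) : Lk x = Real.log ‖x‖ := by
  unfold Lk
  rw [Fp_eq (by nlinarith), Real.log_pow]
  push_cast; ring

lemma Lk_even (x : E2) : Lk (-x) = Lk x := by simp [Lk]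

lemma e2_inner (i : Fin 2) (x : E2) : inner ℝ x (e2 i) = x i := by
  unfold e2
  rw [EuclideanSpace.inner_single_right]
  simp

lemma hasFDerivAt_normsq (x : E2) :
    HasFDerivAt (fun x : E2 => ‖x‖ ^ 2) (2 • innerSL ℝ x) x :=
  (hasStrictFDerivAt_norm_sq x).hasFDerivAt

lemma pd_radial {G : ℝ → ℝ} {G' : ℝ} {x : E2} (hG : HasDerivAt G G' (‖x‖ ^ 2)) (i : Fin 2) :
    pd i (fun x => G (‖x‖ ^ 2)) x = G' * (2 * x i) := by
  unfold pd
  have h := (hG.comp_hasFDerivAt x (hasFDerivAt_normsq x)).fderiv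
  rw [show (fun x : E2 => G (‖x‖ ^ 2)) = G ∘ fun x : E2 => ‖x‖ ^ 2 from rfl, h]
  simp [e2_inner]

lemma pd_Lk (i : Fin 2) (x : E2) : pd i Lk x = deriv Fp (‖x‖ ^ 2) * (2 * x i) :=
  pd_radial (Fp_hasDeriv _) i

lemma pd_coord (i : Fin 2) (x : E2) : pd i (fun x : E2 => 2 * x i) x = 2 := by
  unfold pd
  have h : HasFDerivAt (fun x : E2 => 2 * x i) ((2 : ℝ) • (EuclideanSpace.proj i : E2 →L[ℝ] ℝ)) x :=
    ((EuclideanSpace.proj i : E2 →L[ℝ] ℝ).hasFDerivAt).const_mul 2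
  rw [h.fderiv]
  simp [e2]

lemma coord_smooth (i : Fin 2) : Sm (fun x : E2 => x i) :=
  (EuclideanSpace.proj i : E2 →L[ℝ] ℝ).contDiff

lemma pd_pd_Lk (i : Fin 2) (x : E2) : pd i (pd i Lk) x =
    deriv (deriv Fp) (‖x‖ ^ 2) * (4 * x i ^ 2) + 2 * deriv Fp (‖x‖ ^ 2) := by
  have h1 : pd i Lk = fun x => (fun x : E2 => deriv Fp (‖x‖ ^ 2)) x * (fun x : E2 => 2 * x i) x := by
    funext x; exact pd_Lk i x
  have h2 : Sm fun x : E2 => deriv Fp (‖x‖ ^ 2) := Fp1_smooth.comp (contDiff_norm_sq ℝ)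
  have h3 : Sm fun x : E2 => 2 * x i := contDiff_const.mul (coord_smooth i)
  rw [h1, pd_mul h2.diff h3.diff, pd_radial (Fp1_hasDeriv _), pd_coord]
  ring

/-- The Laplacian `∂₁² + ∂₂²`. -/
def lap (f : E2 → ℝ) (x : E2) : ℝ := pd 0 (pd 0 f) x + pd 1 (pd 1 f) x

lemma Sm.lap {f : E2 → ℝ} (hf : Sm f) : Sm (lap f) :=
  ((hf.pd 0).pd 0).add ((hf.pd 1).pd 1)

lemma normsq_eq (x : E2) : ‖x‖ ^ 2 = x 0 ^ 2 + x 1 ^ 2 := by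
  rw [EuclideanSpace.norm_sq_eq, Fin.sum_univ_two]
  simp

lemma lap_Lk (x : E2) : lap Lk x =
    4 * deriv Fp (‖x‖ ^ 2) + 4 * ‖x‖ ^ 2 * deriv (deriv Fp) (‖x‖ ^ 2) := by
  unfold lap
  rw [pd_pd_Lk, pd_pd_Lk, normsq_eq]
  ring

lemma lap_Lk_zero {x : E2} (h : 2 ≤ ‖x‖) : lap Lk x = 0 := by
  have h2 : 2 < ‖x‖ ^ 2 := by nlinarith
  rw [lap_Lk, Fp1_eq h2, Fp2_eq h2]
  have : ‖x‖ ≠ 0 := by linarith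
  field_simp
  ring

lemma lap_Lk_hcs : HasCompactSupport (lap Lk) :=
  HasCompactSupport.of_support_subset_isCompact (isCompact_closedBall 0 2) (by
    intro x hx
    by_contra h
    exact hx (lap_Lk_zero (by simpa using (lt_of_not_ge (by simpa using h)).le)))

/-- The total mass of `Δ L` is nonzero (it is `2π`): in polar coordinates, the radial integrand is
the derivative of `2 y² F'(y²)`, which goes from `0` to `1`. -/
lemma integral_lap_Lk_pos : 0 < ∫ x, lap Lk x := by
  have h0 : lap Lk = fun x => (fun y => 4 * deriv Fp (y ^ 2) + 4 * y ^ 2 * deriv (deriv Fp) (y ^ 2)) ‖x‖ := by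
    funext x; exact lap_Lk x
  have hint : Integrable (lap Lk) := int_cs Lk_smooth.lap.cont lap_Lk_hcs
  rw [h0] at hint ⊢
  have hint' := (integrable_fun_norm_addHaar (volume : Measure E2)
    (f := fun y => 4 * deriv Fp (y ^ 2) + 4 * y ^ 2 * deriv (deriv Fp) (y ^ 2))).1 hint
  rw [integral_fun_norm_addHaar (volume : Measure E2)
    (fun y => 4 * deriv Fp (y ^ 2) + 4 * y ^ 2 * deriv (deriv Fp) (y ^ 2))]
  have hd : ∀ y ∈ Set.Ioi (0 : ℝ), HasDerivAt (fun y : ℝ => 2 * (y ^ 2 * deriv Fp (y ^ 2)))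
      (y ^ (Module.finrank ℝ E2 - 1) •
        (4 * deriv Fp (y ^ 2) + 4 * y ^ 2 * deriv (deriv Fp) (y ^ 2))) y := by
    intro y _
    have h1 : HasDerivAt (fun y : ℝ => y ^ 2) (2 * y) y := by simpa using hasDerivAt_pow 2 y
    have h2 : HasDerivAt (fun y : ℝ => deriv Fp (y ^ 2)) (deriv (deriv Fp) (y ^ 2) * (2 * y)) y :=
      HasDerivAt.comp (h₂ := deriv Fp) y (Fp1_hasDeriv (y ^ 2)) h1
    refine ((h1.mul h2).const_mul 2).congr_deriv ?_
    simp
    ring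
  have hlim : Filter.Tendsto (fun y : ℝ => 2 * (y ^ 2 * deriv Fp (y ^ 2))) Filter.atTop (nhds 1) := by
    apply tendsto_const_nhds.congr'
    filter_upwards [Filter.eventually_ge_atTop 2] with y hy
    rw [Fp1_eq (by nlinarith)]
    have : y ≠ 0 := by linarith
    field_simp
  have hc : ContinuousWithinAt (fun y : ℝ => 2 * (y ^ 2 * deriv Fp (y ^ 2))) (Set.Ici 0) 0 := by
    apply Continuous.continuousWithinAt
    have := Fp1_smooth.continuous
    fun_prop
  rw [integral_Ioi_of_hasDerivAt_of_tendsto hc hd hint' hlim]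
  have hb : 0 < (volume : Measure E2).real (ball 0 1) := by
    rw [measureReal_def]
    exact ENNReal.toReal_pos (measure_ball_pos _ _ one_pos).ne' measure_ball_lt_top.ne
  simp
  exact hb

/-! ### The rescaled kernels -/

/-- The rescaled truncated logarithm: equal to `log ‖x‖` for `‖x‖ ≥ 2 s`. -/
def Ls (s : ℝ) (x : E2) : ℝ := Real.log s + Lk (s⁻¹ • x)

lemma Ls_smooth (s : ℝ) : Sm (Ls s) :=
  contDiff_const.add (Lk_smooth.comp (contDiff_const_smul _))

lemma Ls_eq {s : ℝ} (hs : 0 < s) {x : E2} (h : 2 * s ≤ ‖x‖) : Ls s x = Real.log ‖x‖ := by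
  have hx : ‖s⁻¹ • x‖ = s⁻¹ * ‖x‖ := by rw [norm_smul, Real.norm_of_nonneg (by positivity)]
  have hx0 : 0 < ‖x‖ := by linarith
  unfold Ls
  rw [Lk_eq, hx, Real.log_mul (by positivity) hx0.ne', Real.log_inv]
  · ring
  · rw [hx, inv_mul_eq_div, le_div_iff₀ hs]; exact h

lemma Ls_even (s : ℝ) (x : E2) : Ls s (-x) = Ls s x := by simp [Ls, Lk_even]

lemma pd_Ls (s : ℝ) (i : Fin 2) (x : E2) : pd i (Ls s) x = s⁻¹ * pd i Lk (s⁻¹ • x) := by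
  unfold Ls
  rw [pd_const_add, pd_scale Lk_smooth.diff]

lemma pd_smul_fun {K : E2 → ℝ} (hK : Sm K) (c a : ℝ) (i : Fin 2) :
    pd i (fun y => a * K (c • y)) = fun y => (a * c) * pd i K (c • y) := by
  funext y
  have : Differentiable ℝ fun y => K (c • y) :=
    Sm.diff (f := fun y => K (c • y)) (ContDiff.comp hK (contDiff_const_smul _))
  rw [pd_const_mul this, pd_scale hK.diff]
  ring

lemma pd_Ls_fun (s : ℝ) (i : Fin 2) : pd i (Ls s) = fun x => s⁻¹ * pd i Lk (s⁻¹ • x) :=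
  funext fun x => pd_Ls s i x

lemma lap_Ls (s : ℝ) (x : E2) : lap (Ls s) x = s⁻¹ ^ 2 * lap Lk (s⁻¹ • x) := by
  unfold lap
  rw [pd_Ls_fun, pd_Ls_fun, pd_smul_fun (Lk_smooth.pd 0), pd_smul_fun (Lk_smooth.pd 1)]
  ring

lemma pd3_Ls (s : ℝ) (i j k : Fin 2) (x : E2) : pd i (pd j (pd k (Ls s))) x =
    s⁻¹ ^ 3 * pd i (pd j (pd k Lk)) (s⁻¹ • x) := by
  rw [pd_Ls_fun, pd_smul_fun (Lk_smooth.pd k), pd_smul_fun ((Lk_smooth.pd k).pd j)]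
  ring

lemma bound_ball {f : E2 → ℝ} (hf : Continuous f) (ρ : ℝ) :
    ∃ C, 0 ≤ C ∧ ∀ x, ‖x‖ ≤ ρ → |f x| ≤ C := by
  obtain ⟨C, hC⟩ := (isCompact_closedBall (0 : E2) ρ).exists_bound_of_continuousOn hf.continuousOn
  refine ⟨max C 0, le_max_right _ _, fun x hx => le_trans ?_ (le_max_left _ _)⟩
  simpa using hC x (by simpa using hx)

lemma Lk_grad : ∃ C, 0 < C ∧ ∀ i x, |pd i Lk x| * ‖x‖ ≤ C := by
  obtain ⟨C0, h0, hC0⟩ := bound_ball (Lk_smooth.pd 0).cont 2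
  obtain ⟨C1, h1, hC1⟩ := bound_ball (Lk_smooth.pd 1).cont 2
  refine ⟨2 * (C0 + C1) + 1, by positivity, fun i x => ?_⟩
  by_cases hx : ‖x‖ ≤ 2
  · have : |pd i Lk x| ≤ C0 + C1 := by
      fin_cases i
      · exact (hC0 x hx).trans (by linarith)
      · exact (hC1 x hx).trans (by linarith)
    nlinarith [norm_nonneg x]
  · push Not at hx
    have hx0 : 0 < ‖x‖ := by linarith
    rw [pd_Lk, Fp1_eq (by nlinarith), show 1 / 2 * (‖x‖ ^ 2)⁻¹ * (2 * x i) = (‖x‖ ^ 2)⁻¹ * x i by ring,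
      abs_mul, abs_of_pos (by positivity)]
    have : |x i| ≤ ‖x‖ := by simpa using PiLp.norm_apply_le x i
    calc (‖x‖ ^ 2)⁻¹ * |x i| * ‖x‖ ≤ (‖x‖ ^ 2)⁻¹ * ‖x‖ * ‖x‖ := by gcongr
      _ = 1 := by field_simp
      _ ≤ _ := by linarith

/-- `|∇ L_s(x)| ≲ 1/|x|`, uniformly in the truncation scale `s`. -/
lemma Ls_grad : ∃ C, 0 < C ∧ ∀ s, 0 < s → ∀ i x, |pd i (Ls s) x| * ‖x‖ ≤ C := by
  obtain ⟨C, hC, h⟩ := Lk_grad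
  refine ⟨C, hC, fun s hs i x => ?_⟩
  have := h i (s⁻¹ • x)
  rw [norm_smul, Real.norm_of_nonneg (by positivity)] at this
  rw [pd_Ls, abs_mul, abs_of_pos (by positivity : 0 < s⁻¹)]
  calc _ = |pd i Lk (s⁻¹ • x)| * (s⁻¹ * ‖x‖) := by ring
    _ ≤ C := this

/-- Homogeneity: outside the ball of radius `2`, third derivatives of `L` scale like `|x|⁻³`. -/
lemma Lk_third_scale {z : E2} (hz : 2 < ‖z‖) {s : ℝ} (hs : 1 ≤ s) (i j k : Fin 2) :
    s ^ 3 * pd i (pd j (pd k Lk)) (s • z) = pd i (pd j (pd k Lk)) z := by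
  have h1 : (fun y => Lk (s • y)) =ᶠ[nhds z] fun y => Real.log s + Lk y := by
    filter_upwards [continuous_norm.continuousAt.eventually (eventually_gt_nhds hz)] with y hy
    have hn : ‖s • y‖ = s * ‖y‖ := by rw [norm_smul, Real.norm_of_nonneg (by linarith)]
    rw [Lk_eq hy.le, Lk_eq (by rw [hn]; nlinarith), hn, Real.log_mul (by linarith) (by linarith)]
  have h2 := pd_congr (pd_congr_ev (pd_congr_ev h1 k) j) i
  have h3 : pd k (fun y => Real.log s + Lk y) = pd k Lk := funext fun y => pd_const_add _ _ _
  rw [h3] at h2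
  rw [← h2]
  have h4 : (fun y => Lk (s • y)) = fun y => 1 * Lk (s • y) := by simp
  rw [h4, pd_smul_fun Lk_smooth, pd_smul_fun (Lk_smooth.pd k), pd_smul_fun ((Lk_smooth.pd k).pd j)]
  ring

/-- Third derivatives of `L` are `≲ (1 + |x|)⁻³`: by compactness on a bounded set, and by homogeneity
outside it. -/
lemma Lk_third : ∃ C, 0 < C ∧ ∀ i j k x, |pd i (pd j (pd k Lk)) x| * (1 + ‖x‖) ^ 3 ≤ C := by
  have H : ∀ i j k, ∃ C, 0 ≤ C ∧ ∀ x, |pd i (pd j (pd k Lk)) x| * (1 + ‖x‖) ^ 3 ≤ C := by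
    intro i j k
    obtain ⟨C, hC0, hC⟩ := bound_ball (((Lk_smooth.pd k).pd j).pd i).cont 3
    refine ⟨C * 64, by positivity, fun x => ?_⟩
    by_cases hx : ‖x‖ ≤ 3
    · have h1 : (1 + ‖x‖) ^ 3 ≤ 4 ^ 3 := by
        have := norm_nonneg x
        gcongr; linarith
      calc _ ≤ C * 4 ^ 3 := by
            gcongr
            exact hC x hx
        _ = C * 64 := by norm_num
    · push Not at hx
      have hx0 : 0 < ‖x‖ := by linarith
      set s := ‖x‖ / 3 with hs
      have hs1 : 1 ≤ s := by rw [hs]; linarith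
      set z := s⁻¹ • x with hz
      have hzn : ‖z‖ = 3 := by
        rw [hz, norm_smul, Real.norm_of_nonneg (by positivity), hs]; field_simp
      have hxz : s • z = x := by rw [hz, smul_smul, mul_inv_cancel₀ (by linarith), one_smul]
      have h2 := Lk_third_scale (by rw [hzn]; norm_num : 2 < ‖z‖) hs1 i j k
      rw [hxz] at h2
      have h3 := hC z hzn.le
      rw [← h2, abs_mul, abs_of_pos (by positivity)] at h3
      have h4 : 1 + ‖x‖ ≤ 4 * s := by rw [hs]; linarith
      calc _ ≤ |pd i (pd j (pd k Lk)) x| * (4 * s) ^ 3 := by gcongr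
        _ = (s ^ 3 * |pd i (pd j (pd k Lk)) x|) * 64 := by ring
        _ ≤ _ := by gcongr
  choose C hC0 hC using H
  refine ⟨(∑ i, ∑ j, ∑ k, C i j k) + 1, ?_, fun i j k x => (hC i j k x).trans ?_⟩
  · have : 0 ≤ ∑ i, ∑ j, ∑ k, C i j k :=
      Finset.sum_nonneg fun i _ => Finset.sum_nonneg fun j _ => Finset.sum_nonneg fun k _ => hC0 _ _ _
    linarith
  · have h1 : C i j k ≤ ∑ k, C i j k :=
      Finset.single_le_sum (fun k _ => hC0 i j k) (Finset.mem_univ k)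
    have h2 : ∑ k, C i j k ≤ ∑ j, ∑ k, C i j k :=
      Finset.single_le_sum (f := fun j => ∑ k, C i j k)
        (fun j _ => Finset.sum_nonneg fun k _ => hC0 i j k) (Finset.mem_univ j)
    have h3 : ∑ j, ∑ k, C i j k ≤ ∑ i, ∑ j, ∑ k, C i j k :=
      Finset.single_le_sum (f := fun i => ∑ j, ∑ k, C i j k)
        (fun i _ => Finset.sum_nonneg fun j _ => Finset.sum_nonneg fun k _ => hC0 i j k)
        (Finset.mem_univ i)
    linarith

/-- `|∇³ L_s(x)| ≲ (s + |x|)⁻³`, uniformly in the truncation scale `s`. -/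
lemma Ls_third : ∃ C, 0 < C ∧ ∀ s, 0 < s → ∀ i j k x,
    |pd i (pd j (pd k (Ls s))) x| * (s + ‖x‖) ^ 3 ≤ C := by
  obtain ⟨C, hC, h⟩ := Lk_third
  refine ⟨C, hC, fun s hs i j k x => ?_⟩
  have := h i j k (s⁻¹ • x)
  rw [norm_smul, Real.norm_of_nonneg (by positivity)] at this
  rw [pd3_Ls, abs_mul, abs_of_pos (by positivity : 0 < s⁻¹ ^ 3)]
  calc _ = |pd i (pd j (pd k Lk)) (s⁻¹ • x)| * (1 + s⁻¹ * ‖x‖) ^ 3 := by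
        rw [show s + ‖x‖ = s * (1 + s⁻¹ * ‖x‖) by field_simp]
        rw [mul_pow]; field_simp
    _ ≤ C := this

/-- The compactly supported kernel `L_δ - L_r`, a regularised and truncated logarithm. -/
def Nk (δ r : ℝ) (x : E2) : ℝ := Ls δ x - Ls r x

lemma Nk_smooth (δ r : ℝ) : Sm (Nk δ r) := (Ls_smooth δ).sub (Ls_smooth r)

lemma Nk_zero {δ r : ℝ} (hδ : 0 < δ) (hr : δ ≤ r) {x : E2} (h : 2 * r ≤ ‖x‖) : Nk δ r x = 0 := by
  unfold Nk
  rw [Ls_eq hδ (by linarith), Ls_eq (by linarith) h, sub_self]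

lemma hcs_of_zero {f : E2 → ℝ} {ρ : ℝ} (h : ∀ x, ρ ≤ ‖x‖ → f x = 0) : HasCompactSupport f :=
  HasCompactSupport.of_support_subset_isCompact (isCompact_closedBall 0 ρ) (by
    intro x hx
    by_contra h'
    exact hx (h x (by simpa using (lt_of_not_ge (by simpa using h')).le)))

lemma Nk_hcs {δ r : ℝ} (hδ : 0 < δ) (hr : δ ≤ r) : HasCompactSupport (Nk δ r) :=
  hcs_of_zero (ρ := 2 * r) fun _ h => Nk_zero hδ hr h

lemma pd_Nk (δ r : ℝ) (i : Fin 2) : pd i (Nk δ r) = fun x => pd i (Ls δ) x - pd i (Ls r) x :=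
  funext fun x => pd_sub (Ls_smooth δ).diff (Ls_smooth r).diff i x

lemma lap_sub {f g : E2 → ℝ} (hf : Sm f) (hg : Sm g) (x : E2) :
    lap (fun y => f y - g y) x = lap f x - lap g x := by
  unfold lap
  have h : ∀ i, pd i (fun y => f y - g y) = fun y => pd i f y - pd i g y :=
    fun i => funext fun y => pd_sub hf.diff hg.diff i y
  rw [h, h, pd_sub (hf.pd 0).diff (hg.pd 0).diff, pd_sub (hf.pd 1).diff (hg.pd 1).diff]
  ring

lemma lap_Nk (δ r : ℝ) (x : E2) : lap (Nk δ r) x = lap (Ls δ) x - lap (Ls r) x :=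
  lap_sub (Ls_smooth δ) (Ls_smooth r) x

/-! ### Integral bounds for the kernels -/

lemma finrank_E2 : Module.finrank ℝ E2 = 2 := by simp

lemma integral_scale (f : E2 → ℝ) {s : ℝ} (hs : 0 < s) :
    ∫ x, f (s⁻¹ • x) = s ^ 2 * ∫ x, f x := by
  rw [Measure.integral_comp_smul, finrank_E2, abs_of_pos (by positivity), smul_eq_mul]
  field_simp

lemma integral_scale' (f : E2 → ℝ) (c : ℝ) {s : ℝ} (hs : 0 < s) :
    ∫ x, c * f (s⁻¹ • x) = c * (s ^ 2 * ∫ x, f x) := by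
  rw [integral_const_mul, integral_scale f hs]

lemma lap_Ls_hcs {s : ℝ} (hs : 0 < s) : HasCompactSupport (lap (Ls s)) := by
  refine hcs_of_zero (ρ := 2 * s) fun x hx => ?_
  rw [lap_Ls, lap_Lk_zero, mul_zero]
  rw [norm_smul, Real.norm_of_nonneg (by positivity), inv_mul_eq_div, le_div_iff₀ hs]
  exact hx

lemma lap_Ls_L1 {s : ℝ} (hs : 0 < s) : ∫ x, |lap (Ls s) x| = ∫ x, |lap Lk x| := by
  have : (fun x => |lap (Ls s) x|) = fun x => s⁻¹ ^ 2 * (fun z => |lap Lk z|) (s⁻¹ • x) := by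
    funext x
    rw [lap_Ls, abs_mul, abs_of_pos (by positivity)]
  rw [this]
  refine (integral_scale' (fun z => |lap Lk z|) _ hs).trans ?_
  field_simp

lemma lap_Ls_L2 {s : ℝ} (hs : 0 < s) : ∫ x, lap (Ls s) x ^ 2 = s⁻¹ ^ 2 * ∫ x, lap Lk x ^ 2 := by
  have : (fun x => lap (Ls s) x ^ 2) = fun x => s⁻¹ ^ 4 * (fun z => lap Lk z ^ 2) (s⁻¹ • x) := by
    funext x
    rw [lap_Ls]
    ring
  rw [this]
  refine (integral_scale' (fun z => lap Lk z ^ 2) _ hs).trans ?_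
  field_simp

lemma lap_hcs {f : E2 → ℝ} (h : HasCompactSupport f) : HasCompactSupport (lap f) :=
  (hcs_pd (hcs_pd h 0) 0).add (hcs_pd (hcs_pd h 1) 1)

/-- `‖Δ(L_δ - L_r)‖_{L¹}` is bounded uniformly in `δ` and `r`, by scale invariance. -/
lemma lap_Nk_L1 {δ r : ℝ} (hδ : 0 < δ) (hr : δ ≤ r) :
    ∫ x, |lap (Nk δ r) x| ≤ 2 * ∫ x, |lap Lk x| := by
  have hr0 : 0 < r := by linarith
  have i1 : Integrable fun x => |lap (Ls δ) x| :=
    (int_cs (Ls_smooth δ).lap.cont (lap_Ls_hcs hδ)).abs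
  have i2 : Integrable fun x => |lap (Ls r) x| :=
    (int_cs (Ls_smooth r).lap.cont (lap_Ls_hcs hr0)).abs
  calc ∫ x, |lap (Nk δ r) x| ≤ ∫ x, (|lap (Ls δ) x| + |lap (Ls r) x|) := by
        apply integral_mono
        · exact (int_cs (Nk_smooth δ r).lap.cont (lap_hcs (Nk_hcs hδ hr))).abs
        · exact i1.add i2
        · intro x
          simp only
          rw [lap_Nk]
          exact abs_sub _ _
    _ = _ := by rw [integral_add i1 i2, lap_Ls_L1 hδ, lap_Ls_L1 hr0]; ring

/-- The locally integrable singularity `1/|x|`, cut off at radius `s`. -/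
def sing (s : ℝ) (x : E2) : ℝ := (Set.Iio s).indicator (fun y => y⁻¹) ‖x‖

lemma sing_nonneg (s : ℝ) (x : E2) : 0 ≤ sing s x :=
  Set.indicator_apply_nonneg fun _ => by positivity

lemma sing_one_int : Integrable (sing 1) := by
  unfold sing
  rw [integrable_fun_norm_addHaar (volume : Measure E2)]
  rw [finrank_E2]
  have : IntegrableOn (fun y : ℝ => (Set.Iio (1:ℝ)).indicator (fun _ => (1 : ℝ)) y) (Set.Ioi 0) := by
    rw [IntegrableOn, integrable_indicator_iff measurableSet_Iio, IntegrableOn,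
      Measure.restrict_restrict measurableSet_Iio]
    apply integrableOn_const
    · rw [Set.inter_comm, Set.Ioi_inter_Iio]; simp
    · simp
  refine this.congr_fun (fun y hy => ?_) measurableSet_Ioi
  have hy' : (y : ℝ) ≠ 0 := ne_of_gt hy
  by_cases h : y < 1
  · simp [Set.indicator, h, hy']
  · simp [Set.indicator, h]

lemma sing_scale {s : ℝ} (hs : 0 < s) : sing s = fun x => s⁻¹ * sing 1 (s⁻¹ • x) := by
  funext x
  unfold sing
  rw [norm_smul, Real.norm_of_nonneg (by positivity)]
  by_cases h : ‖x‖ < s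
  · have h' : s⁻¹ * ‖x‖ < 1 := by rw [inv_mul_lt_iff₀ hs]; linarith
    rw [Set.indicator_of_mem (by exact h), Set.indicator_of_mem (by exact h')]
    field_simp
  · have h' : ¬ s⁻¹ * ‖x‖ < 1 := by rw [inv_mul_lt_iff₀ hs]; linarith
    rw [Set.indicator_of_notMem (by exact h), Set.indicator_of_notMem (by exact h'), mul_zero]

lemma sing_int {s : ℝ} (hs : 0 < s) : Integrable (sing s) := by
  rw [sing_scale hs]
  exact (sing_one_int.comp_smul (by positivity : s⁻¹ ≠ 0)).const_mul _

lemma sing_integral {s : ℝ} (hs : 0 < s) : ∫ x, sing s x = s * ∫ x, sing 1 x := by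
  rw [sing_scale hs, integral_const_mul, integral_scale _ hs]
  field_simp

lemma pd_zero_of_zero {f : E2 → ℝ} {ρ : ℝ} (h : ∀ x, ρ ≤ ‖x‖ → f x = 0) (i : Fin 2) {x : E2}
    (hx : ρ < ‖x‖) : pd i f x = 0 := by
  have : f =ᶠ[nhds x] fun _ => 0 := by
    filter_upwards [continuous_norm.continuousAt.eventually (eventually_gt_nhds hx)] with y hy
    exact h y hy.le
  rw [pd_congr this, pd_const]

lemma pd_Ls_origin (s : ℝ) (i : Fin 2) : pd i (Ls s) 0 = 0 := by
  rw [pd_Ls, pd_Lk]; simp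

/-- `|∇(L_δ - L_r)(x)| ≲ 1/|x|` on the ball of radius `3r`, outside which it vanishes. -/
lemma Nk_grad : ∃ C, 0 < C ∧ ∀ δ r, 0 < δ → δ ≤ r → ∀ i x,
    |pd i (Nk δ r) x| ≤ C * sing (3 * r) x := by
  obtain ⟨C, hC, h⟩ := Ls_grad
  refine ⟨2 * C, by positivity, fun δ r hδ hr i x => ?_⟩
  have hr0 : 0 < r := by linarith
  by_cases hx : ‖x‖ < 3 * r
  · by_cases hx0 : x = 0
    · rw [hx0, pd_Nk]
      simp only
      rw [pd_Ls_origin, pd_Ls_origin]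
      simp only [sub_self, abs_zero]
      exact mul_nonneg (by positivity) (sing_nonneg _ _)
    · have hn : 0 < ‖x‖ := norm_pos_iff.2 hx0
      unfold sing
      rw [Set.indicator_of_mem (by exact hx), pd_Nk, ← div_eq_mul_inv, le_div_iff₀ hn]
      have h1 := h δ hδ i x
      have h2 := h r hr0 i x
      have h3 := abs_sub (pd i (Ls δ) x) (pd i (Ls r) x)
      nlinarith
  · push Not at hx
    rw [pd_zero_of_zero (ρ := 2 * r) (fun y hy => Nk_zero hδ hr hy) i (by linarith)]
    simpa using mul_nonneg (by positivity) (sing_nonneg _ _)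

/-- `‖∇(L_δ - L_r)‖_{L¹} ≲ r`, uniformly in `δ`. -/
lemma Nk_grad_L1 : ∃ C, 0 < C ∧ ∀ δ r, 0 < δ → δ ≤ r → ∀ i,
    ∫ x, |pd i (Nk δ r) x| ≤ C * r := by
  obtain ⟨C, hC, h⟩ := Nk_grad
  have hp : 0 ≤ ∫ x, sing 1 x := integral_nonneg fun x => sing_nonneg _ _
  refine ⟨C * (3 * ∫ x, sing 1 x) + 1, by positivity, fun δ r hδ hr i => ?_⟩
  have hr0 : 0 < r := by linarith
  calc ∫ x, |pd i (Nk δ r) x| ≤ ∫ x, C * sing (3 * r) x :=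
        integral_mono (int_cs ((Nk_smooth δ r).pd i).cont (hcs_pd (Nk_hcs hδ hr) i)).abs
          ((sing_int (by positivity)).const_mul C) (fun x => h δ r hδ hr i x)
    _ = (C * (3 * ∫ x, sing 1 x)) * r := by
        rw [integral_const_mul, sing_integral (by positivity)]; ring
    _ ≤ _ := by nlinarith

/-- `Δ L_δ` is an approximate identity, up to the nonzero factor `∫ Δ L`. -/
lemma lap_Ls_tendsto {v : E2 → ℝ} (hv : Continuous v) (x : E2) :
    Filter.Tendsto (fun δ => ∫ y, v y * lap (Ls δ) (x - y)) (nhdsWithin 0 (Set.Ioi 0))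
      (nhds (v x * ∫ z, lap Lk z)) := by
  have h1 : ∀ δ : ℝ, 0 < δ → ∫ y, v y * lap (Ls δ) (x - y)
      = ∫ z in closedBall (0 : E2) 2, v (x - δ • z) * lap Lk z := by
    intro δ hδ
    have e1 : ∫ y, v y * lap (Ls δ) (x - y) = ∫ z, v (x - z) * lap (Ls δ) z := by
      rw [← integral_sub_left_eq_self (fun z => v (x - z) * lap (Ls δ) z) volume x]
      simp
    have e2 : (fun z => v (x - z) * lap (Ls δ) z)
        = fun z => δ⁻¹ ^ 2 * (fun z => v (x - δ • z) * lap Lk z) (δ⁻¹ • z) := by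
      funext z
      simp only
      rw [lap_Ls, smul_smul, mul_inv_cancel₀ hδ.ne', one_smul]
      ring
    rw [e1, e2, setIntegral_eq_integral_of_forall_compl_eq_zero]
    refine (integral_scale' (fun z => v (x - δ • z) * lap Lk z) _ hδ).trans ?_
    · field_simp
    · intro z hz
      rw [lap_Lk_zero, mul_zero]
      simp at hz; exact hz.le
  have h2 : Continuous fun δ : ℝ => ∫ z in closedBall (0 : E2) 2, v (x - δ • z) * lap Lk z := by
    apply continuous_parametric_integral_of_continuous _ (isCompact_closedBall 0 2)
    have := Lk_smooth.lap.cont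
    simp only [Function.uncurry_def]
    fun_prop
  have h3 := (h2.tendsto 0).mono_left (nhdsWithin_le_nhds (s := Set.Ioi 0))
  have h4 : ∫ z in closedBall (0 : E2) 2, v (x - (0:ℝ) • z) * lap Lk z = v x * ∫ z, lap Lk z := by
    simp only [zero_smul, sub_zero]
    rw [integral_const_mul, setIntegral_eq_integral_of_forall_compl_eq_zero]
    intro z hz
    apply lap_Lk_zero
    simp at hz; exact hz.le
  rw [h4] at h3
  refine h3.congr' ?_
  filter_upwards [self_mem_nhdsWithin] with δ hδ
  exact (h1 δ hδ).symm

/-! ### Convolutions -/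

/-- Convolution of scalar functions on the plane. -/
def cv (h K : E2 → ℝ) (x : E2) : ℝ := ∫ y, h y * K (x - y)

lemma cv_eq (h K : E2 → ℝ) : cv h K = convolution h K (ContinuousLinearMap.mul ℝ ℝ) volume := by
  funext x; simp [cv, convolution]

lemma cv_smooth {h K : E2 → ℝ} (hh : Continuous h) (hK : Sm K) (hc : HasCompactSupport K) :
    Sm (cv h K) := by
  rw [cv_eq]
  exact hc.contDiff_convolution_right _ hh.locallyIntegrable hK

lemma pd_cv {h K : E2 → ℝ} (hh : Continuous h) (hK : Sm K) (hc : HasCompactSupport K)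
    (i : Fin 2) : pd i (cv h K) = cv h (pd i K) := by
  funext x
  rw [cv_eq, cv_eq]
  have h1 : ContDiff ℝ 1 K := ContDiff.of_le hK (by simp)
  have := (hc.hasFDerivAt_convolution_right (ContinuousLinearMap.mul ℝ ℝ) (μ := volume)
    hh.locallyIntegrable h1 x).fderiv
  unfold pd
  rw [this, convolution_precompR_apply _ hh.locallyIntegrable (hc.fderiv (𝕜 := ℝ))
    (h1.continuous_fderiv (by simp))]

lemma lap_cv {h K : E2 → ℝ} (hh : Continuous h) (hK : Sm K) (hc : HasCompactSupport K) :
    lap (cv h K) = cv h (lap K) := by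
  funext x
  have i1 : Integrable fun y => h y * pd 0 (pd 0 K) (x - y) :=
    int_cs (hh.mul ((((hK.pd 0).pd 0).comp_sub x).cont))
      ((hcs_comp_sub (hcs_pd (hcs_pd hc 0) 0) x).mul_left)
  have i2 : Integrable fun y => h y * pd 1 (pd 1 K) (x - y) :=
    int_cs (hh.mul ((((hK.pd 1).pd 1).comp_sub x).cont))
      ((hcs_comp_sub (hcs_pd (hcs_pd hc 1) 1) x).mul_left)
  unfold lap
  rw [pd_cv hh hK hc, pd_cv hh hK hc, pd_cv hh (hK.pd 0) (hcs_pd hc 0),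
    pd_cv hh (hK.pd 1) (hcs_pd hc 1)]
  unfold cv
  rw [← integral_add i1 i2]
  congr 1; funext y; ring

lemma cv_zero {h K : E2 → ℝ} {a b : ℝ} (hh : ∀ x, a ≤ ‖x‖ → h x = 0)
    (hK : ∀ x, b ≤ ‖x‖ → K x = 0) {x : E2} (hx : a + b ≤ ‖x‖) : cv h K x = 0 := by
  unfold cv
  rw [show (fun y => h y * K (x - y)) = fun _ => 0 from ?_, integral_zero]
  funext y
  by_cases h1 : a ≤ ‖y‖
  · rw [hh y h1, zero_mul]
  · have : b ≤ ‖x - y‖ := by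
      have := norm_sub_norm_le x y
      linarith
    rw [hK _ this, mul_zero]

lemma hcs_zero {f : E2 → ℝ} (h : HasCompactSupport f) : ∃ ρ, ∀ x, ρ ≤ ‖x‖ → f x = 0 := by
  obtain ⟨ρ, hρ⟩ := (isBounded_iff_subset_ball (0 : E2)).1 h.isCompact.isBounded
  refine ⟨ρ, fun x hx => ?_⟩
  by_contra h'
  have := hρ (subset_tsupport f h')
  simp at this
  linarith

lemma hcs_prod {h K g : E2 → ℝ} (hh : HasCompactSupport h) (hK : HasCompactSupport K) :
    HasCompactSupport (Function.uncurry fun x y => h x * (g y * K (x - y))) := by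
  obtain ⟨a, ha⟩ := hcs_zero hh
  obtain ⟨b, hb⟩ := hcs_zero hK
  refine HasCompactSupport.of_support_subset_isCompact
    ((isCompact_closedBall (0 : E2) a).prod (isCompact_closedBall (0 : E2) (a + b))) ?_
  rintro ⟨x, y⟩ hxy
  simp only [Function.mem_support, Function.uncurry_apply_pair] at hxy
  have h1 : ‖x‖ < a := by
    by_contra h'
    exact hxy (by rw [ha x (by linarith), zero_mul])
  have h2 : ‖x - y‖ < b := by
    by_contra h'
    exact hxy (by rw [hb (x - y) (by linarith), mul_zero, mul_zero])
  have h3 : ‖y‖ ≤ ‖x‖ + ‖x - y‖ := by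
    have := norm_sub_le x (x - y); simpa using this
  simp
  exact ⟨h1.le, by linarith⟩

/-- Self-adjointness of convolution with an even kernel. -/
lemma cv_swap {h K g : E2 → ℝ} (hh : Continuous h) (hK : Continuous K) (hg : Continuous g)
    (ch : HasCompactSupport h) (cK : HasCompactSupport K) (hev : ∀ x, K (-x) = K x) :
    ∫ x, h x * cv g K x = ∫ y, g y * cv h K y := by
  unfold cv
  simp_rw [← integral_const_mul]
  rw [integral_integral_swap_of_hasCompactSupport (f := fun x y => h x * (g y * K (x - y)))
    (by simp only [Function.uncurry_def]; fun_prop) (hcs_prod ch cK)]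
  congr 1; funext y; congr 1; funext x
  rw [← hev (x - y), neg_sub]
  ring

/-- Young's inequality `‖h * K‖_{L²} ≤ ‖K‖_{L¹} ‖h‖_{L²}`, squared. -/
lemma young_sq {h K : E2 → ℝ} (hh : Continuous h) (hK : Continuous K)
    (ch : HasCompactSupport h) (cK : HasCompactSupport K) :
    ∫ x, cv h K x ^ 2 ≤ (∫ x, |K x|) ^ 2 * ∫ x, h x ^ 2 := by
  set A := ∫ x, |K x| with hA
  have hA0 : 0 ≤ A := integral_nonneg fun x => abs_nonneg _
  have hKa : ∀ x, ∫ y, |K (x - y)| = A := fun x => integral_sub_left_eq_self (fun z => |K z|) volume x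
  have cK' : HasCompactSupport fun x => |K x| := cK.comp_left (g := fun t : ℝ => |t|) abs_zero
  have ch2 : HasCompactSupport fun x => h x ^ 2 :=
    ch.comp_left (g := fun t : ℝ => t ^ 2) (by simp)
  have hh2 : Continuous fun x => h x ^ 2 := by fun_prop
  have hK2 : Continuous fun x => |K x| := by fun_prop
  have hpt : ∀ x, cv h K x ^ 2 ≤ A * cv (fun y => h y ^ 2) (fun z => |K z|) x := by
    intro x
    have cKx : HasCompactSupport fun y => |K (x - y)| := hcs_comp_sub cK' x
    have h1 : Continuous fun y => |K (x - y)| := by fun_prop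
    have i1 : Integrable fun y => |K (x - y)| := int_cs h1 cKx
    have i2 : Integrable fun y => h y ^ 2 * |K (x - y)| := int_cs (hh2.mul h1) cKx.mul_left
    have i3 : Integrable fun y => |h y| * |K (x - y)| := int_cs (hh.abs.mul h1) cKx.mul_left
    have e1 : ∀ y, (|h y| * √|K (x - y)|) ^ 2 = h y ^ 2 * |K (x - y)| := by
      intro y; rw [mul_pow, sq_abs, Real.sq_sqrt (abs_nonneg _)]
    have e2 : ∀ y, √|K (x - y)| ^ 2 = |K (x - y)| := fun y => Real.sq_sqrt (abs_nonneg _)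
    have e3 : ∀ y, (|h y| * √|K (x - y)|) * √|K (x - y)| = |h y| * |K (x - y)| := by
      intro y; rw [mul_assoc, Real.mul_self_sqrt (abs_nonneg _)]
    have cs := cs_sq (μ := volume) (f := fun y => |h y| * √|K (x - y)|) (g := fun y => √|K (x - y)|)
      (by simp_rw [e1]; exact i2) (by simp_rw [e2]; exact i1) (by simp_rw [e3]; exact i3)
    simp_rw [e1, e2, e3, hKa] at cs
    have h4 : |cv h K x| ≤ ∫ y, |h y| * |K (x - y)| := by
      unfold cv
      refine (abs_integral_le_integral_abs).trans (le_of_eq ?_)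
      congr 1; funext y; rw [abs_mul]
    calc cv h K x ^ 2 = |cv h K x| ^ 2 := (sq_abs _).symm
      _ ≤ (∫ y, |h y| * |K (x - y)|) ^ 2 := by gcongr
      _ ≤ _ := cs
      _ = _ := by unfold cv; ring
  obtain ⟨a, ha⟩ := hcs_zero ch
  obtain ⟨b, hb⟩ := hcs_zero cK
  have cc : Continuous (cv h K) := by
    rw [cv_eq]; exact cK.continuous_convolution_right _ hh.locallyIntegrable hK
  have cc2 : Continuous (cv (fun y => h y ^ 2) (fun z => |K z|)) := by
    rw [cv_eq]; exact cK'.continuous_convolution_right _ hh2.locallyIntegrable hK2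
  have s1 : HasCompactSupport fun x => cv h K x ^ 2 := by
    refine hcs_of_zero (ρ := a + b) fun x hx => ?_
    rw [cv_zero ha hb hx]; simp
  have s2 : HasCompactSupport (cv (fun y => h y ^ 2) (fun z => |K z|)) := by
    refine hcs_of_zero (ρ := a + b) fun x hx => ?_
    exact cv_zero (fun y hy => by simp [ha y hy]) (fun y hy => by simp [hb y hy]) hx
  have hI : ∫ x, cv (fun y => h y ^ 2) (fun z => |K z|) x = A * ∫ x, h x ^ 2 := by
    unfold cv
    rw [integral_integral_swap_of_hasCompactSupport (f := fun x y => h y ^ 2 * |K (x - y)|)]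
    · simp_rw [integral_const_mul]
      have : ∀ y, ∫ x, |K (x - y)| = A := fun y => integral_sub_right_eq_self (fun z => |K z|) y
      simp_rw [this]
      rw [integral_mul_const]; ring
    · simp only [Function.uncurry_def]; fun_prop
    · refine HasCompactSupport.of_support_subset_isCompact
        ((isCompact_closedBall (0 : E2) (a + b)).prod (isCompact_closedBall (0 : E2) a)) ?_
      rintro ⟨x, y⟩ hxy
      simp only [Function.mem_support, Function.uncurry_apply_pair] at hxy
      have h1 : ‖y‖ < a := by
        by_contra h'
        exact hxy (by rw [ha y (by linarith)]; simp)
      have h2 : ‖x - y‖ < b := by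
        by_contra h'
        exact hxy (by rw [hb (x - y) (by linarith)]; simp)
      have h3 : ‖x‖ ≤ ‖y‖ + ‖x - y‖ := by
        have := norm_add_le y (x - y); simpa using this
      simp
      exact ⟨by linarith, h1.le⟩
  calc ∫ x, cv h K x ^ 2 ≤ ∫ x, A * cv (fun y => h y ^ 2) (fun z => |K z|) x :=
        integral_mono (int_cs (by fun_prop) s1) ((int_cs cc2 s2).const_mul A) hpt
    _ = _ := by rw [integral_const_mul, hI]; ring

/-- For compactly supported functions the full Hessian is controlled in `L²` by the Laplacian. -/
lemma hess_sq {Φ : E2 → ℝ} (hΦ : Sm Φ) (hc : HasCompactSupport Φ) (j k : Fin 2) :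
    ∫ x, pd j (pd k Φ) x ^ 2 ≤ ∫ x, lap Φ x ^ 2 := by
  have sm : ∀ a b, Sm (pd a (pd b Φ)) := fun a b => (hΦ.pd b).pd a
  have cs : ∀ a b, HasCompactSupport (pd a (pd b Φ)) := fun a b => hcs_pd (hcs_pd hc b) a
  have i1 : ∀ a b a' b', Integrable fun x => pd a (pd b Φ) x * pd a' (pd b' Φ) x :=
    fun a b a' b' => int_cs ((sm a b).cont.mul (sm a' b').cont) (cs a b).mul_right
  have i2 : ∀ a b, Integrable fun x => pd a (pd b Φ) x ^ 2 := fun a b => by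
    simp_rw [sq]; exact i1 a b a b
  have key : ∫ x, pd 0 (pd 1 Φ) x ^ 2 = ∫ x, pd 0 (pd 0 Φ) x * pd 1 (pd 1 Φ) x := by
    have e1 := ibp (sm 0 1) (hΦ.pd 1) (cs 0 1) 0
    have e2 := ibp (sm 0 0) (hΦ.pd 1) (cs 0 0) 1
    have e3 : pd 0 (pd 0 (pd 1 Φ)) = pd 1 (pd 0 (pd 0 Φ)) := by
      rw [pd_comm hΦ 0 1, pd_comm (hΦ.pd 0) 0 1]
    simp_rw [sq]
    rw [e1, e2, e3]
  have tot : ∫ x, lap Φ x ^ 2 = (∫ x, pd 0 (pd 0 Φ) x ^ 2) + (∫ x, pd 1 (pd 1 Φ) x ^ 2)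
      + 2 * ∫ x, pd 0 (pd 1 Φ) x ^ 2 := by
    have i3 : Integrable fun x => pd 0 (pd 0 Φ) x ^ 2 + pd 1 (pd 1 Φ) x ^ 2 := (i2 0 0).add (i2 1 1)
    have i4 : Integrable fun x => 2 * (pd 0 (pd 0 Φ) x * pd 1 (pd 1 Φ) x) := (i1 0 0 1 1).const_mul 2
    rw [key, ← integral_const_mul, ← integral_add (i2 0 0) (i2 1 1), ← integral_add i3 i4]
    congr 1; funext x; unfold lap; ring
  have n : ∀ a b, 0 ≤ ∫ x, pd a (pd b Φ) x ^ 2 := fun a b => integral_nonneg fun x => sq_nonneg _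
  have n1 := n 0 0
  have n2 := n 1 1
  have n3 := n 0 1
  fin_cases j <;> fin_cases k <;> simp only [Fin.zero_eta, Fin.mk_one, Fin.isValue]
  · linarith
  · linarith
  · rw [pd_comm hΦ 1 0]; linarith
  · linarith

/-! ### Divergence-free fields: the quadratic source and the vorticity bound -/

/-- The quadratic pressure source `∑ ∂ⱼvₖ ∂ₖvⱼ`. -/
def gq (v : Fin 2 → E2 → ℝ) (y : E2) : ℝ := ∑ j, ∑ k, pd j (v k) y * pd k (v j) y

lemma gq_smooth {v : Fin 2 → E2 → ℝ} (hv : ∀ i, Sm (v i)) : Sm (gq v) :=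
  ContDiff.sum fun j _ => ContDiff.sum fun k _ => ((hv k).pd j).mul ((hv j).pd k)

lemma Sm.mul' {f g : E2 → ℝ} (hf : Sm f) (hg : Sm g) : Sm (fun y => f y * g y) :=
  ContDiff.mul hf hg

lemma pd_pd_mul {f g : E2 → ℝ} (hf : Sm f) (hg : Sm g) (j k : Fin 2) (x : E2) :
    pd j (pd k (fun y => f y * g y)) x = pd j (pd k f) x * g x + pd k f x * pd j g x
      + (pd j f x * pd k g x + f x * pd j (pd k g) x) := by
  have h1 : pd k (fun y => f y * g y) = fun y => pd k f y * g y + f y * pd k g y :=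
    funext fun y => pd_mul hf.diff hg.diff k y
  rw [h1, pd_add ((hf.pd k).mul' hg).diff (hf.mul' (hg.pd k)).diff,
    pd_mul (hf.pd k).diff hg.diff, pd_mul hf.diff (hg.pd k).diff]

/-- For a divergence-free field the quadratic source is `∑ ∂ⱼ∂ₖ(vⱼvₖ)`. -/
lemma gq_eq {v : Fin 2 → E2 → ℝ} (hv : ∀ i, Sm (v i))
    (hdiv : ∀ x, pd 0 (v 0) x + pd 1 (v 1) x = 0) (x : E2) :
    gq v x = ∑ j, ∑ k, pd j (pd k (fun y => v j y * v k y)) x := by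
  have hd : ∀ i, pd i (pd 0 (v 0)) x + pd i (pd 1 (v 1)) x = 0 := by
    intro i
    rw [← pd_add ((hv 0).pd 0).diff ((hv 1).pd 1).diff]
    rw [show (fun y => pd 0 (v 0) y + pd 1 (v 1) y) = fun _ => 0 from funext hdiv, pd_const]
  have h0 := hd 0
  have h1 := hd 1
  have h2 := hdiv x
  unfold gq
  simp only [Fin.sum_univ_two, pd_pd_mul (hv _) (hv _)]
  rw [pd_comm (hv 0) 1 0] at h1 ⊢
  rw [pd_comm (hv 1) 1 0]
  linear_combination (-2 * v 0 x) * h0 + (-2 * v 1 x) * h1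
    - (pd 0 (v 0) x + pd 1 (v 1) x) * h2

/-- Weak form of the pressure source: two integrations by parts put both derivatives on the test
function. -/
lemma gq_weak {v : Fin 2 → E2 → ℝ} (hv : ∀ i, Sm (v i))
    (hdiv : ∀ x, pd 0 (v 0) x + pd 1 (v 1) x = 0) {Φ : E2 → ℝ} (hΦ : Sm Φ)
    (hc : HasCompactSupport Φ) :
    ∫ y, Φ y * gq v y = ∑ j, ∑ k, ∫ y, pd j (pd k Φ) y * (v j y * v k y) := by
  have sm : ∀ j k, Sm fun y => v j y * v k y := fun j k => (hv j).mul' (hv k)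
  have h1 : ∀ j k, ∫ y, Φ y * pd j (pd k (fun y => v j y * v k y)) y
      = ∫ y, pd j (pd k Φ) y * (v j y * v k y) := by
    intro j k
    rw [ibp hΦ ((sm j k).pd k) hc, ibp (hΦ.pd j) (sm j k) (hcs_pd hc j), neg_neg, pd_comm hΦ]
  have hi : ∀ j k, Integrable fun y => Φ y * pd j (pd k (fun y => v j y * v k y)) y :=
    fun j k => int_cs (hΦ.cont.mul (((sm j k).pd k).pd j).cont) hc.mul_right
  simp_rw [gq_eq hv hdiv, Finset.mul_sum]
  rw [integral_finsetSum _ fun j _ => integrable_finsetSum _ fun k _ => hi j k]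
  congr 1; funext j
  rw [integral_finsetSum _ fun k _ => hi j k]
  congr 1; funext k
  exact h1 j k

/-- Two integrations by parts, with `∂ₚa = -∂_q b`, turn `∫ a ΔΦ` into the pairing of `∂_qΦ` with the
vorticity. -/
lemma vort_aux {a b : E2 → ℝ} {Φ : E2 → ℝ} (ha : Sm a) (hb : Sm b) (hΦ : Sm Φ)
    (hc : HasCompactSupport Φ) {W : ℝ} {p q : Fin 2} (hlap : lap Φ = fun x => pd p (pd p Φ) x + pd q (pd q Φ) x)
    (hdiv : ∀ x, pd p a x + pd q b x = 0) (hW : ∀ x, |pd p b x - pd q a x| ≤ W) :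
    |∫ x, a x * lap Φ x| ≤ W * ∫ x, |pd q Φ x| := by
  have c1 : ∀ {f g : E2 → ℝ}, Sm f → Sm g → HasCompactSupport g → Integrable fun x => f x * g x :=
    fun hf hg h => int_cs (hf.cont.mul hg.cont) h.mul_left
  have cpd := fun i => hcs_pd hc i
  have ib : ∀ (f : E2 → ℝ) (i j : Fin 2), Sm f →
      ∫ x, f x * pd i (pd j Φ) x = - ∫ x, pd i f x * pd j Φ x := by
    intro f i j hf
    have := ibp (hΦ.pd j) hf (cpd j) i
    have e1 : ∫ x, pd i f x * pd j Φ x = ∫ x, pd j Φ x * pd i f x := by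
      congr 1; funext x; ring
    have e2 : ∫ x, f x * pd i (pd j Φ) x = ∫ x, pd i (pd j Φ) x * f x := by
      congr 1; funext x; ring
    rw [e1, e2, this, neg_neg]
  have s1 : ∫ x, a x * lap Φ x = - (∫ x, pd p a x * pd p Φ x) - ∫ x, pd q a x * pd q Φ x := by
    rw [hlap]
    simp_rw [mul_add]
    rw [integral_add (c1 ha ((hΦ.pd p).pd p) (hcs_pd (cpd p) p))
      (c1 ha ((hΦ.pd q).pd q) (hcs_pd (cpd q) q)), ib a p p ha, ib a q q ha]
    ring
  -- the cross terms cancel because second derivatives of the test function commute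
  have s2 : ∫ x, pd q b x * pd p Φ x = ∫ x, pd p b x * pd q Φ x := by
    have h1 := ib b q p hb
    have h2 := ib b p q hb
    rw [pd_comm hΦ q p] at h1
    linarith
  have s3 : ∫ x, pd p a x * pd p Φ x = - ∫ x, pd q b x * pd p Φ x := by
    rw [← integral_neg]
    congr 1; funext x
    have := hdiv x
    linear_combination (pd p Φ x) * this
  have s4 : ∫ x, a x * lap Φ x = ∫ x, (pd p b x - pd q a x) * pd q Φ x := by
    simp_rw [sub_mul]
    rw [integral_sub (c1 (hb.pd p) (hΦ.pd q) (cpd q)) (c1 (ha.pd q) (hΦ.pd q) (cpd q)), s1, s3, s2]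
    ring
  rw [s4, ← integral_const_mul]
  refine abs_integral_le_integral_abs.trans (integral_mono ?_ ?_ ?_)
  · have : Sm fun x => pd p b x - pd q a x := (hb.pd p).sub (ha.pd q)
    exact (c1 this (hΦ.pd q) (cpd q)).abs
  · exact (int_cs (hΦ.pd q).cont (cpd q)).abs.const_mul W
  · intro x
    simp only
    rw [abs_mul]
    exact mul_le_mul_of_nonneg_right (hW x) (abs_nonneg _)

/-- A divergence-free field tested against a Laplacian is controlled by its vorticity. -/
lemma vort_bound {v : Fin 2 → E2 → ℝ} (hv : ∀ i, Sm (v i))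
    (hdiv : ∀ x, pd 0 (v 0) x + pd 1 (v 1) x = 0) {W : ℝ}
    (hW : ∀ x, |pd 0 (v 1) x - pd 1 (v 0) x| ≤ W) {Φ : E2 → ℝ} (hΦ : Sm Φ)
    (hc : HasCompactSupport Φ) {A : ℝ} (hA : ∀ i, ∫ x, |pd i Φ x| ≤ A) (i : Fin 2) :
    |∫ x, v i x * lap Φ x| ≤ W * A := by
  have hW0 : 0 ≤ W := (abs_nonneg _).trans (hW 0)
  fin_cases i
  · exact (vort_aux (hv 0) (hv 1) hΦ hc (p := 0) (q := 1) rfl hdiv hW).trans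
      (mul_le_mul_of_nonneg_left (hA 1) hW0)
  · exact (vort_aux (hv 1) (hv 0) hΦ hc (p := 1) (q := 0) (by funext x; unfold lap; ring)
      (fun x => by rw [add_comm]; exact hdiv x)
      (fun x => by rw [abs_sub_comm]; exact hW x)).trans
      (mul_le_mul_of_nonneg_left (hA 0) hW0)

lemma pd_pd_comp_sub {K : E2 → ℝ} (hK : Sm K) (x : E2) (i j : Fin 2) (y : E2) :
    pd i (pd j (fun y => K (x - y))) y = pd i (pd j K) (x - y) := by
  have h1 : pd j (fun y => K (x - y)) = fun y => (-1) * pd j K (x - y) := by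
    funext y; rw [pd_comp_sub hK.diff]; ring
  rw [h1, pd_const_mul ((hK.pd j).comp_sub x).diff, pd_comp_sub (hK.pd j).diff]
  ring

lemma lap_comp_sub {K : E2 → ℝ} (hK : Sm K) (x : E2) (y : E2) :
    lap (fun y => K (x - y)) y = lap K (x - y) := by
  unfold lap
  rw [pd_pd_comp_sub hK, pd_pd_comp_sub hK]

lemma int_ball {f : E2 → ℝ} (hf : Continuous f) (x : E2) (ρ : ℝ) : IntegrableOn f (ball x ρ) :=
  (hf.continuousOn.integrableOn_compact (isCompact_closedBall x ρ)).mono_set ball_subset_closedBall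

/-- Local interpolation: the size of a divergence-free field at a point is bounded by its local
`L²` norm at scale `ρ` and its vorticity. -/
lemma sup_bound : ∃ C, 0 < C ∧ ∀ (v : Fin 2 → E2 → ℝ), (∀ i, Sm (v i)) →
    (∀ x, pd 0 (v 0) x + pd 1 (v 1) x = 0) → ∀ W : ℝ,
    (∀ x, |pd 0 (v 1) x - pd 1 (v 0) x| ≤ W) → ∀ (x : E2) (ρ B : ℝ), 0 < ρ → 0 ≤ B →
    ∀ i, (∫ y in ball x (3 * ρ), v i y ^ 2) ≤ B ^ 2 → |v i x| ≤ C * (ρ⁻¹ * B + ρ * W) := by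
  obtain ⟨C1, hC1, hgrad⟩ := Nk_grad_L1
  set c := ∫ z, lap Lk z with hc
  have hcp : 0 < c := integral_lap_Lk_pos
  set D := √(∫ z, lap Lk z ^ 2) with hD
  have hDsq : D ^ 2 = ∫ z, lap Lk z ^ 2 := Real.sq_sqrt (integral_nonneg fun x => sq_nonneg _)
  have hD0 : 0 ≤ D := Real.sqrt_nonneg _
  refine ⟨c⁻¹ * (D + C1), by positivity, ?_⟩
  intro v hv hdiv W hW x ρ B hρ hB i hint
  have hW0 : 0 ≤ W := (abs_nonneg _).trans (hW 0)
  have main : ∀ δ, 0 < δ → δ ≤ ρ → |∫ y, v i y * lap (Ls δ) (x - y)| ≤ ρ⁻¹ * D * B + W * (C1 * ρ) := by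
    intro δ hδ hδρ
    have ii : ∀ s, 0 < s → Integrable fun y => v i y * lap (Ls s) (x - y) := fun s hs =>
      int_cs ((hv i).cont.mul (Sm.comp_sub (Ls_smooth s).lap x).cont)
        (hcs_comp_sub (lap_Ls_hcs hs) x).mul_left
    have e1 : ∫ y, v i y * lap (Ls δ) (x - y) = (∫ y, v i y * lap (Nk δ ρ) (x - y))
        + ∫ y, v i y * lap (Ls ρ) (x - y) := by
      rw [← integral_add _ (ii ρ hρ)]
      · congr 1; funext y; rw [lap_Nk]; ring
      · have := (ii δ hδ).sub (ii ρ hρ)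
        refine this.congr (Filter.Eventually.of_forall fun y => ?_)
        simp [lap_Nk]; ring
    -- between the scales `δ` and `ρ` the vorticity controls the field
    have b1 : |∫ y, v i y * lap (Nk δ ρ) (x - y)| ≤ W * (C1 * ρ) := by
      have := vort_bound hv hdiv hW ((Nk_smooth δ ρ).comp_sub x) (hcs_comp_sub (Nk_hcs hδ hδρ) x)
        (A := C1 * ρ) (fun j => by
          simp_rw [pd_comp_sub (Nk_smooth δ ρ).diff, abs_neg]
          rw [integral_sub_left_eq_self (fun z => |pd j (Nk δ ρ) z|) volume x]
          exact hgrad δ ρ hδ hδρ j) i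
      simpa only [lap_comp_sub (Nk_smooth δ ρ)] using this
    -- at scale `ρ`: Cauchy–Schwarz on the ball of radius `3ρ`
    have b2 : |∫ y, v i y * lap (Ls ρ) (x - y)| ≤ B * (ρ⁻¹ * D) := by
      have z : ∀ y, y ∉ ball x (3 * ρ) → lap (Ls ρ) (x - y) = 0 := by
        intro y hy
        rw [lap_Ls, lap_Lk_zero, mul_zero]
        rw [norm_smul, Real.norm_of_nonneg (by positivity), inv_mul_eq_div, le_div_iff₀ hρ]
        rw [mem_ball, dist_comm, dist_eq_norm, not_lt] at hy
        linarith
      have e2 : ∫ y, v i y * lap (Ls ρ) (x - y) = ∫ y in ball x (3 * ρ), v i y * lap (Ls ρ) (x - y) := by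
        rw [setIntegral_eq_integral_of_forall_compl_eq_zero]
        intro y hy; rw [z y hy, mul_zero]
      have cL : Continuous fun y => lap (Ls ρ) (x - y) := (Sm.comp_sub (Ls_smooth ρ).lap x).cont
      have e3 : ∫ y in ball x (3 * ρ), lap (Ls ρ) (x - y) ^ 2 = (ρ⁻¹ * D) ^ 2 := by
        rw [setIntegral_eq_integral_of_forall_compl_eq_zero fun y hy => by rw [z y hy]; simp]
        rw [integral_sub_left_eq_self (fun z => lap (Ls ρ) z ^ 2) volume x, lap_Ls_L2 hρ, mul_pow, hDsq]
      rw [e2]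
      have vc := (hv i).cont
      apply abs_le_of_cs hB (by positivity)
      have := cs_sq (μ := volume.restrict (ball x (3 * ρ))) (f := v i) (g := fun y => lap (Ls ρ) (x - y))
        (int_ball (by fun_prop) x _) (int_ball (by fun_prop) x _) (int_ball (by fun_prop) x _)
      rw [e3] at this
      exact this.trans (mul_le_mul_of_nonneg_right hint (by positivity))
    rw [e1]
    refine (abs_add_le _ _).trans ?_
    linarith
  -- `Δ L_δ` concentrates at the origin as `δ → 0`, which recovers the value of `v` at `x`
  have lim := (lap_Ls_tendsto (hv i).cont x).abs
  have hle : |v i x * c| ≤ ρ⁻¹ * D * B + W * (C1 * ρ) := by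
    refine le_of_tendsto lim ?_
    have : Set.Ioc 0 ρ ∈ nhdsWithin (0 : ℝ) (Set.Ioi 0) := Ioc_mem_nhdsGT hρ
    filter_upwards [this] with δ hδ using main δ hδ.1 hδ.2
  rw [abs_mul, abs_of_pos hcp] at hle
  have hx : |v i x| = c⁻¹ * (|v i x| * c) := by field_simp
  rw [hx, mul_assoc]
  refine mul_le_mul_of_nonneg_left (hle.trans ?_) (by positivity)
  have p1 : 0 ≤ ρ⁻¹ * B := by positivity
  have p2 : 0 ≤ ρ * W := by positivity
  nlinarith [mul_nonneg hC1.le p1, mul_nonneg hD0 p2]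

/-! ### Splitting the pressure kernel -/

/-- The normalising constant of the Newtonian potential: `E = ac * log|x|`. -/
def ac : ℝ := -(2 * Real.pi)⁻¹

lemma log_norm_eq (x : E2) : Real.log ‖x‖ = 1 / 2 * Real.log (‖x‖ ^ 2) := by
  rw [Real.log_pow]; push_cast; ring

lemma pd_log {x : E2} (hx : x ≠ 0) (i : Fin 2) :
    pd i (fun x : E2 => Real.log ‖x‖) x = (‖x‖ ^ 2)⁻¹ * x i := by
  have h : (fun x : E2 => Real.log ‖x‖) = fun x => (fun t => 1 / 2 * Real.log t) (‖x‖ ^ 2) := by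
    funext x; exact log_norm_eq x
  rw [h]
  have hx2 : ‖x‖ ^ 2 ≠ 0 := pow_ne_zero _ (norm_ne_zero_iff.2 hx)
  rw [pd_radial ((Real.hasDerivAt_log hx2).const_mul (1 / 2)) i]
  ring

lemma log_contDiffAt {x : E2} (hx : x ≠ 0) :
    ContDiffAt ℝ (⊤ : ℕ∞) (fun x : E2 => Real.log ‖x‖) x :=
  (contDiffAt_norm ℝ hx).log (norm_ne_zero_iff.2 hx)

lemma abs_coord_le (x : E2) (i : Fin 2) : |x i| ≤ ‖x‖ := by
  apply abs_le_of_sq_le_sq' _ (norm_nonneg _) |> abs_le.2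
  rw [normsq_eq]
  fin_cases i <;> simp <;> positivity

lemma pd_log_abs {x : E2} (hx : x ≠ 0) (i : Fin 2) :
    |pd i (fun x : E2 => Real.log ‖x‖) x| ≤ ‖x‖⁻¹ := by
  have h0 : 0 < ‖x‖ := norm_pos_iff.2 hx
  rw [pd_log hx, abs_mul, abs_of_pos (by positivity)]
  calc (‖x‖ ^ 2)⁻¹ * |x i| ≤ (‖x‖ ^ 2)⁻¹ * ‖x‖ := by gcongr; exact abs_coord_le x i
    _ = ‖x‖⁻¹ := by field_simp

/-- The far-field kernel is smooth on the whole plane. -/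
lemma oneThetaE_smooth {θ : E2 → ℝ} (hθ : IsCutoff θ) : Sm (oneThetaE θ) := by
  rw [Sm, contDiff_iff_contDiffAt]
  intro x
  rcases lt_or_ge ‖x‖ 1 with h | h
  · have : oneThetaE θ =ᶠ[nhds x] fun _ => 0 := by
      filter_upwards [continuous_norm.continuousAt.eventually_lt continuousAt_const h] with y hy
      simp [oneThetaE, hθ.2.2.1 y hy.le]
    exact contDiffAt_const.congr_of_eventuallyEq this
  · have hx : x ≠ 0 := by rintro rfl; simp at h; linarith
    exact (contDiffAt_const.sub hθ.1.contDiffAt).mul (contDiffAt_const.mul (log_contDiffAt hx))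

/-- Smooth compactly supported difference between the regularised logarithm at scale `r` and the
far-field kernel. -/
def Bk (θ : E2 → ℝ) (r : ℝ) (x : E2) : ℝ := ac * Ls r x - oneThetaE θ x

lemma Bk_smooth {θ : E2 → ℝ} (hθ : IsCutoff θ) (r : ℝ) : Sm (Bk θ r) :=
  (contDiff_const.mul (Ls_smooth r)).sub (oneThetaE_smooth hθ)

lemma Bk_hcs {θ : E2 → ℝ} (hθ : IsCutoff θ) {r : ℝ} (hr : 0 < r) : HasCompactSupport (Bk θ r) := by
  apply hcs_of_zero (ρ := max 2 (2 * r))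
  intro x hx
  rw [max_le_iff] at hx
  simp [Bk, Ls_eq hr hx.2, oneThetaE, hθ.2.2.2 x hx.1, fundE, ac]

/-- Error made by regularising the logarithm at scale `δ`. -/
def Ak (δ : ℝ) (x : E2) : ℝ := ac * (Real.log ‖x‖ - Ls δ x)

lemma Ak_diff {δ : ℝ} {x : E2} (hx : x ≠ 0) : DifferentiableAt ℝ (Ak δ) x :=
  (((log_contDiffAt hx).differentiableAt (by simp)).sub ((Ls_smooth δ).diff x)).const_mul _

/-- The gradient of the regularisation error is an integrable singularity supported at scale `δ`. -/
lemma Ak_grad : ∃ C, 0 < C ∧ ∀ δ, 0 < δ → ∀ i, ∀ x : E2, x ≠ 0 →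
    |pd i (Ak δ) x| ≤ C * sing (3 * δ) x := by
  obtain ⟨C, hC, h⟩ := Ls_grad
  have ha : 0 < |ac| := abs_pos.2 (neg_ne_zero.2 (inv_ne_zero (by positivity)))
  refine ⟨|ac| * (1 + C), by positivity, fun δ hδ i x hx => ?_⟩
  have hn : 0 < ‖x‖ := norm_pos_iff.2 hx
  rcases lt_or_ge ‖x‖ (3 * δ) with hl | hl
  · have e : pd i (Ak δ) x = ac * (pd i (fun x : E2 => Real.log ‖x‖) x - pd i (Ls δ) x) := by
      unfold pd
      have h1 : DifferentiableAt ℝ (fun x : E2 => Real.log ‖x‖) x :=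
        (log_contDiffAt hx).differentiableAt (by simp)
      have h2 := (Ls_smooth δ).diff x
      have : Ak δ = fun x => ac * ((fun x : E2 => Real.log ‖x‖) x - Ls δ x) := rfl
      have h3 := (h1.hasFDerivAt.fun_sub h2.hasFDerivAt).const_mul ac
      rw [this, h3.fderiv]
      simp
    rw [e, abs_mul, sing, Set.indicator_of_mem (by exact hl), mul_assoc]
    gcongr
    have h1 := pd_log_abs hx i
    have h2 : |pd i (Ls δ) x| ≤ C * ‖x‖⁻¹ := by
      rw [← div_eq_mul_inv, le_div_iff₀ hn]; exact h δ hδ i x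
    calc _ ≤ |pd i (fun x : E2 => Real.log ‖x‖) x| + |pd i (Ls δ) x| := abs_sub _ _
      _ ≤ _ := by linarith
  · have : pd i (Ak δ) x = 0 := by
      apply pd_zero_of_zero (ρ := 2 * δ) _ i (by linarith)
      intro y hy
      simp [Ak, Ls_eq hδ hy]
    rw [this, abs_zero]
    exact mul_nonneg (by positivity) (sing_nonneg _ _)

lemma thetaE_split (θ : E2 → ℝ) (δ r : ℝ) :
    thetaE θ = fun x => (Ak δ x + ac * Nk δ r x) + Bk θ r x := by
  funext x
  simp only [thetaE, Ak, Nk, Bk, oneThetaE, fundE, ac]; ring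

lemma pd_thetaE {θ : E2 → ℝ} (hθ : IsCutoff θ) (δ r : ℝ) (i : Fin 2) {x : E2} (hx : x ≠ 0) :
    pd i (thetaE θ) x = pd i (Ak δ) x + ac * pd i (Nk δ r) x + pd i (Bk θ r) x := by
  rw [thetaE_split θ δ r]
  unfold pd
  have h1 := Ak_diff (δ := δ) hx
  have h2 := (Nk_smooth δ r).diff x
  have h3 := (Bk_smooth hθ r).diff x
  rw [((h1.hasFDerivAt.fun_add (h2.hasFDerivAt.const_mul ac)).fun_add h3.hasFDerivAt).fderiv]
  simp

lemma pd3_Bk {θ : E2 → ℝ} (hθ : IsCutoff θ) (r : ℝ) (i j k : Fin 2) :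
    pd i (pd j (pd k (Bk θ r))) = fun x => ac * pd i (pd j (pd k (Ls r))) x -
      pd i (pd j (pd k (oneThetaE θ))) x := by
  have key : ∀ {f g : E2 → ℝ}, Sm f → Sm g → ∀ i,
      pd i (fun x => ac * f x - g x) = fun x => ac * pd i f x - pd i g x := by
    intro f g hf hg i; funext x
    rw [pd_sub (hf.diff.const_mul _) hg.diff, pd_const_mul hf.diff]
  have hL := Ls_smooth r
  have hF := oneThetaE_smooth hθ
  have : Bk θ r = fun x => ac * Ls r x - oneThetaE θ x := rfl
  rw [this, key hL hF, key (hL.pd k) (hF.pd k), key ((hL.pd k).pd j) ((hF.pd k).pd j)]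

lemma coord_comp_smooth {u : E2 → E2} (hu : ContDiff ℝ (⊤ : ℕ∞) u) (i : Fin 2) :
    Sm (fun y => u y i) := (coord_smooth i).comp hu

lemma pdv_eq {u : E2 → E2} (hu : ContDiff ℝ (⊤ : ℕ∞) u) (j i : Fin 2) (y : E2) :
    pdv j i u y = pd j (fun y => u y i) y := by
  have h := (hu.differentiable (by simp)) y
  have := ((EuclideanSpace.proj i : E2 →L[ℝ] ℝ).hasFDerivAt (x := u y)).comp y h.hasFDerivAt
  unfold pd pdv
  have e : fderiv ℝ (fun y => u y i) y = _ := this.fderiv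
  rw [e]; rfl

/-- Decomposition of the pressure force: a near-field convolution with the compactly supported
kernel `∂ᵢ(Nk δ r)`, a far-field part involving only third derivatives of the logarithm
regularised at scale `r`, and an error which is `O(δ)`. -/
lemma pressure_decomp : ∃ C, 0 < C ∧ ∀ θ, IsCutoff θ → ∀ u : E2 → E2, ContDiff ℝ (⊤ : ℕ∞) u →
    (∀ x, pd 0 (fun y => u y 0) x + pd 1 (fun y => u y 1) x = 0) →
    ∀ x, PressureIntegrable θ u x → ∀ δ r, 0 < δ → δ ≤ r → ∀ G,
    (∀ y, ‖x - y‖ ≤ 3 * δ → |gq (fun i y => u y i) y| ≤ G) → ∀ i,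
    |pressureForce θ u i x - ac * cv (gq (fun i y => u y i)) (pd i (Nk δ r)) x
      - ac * ∑ j, ∑ k, ∫ y, pd i (pd j (pd k (Ls r))) (x - y) * (u y j * u y k)| ≤ C * δ * G := by
  obtain ⟨C, hC, hA⟩ := Ak_grad
  have hs1 : 0 ≤ ∫ z, sing 1 z := integral_nonneg (sing_nonneg 1)
  refine ⟨3 * C * ((∫ z, sing 1 z) + 1), by positivity, ?_⟩
  intro θ hθ u hu hdiv x hP δ r hδ hr G hG i
  have hr0 : 0 < r := hδ.trans_le hr
  set v : Fin 2 → E2 → ℝ := fun i y => u y i with hv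
  have hvs : ∀ i, Sm (v i) := coord_comp_smooth hu
  set g := gq v with hg
  have hgs : Sm g := gq_smooth hvs
  have hgeq : ∀ y, ∑ j, ∑ k, pdv j k u y * pdv k j u y = g y := by
    intro y; simp only [pdv_eq hu]; rfl
  have hN := (Nk_smooth δ r).pd i
  have hNc := hcs_pd (Nk_hcs hδ hr) i
  have hB := (Bk_smooth hθ r).pd i
  have hBc := hcs_pd (Bk_hcs hθ hr0) i
  have iT : Integrable (fun y => pd i (thetaE θ) (x - y) * g y) := by
    have := hP.1 i; simp only [hgeq] at this; exact this
  have iN : Integrable (fun y => pd i (Nk δ r) (x - y) * g y) :=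
    int_cs ((hN.comp_sub x).cont.mul hgs.cont) ((hcs_comp_sub hNc x).mul_right)
  have iB : Integrable (fun y => pd i (Bk θ r) (x - y) * g y) :=
    int_cs ((hB.comp_sub x).cont.mul hgs.cont) ((hcs_comp_sub hBc x).mul_right)
  have hae : ∀ᵐ y : E2, y ≠ x := by
    rw [ae_iff]; simp
  have eA : (fun y => pd i (Ak δ) (x - y) * g y) =ᵐ[volume] fun y =>
      pd i (thetaE θ) (x - y) * g y - ac * (pd i (Nk δ r) (x - y) * g y)
        - pd i (Bk θ r) (x - y) * g y := by
    filter_upwards [hae] with y hy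
    rw [pd_thetaE hθ δ r i (sub_ne_zero.2 hy.symm)]; ring
  have hAint : ∫ y, pd i (Ak δ) (x - y) * g y = (∫ y, pd i (thetaE θ) (x - y) * g y)
      - ac * (∫ y, pd i (Nk δ r) (x - y) * g y) - ∫ y, pd i (Bk θ r) (x - y) * g y := by
    have i1 : Integrable fun y => pd i (thetaE θ) (x - y) * g y -
        ac * (pd i (Nk δ r) (x - y) * g y) := iT.sub (iN.const_mul _)
    rw [integral_congr_ae eA, integral_sub i1 iB, integral_sub iT (iN.const_mul _),
      integral_const_mul]
  have hAb : |∫ y, pd i (Ak δ) (x - y) * g y| ≤ 3 * C * ((∫ z, sing 1 z) + 1) * δ * G := by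
    have hG0 : 0 ≤ G := (abs_nonneg _).trans (hG x (by simp; positivity))
    have hb : ∀ᵐ y : E2, ‖pd i (Ak δ) (x - y) * g y‖ ≤ C * sing (3 * δ) (x - y) * G := by
      filter_upwards [hae] with y hy
      rw [norm_mul, Real.norm_eq_abs, Real.norm_eq_abs]
      have h1 := hA δ hδ i (x - y) (sub_ne_zero.2 hy.symm)
      rcases lt_or_ge ‖x - y‖ (3 * δ) with hl | hl
      · have := hG y hl.le
        have h0 := mul_nonneg hC.le (sing_nonneg (3 * δ) (x - y))
        gcongr
      · have hz : sing (3 * δ) (x - y) = 0 := Set.indicator_of_notMem (by simpa using hl) _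
        rw [hz] at h1 ⊢
        simp only [mul_zero, abs_nonpos_iff] at h1
        simp [h1]
    have := norm_integral_le_of_norm_le
      ((((sing_int (show 0 < 3 * δ by positivity)).comp_sub_left x).const_mul C).mul_const G) hb
    rw [integral_mul_const, integral_const_mul,
      integral_sub_left_eq_self (fun z => sing (3 * δ) z) volume x,
      sing_integral (by positivity), Real.norm_eq_abs] at this
    refine this.trans ?_
    have : C * (3 * δ * ∫ x, sing 1 x) * G = 3 * C * (∫ x, sing 1 x) * δ * G := by ring
    rw [this]
    gcongr
    linarith
  -- `Bk` is compactly supported, so both derivatives of the source may be moved onto it; the third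
  -- derivatives of the far-field kernel then cancel against the second part of the pressure force
  have hBint : ∫ y, pd i (Bk θ r) (x - y) * g y =
      ac * (∑ j, ∑ k, ∫ y, pd i (pd j (pd k (Ls r))) (x - y) * (u y j * u y k))
      - ∑ j, ∑ k, ∫ y, pd i (pd j (pd k (oneThetaE θ))) (x - y) * (u y j * u y k) := by
    rw [gq_weak hvs hdiv (hB.comp_sub x) (hcs_comp_sub hBc x)]
    rw [Finset.mul_sum, ← Finset.sum_sub_distrib]
    refine Finset.sum_congr rfl fun j _ => ?_
    rw [Finset.mul_sum, ← Finset.sum_sub_distrib]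
    refine Finset.sum_congr rfl fun k _ => ?_
    have e1 : ∀ y, pd j (pd k fun y => pd i (Bk θ r) (x - y)) y * (v j y * v k y) =
        pd i (pd j (pd k (Bk θ r))) (x - y) * (u y j * u y k) := by
      intro y
      rw [pd_pd_comp_sub hB, pd_comm (Bk_smooth hθ r) k i,
        pd_comm ((Bk_smooth hθ r).pd k) j i]
    have iF := hP.2 i j k
    have hB3 := (((Bk_smooth hθ r).pd k).pd j).pd i
    have iB3 : Integrable fun y => pd i (pd j (pd k (Bk θ r))) (x - y) * (u y j * u y k) :=
      int_cs ((hB3.comp_sub x).cont.mul ((hvs j).cont.mul (hvs k).cont))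
        ((hcs_comp_sub (hcs_pd (hcs_pd (hcs_pd (Bk_hcs hθ hr0) k) j) i) x).mul_right)
    rw [integral_congr_ae (Filter.Eventually.of_forall e1), ← integral_const_mul]
    rw [eq_sub_iff_add_eq, ← integral_add iB3 iF]
    congr 1; funext y
    rw [pd3_Bk hθ]; ring
  have hcv : cv g (pd i (Nk δ r)) x = ∫ y, pd i (Nk δ r) (x - y) * g y := by
    simp only [cv, mul_comm]
  have hfin : pressureForce θ u i x - ac * cv g (pd i (Nk δ r)) x
      - ac * ∑ j, ∑ k, ∫ y, pd i (pd j (pd k (Ls r))) (x - y) * (u y j * u y k)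
      = ∫ y, pd i (Ak δ) (x - y) * g y := by
    rw [hAint, hBint, hcv, pressureForce]
    simp only [hgeq]; ring
  rw [hfin]; exact hAb

/-! ### Far-field bound and cut-offs -/

/-- Every point lies in a dyadic ball of radius `ρ = 2ⁿ r` with `(r + |y|)⁻³ ≤ 8 ρ⁻³`. -/
lemma dyadic_pt {r : ℝ} (hr : 0 < r) (y : E2) :
    ∃ n : ℕ, ‖y‖ < 2 ^ n * r ∧ ((r + ‖y‖) ^ 3)⁻¹ ≤ 8 * ((2 ^ n * r) ^ 3)⁻¹ := by
  have hex : ∃ n : ℕ, ‖y‖ < 2 ^ n * r := by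
    obtain ⟨n, hn⟩ := pow_unbounded_of_one_lt (‖y‖ / r) (one_lt_two : (1 : ℝ) < 2)
    exact ⟨n, by rwa [div_lt_iff₀ hr] at hn⟩
  classical
  refine ⟨Nat.find hex, Nat.find_spec hex, ?_⟩
  have hle : 2 ^ Nat.find hex * r ≤ 2 * (r + ‖y‖) := by
    rcases Nat.eq_zero_or_pos (Nat.find hex) with h | h
    · rw [h]; nlinarith [norm_nonneg y]
    · have := Nat.find_min hex (Nat.sub_lt h one_pos)
      rw [not_lt] at this
      have e : (2 : ℝ) ^ Nat.find hex = 2 * 2 ^ (Nat.find hex - 1) := by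
        rw [← pow_succ', Nat.sub_add_cancel h]
      rw [e]; nlinarith
  have hn := norm_nonneg y
  have hp : 0 < 2 ^ Nat.find hex * r := by positivity
  have h3 : (2 ^ Nat.find hex * r) ^ 3 ≤ (2 * (r + ‖y‖)) ^ 3 := by gcongr
  rw [← div_eq_mul_inv, inv_eq_one_div, div_le_div_iff₀ (by positivity) (by positivity)]
  nlinarith

/-- Integrability and size of `w` against the far-field weight, by summing over dyadic balls. -/
lemma far_weight {α : ℝ} (hα : α < 1 / 2) {w : E2 → ℝ} (hw : Continuous w) (hw0 : ∀ y, 0 ≤ w y)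
    {M r : ℝ} (hr : 0 < r)
    (hM : ∀ ρ, r ≤ ρ → ∫ y in ball (0 : E2) ρ, w y ≤ M ^ 2 * ρ ^ (2 + 2 * α)) :
    ∫⁻ y, ENNReal.ofReal (((r + ‖y‖) ^ 3)⁻¹ * w y) ≤
      ENNReal.ofReal (8 / (1 - 2 ^ (2 * α - 1)) * (M ^ 2 * r ^ (2 * α - 1))) := by
  set q : ℝ := 2 ^ (2 * α - 1) with hq
  have hq0 : 0 < q := by positivity
  have hq1 : q < 1 := Real.rpow_lt_one_of_one_lt_of_neg one_lt_two (by linarith)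
  set F : ℕ → E2 → ℝ≥0∞ := fun n => (ball (0 : E2) (2 ^ n * r)).indicator
    fun y => ENNReal.ofReal (8 * ((2 ^ n * r) ^ 3)⁻¹ * w y) with hF
  have hFm : ∀ n, Measurable (F n) := fun n =>
    ((continuous_const.mul hw).measurable.ennreal_ofReal).indicator measurableSet_ball
  have hpt : ∀ y, ENNReal.ofReal (((r + ‖y‖) ^ 3)⁻¹ * w y) ≤ ∑' n, F n y := by
    intro y
    obtain ⟨n, h1, h2⟩ := dyadic_pt hr y
    refine le_trans ?_ (ENNReal.le_tsum n)
    rw [hF]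
    simp only
    rw [Set.indicator_of_mem (by simpa using h1)]
    exact ENNReal.ofReal_le_ofReal (mul_le_mul_of_nonneg_right h2 (hw0 y))
  have hFi : ∀ n, ∫⁻ y, F n y ≤ ENNReal.ofReal (8 * (M ^ 2 * r ^ (2 * α - 1)) * q ^ n) := by
    intro n
    have hp : 0 < 2 ^ n * r := by positivity
    rw [hF]
    simp only
    have ii : IntegrableOn (fun y => 8 * ((2 ^ n * r) ^ 3)⁻¹ * w y) (ball (0 : E2) (2 ^ n * r)) :=
      int_ball (continuous_const.mul hw) _ _
    have c0 : 0 ≤ 8 * ((2 ^ n * r) ^ 3)⁻¹ := by positivity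
    rw [lintegral_indicator measurableSet_ball, ← ofReal_integral_eq_lintegral_ofReal ii
      (Filter.Eventually.of_forall fun y => mul_nonneg c0 (hw0 y))]
    apply ENNReal.ofReal_le_ofReal
    rw [integral_const_mul]
    have h1 := hM (2 ^ n * r) (by
      have : (1 : ℝ) ≤ 2 ^ n := one_le_pow₀ one_le_two
      nlinarith)
    calc _ ≤ 8 * ((2 ^ n * r) ^ 3)⁻¹ * (M ^ 2 * (2 ^ n * r) ^ (2 + 2 * α)) := by gcongr
      _ = 8 * (M ^ 2 * (2 ^ n * r) ^ (2 * α - 1)) := by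
        have : (2 ^ n * r) ^ (2 + 2 * α) = (2 ^ n * r) ^ (2 * α - 1) * (2 ^ n * r) ^ 3 := by
          rw [← Real.rpow_natCast (2 ^ n * r) 3, ← Real.rpow_add hp]; congr 1; push_cast; ring
        rw [this]; field_simp
      _ = _ := by
        rw [Real.mul_rpow (by positivity) hr.le, ← Real.rpow_natCast 2 n,
          ← Real.rpow_mul (by norm_num), mul_comm (n : ℝ), Real.rpow_mul (by norm_num),
          Real.rpow_natCast]
        ring
  calc ∫⁻ y, ENNReal.ofReal (((r + ‖y‖) ^ 3)⁻¹ * w y) ≤ ∫⁻ y, ∑' n, F n y := lintegral_mono hpt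
    _ = ∑' n, ∫⁻ y, F n y := lintegral_tsum fun n => (hFm n).aemeasurable
    _ ≤ ∑' n, ENNReal.ofReal (8 * (M ^ 2 * r ^ (2 * α - 1)) * q ^ n) := ENNReal.tsum_le_tsum hFi
    _ = ENNReal.ofReal (∑' n, 8 * (M ^ 2 * r ^ (2 * α - 1)) * q ^ n) :=
      (ENNReal.ofReal_tsum_of_nonneg (fun n => by positivity)
        ((summable_geometric_of_lt_one hq0.le hq1).mul_left _)).symm
    _ = _ := by rw [tsum_mul_left, tsum_geometric_of_lt_one hq0.le hq1]; congr 1; ring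

/-- The third derivatives of `L_r` integrated against a density dominated by `w` are bounded on the
ball of radius `2r` by `M² r^(2α-1)`, when `w` has mass at most `M² ρ^(2+2α)` on each ball of radius `ρ ≥ r`. -/
lemma far_bound {α : ℝ} (hα : α < 1 / 2) : ∃ C, 0 < C ∧ ∀ w : E2 → ℝ, Continuous w →
    (∀ y, 0 ≤ w y) → ∀ M r, 0 < r →
    (∀ ρ, r ≤ ρ → ∫ y in ball (0 : E2) ρ, w y ≤ M ^ 2 * ρ ^ (2 + 2 * α)) →
    ∀ f : E2 → ℝ, (∀ y, |f y| ≤ w y) → ∀ x : E2, ‖x‖ ≤ 2 * r → ∀ i j k,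
    |∫ y, pd i (pd j (pd k (Ls r))) (x - y) * f y| ≤ C * (M ^ 2 * r ^ (2 * α - 1)) := by
  obtain ⟨C3, hC3, h3⟩ := Ls_third
  have hq1 : (2 : ℝ) ^ (2 * α - 1) < 1 :=
    Real.rpow_lt_one_of_one_lt_of_neg one_lt_two (by linarith)
  have hq : 0 < 1 - (2 : ℝ) ^ (2 * α - 1) := by linarith
  refine ⟨27 * C3 * (8 / (1 - 2 ^ (2 * α - 1))), by positivity, ?_⟩
  intro w hw hw0 M r hr hM f hf x hx i j k
  have hpt : ∀ y, ‖pd i (pd j (pd k (Ls r))) (x - y) * f y‖ ≤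
      27 * C3 * (((r + ‖y‖) ^ 3)⁻¹ * w y) := by
    intro y
    rw [norm_mul, Real.norm_eq_abs, Real.norm_eq_abs]
    have h1 := h3 r hr i j k (x - y)
    have hy : r + ‖y‖ ≤ 3 * (r + ‖x - y‖) := by
      have : ‖y‖ ≤ ‖x‖ + ‖x - y‖ := by
        calc ‖y‖ = ‖x - (x - y)‖ := by congr 1; abel
          _ ≤ _ := norm_sub_le _ _
      linarith [norm_nonneg (x - y)]
    have hp : 0 < r + ‖x - y‖ := by positivity
    have hp' : 0 < r + ‖y‖ := by positivity
    have h2 : (r + ‖y‖) ^ 3 ≤ 27 * (r + ‖x - y‖) ^ 3 := by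
      calc (r + ‖y‖) ^ 3 ≤ (3 * (r + ‖x - y‖)) ^ 3 := by gcongr
        _ = _ := by ring
    have h4 : |pd i (pd j (pd k (Ls r))) (x - y)| ≤ 27 * C3 * ((r + ‖y‖) ^ 3)⁻¹ := by
      rw [← div_eq_mul_inv, le_div_iff₀ (by positivity)]
      nlinarith [abs_nonneg (pd i (pd j (pd k (Ls r))) (x - y))]
    calc _ ≤ 27 * C3 * ((r + ‖y‖) ^ 3)⁻¹ * w y := by
          have := hf y; gcongr
      _ = _ := by ring
  have hM0 : 0 ≤ M ^ 2 * r ^ (2 * α - 1) := by positivity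
  have hbd : ∫⁻ y, ENNReal.ofReal ‖pd i (pd j (pd k (Ls r))) (x - y) * f y‖ ≤
      ENNReal.ofReal (27 * C3 * (8 / (1 - 2 ^ (2 * α - 1))) * (M ^ 2 * r ^ (2 * α - 1))) := by
    calc _ ≤ ∫⁻ y, ENNReal.ofReal (27 * C3) * ENNReal.ofReal (((r + ‖y‖) ^ 3)⁻¹ * w y) := by
          apply lintegral_mono; intro y
          simp only
          rw [← ENNReal.ofReal_mul (by positivity)]
          exact ENNReal.ofReal_le_ofReal (hpt y)
      _ = ENNReal.ofReal (27 * C3) * ∫⁻ y, ENNReal.ofReal (((r + ‖y‖) ^ 3)⁻¹ * w y) :=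
          lintegral_const_mul' _ _ ENNReal.ofReal_ne_top
      _ ≤ ENNReal.ofReal (27 * C3) *
          ENNReal.ofReal (8 / (1 - 2 ^ (2 * α - 1)) * (M ^ 2 * r ^ (2 * α - 1))) := by
          gcongr; exact far_weight hα hw hw0 hr hM
      _ = _ := by rw [← ENNReal.ofReal_mul (by positivity)]; congr 1; ring
  have := norm_integral_le_lintegral_norm (fun y => pd i (pd j (pd k (Ls r))) (x - y) * f y)
    (μ := volume)
  rw [Real.norm_eq_abs] at this
  exact this.trans (ENNReal.toReal_le_of_le_ofReal (by positivity) hbd)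

/-- A fixed smooth radial cut-off: `1` on the unit ball, `0` outside the ball of radius `2`. -/
def chi (x : E2) : ℝ := Real.smoothTransition (2 - ‖x‖ ^ 2)

/-- The cut-off `chi` rescaled to radius `r`. -/
def chir (r : ℝ) (x : E2) : ℝ := chi (r⁻¹ • x)

lemma chi_smooth : Sm chi :=
  Real.smoothTransition.contDiff.comp (contDiff_const.sub (contDiff_norm_sq ℝ))

lemma chir_smooth (r : ℝ) : Sm (chir r) := chi_smooth.comp (contDiff_const_smul _)

lemma chir_nonneg (r : ℝ) (x : E2) : 0 ≤ chir r x := Real.smoothTransition.nonneg _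
lemma chir_le_one (r : ℝ) (x : E2) : chir r x ≤ 1 := Real.smoothTransition.le_one _

lemma chi_zero {x : E2} (h : 2 ≤ ‖x‖) : chi x = 0 :=
  Real.smoothTransition.zero_of_nonpos (by nlinarith)

lemma chir_zero {r : ℝ} (hr : 0 < r) {x : E2} (h : 2 * r ≤ ‖x‖) : chir r x = 0 := by
  apply chi_zero
  rw [norm_smul, norm_inv, Real.norm_eq_abs, abs_of_pos hr, inv_mul_eq_div, le_div_iff₀ hr]
  exact h

lemma chir_one {r : ℝ} (hr : 0 < r) {x : E2} (h : ‖x‖ ≤ r) : chir r x = 1 := by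
  apply Real.smoothTransition.one_of_one_le
  have : ‖r⁻¹ • x‖ ≤ 1 := by
    rw [norm_smul, norm_inv, Real.norm_eq_abs, abs_of_pos hr, inv_mul_eq_div, div_le_one hr]
    exact h
  nlinarith [norm_nonneg (r⁻¹ • x)]

lemma chir_hcs {r : ℝ} (hr : 0 < r) : HasCompactSupport (chir r) :=
  hcs_of_zero fun _ h => chir_zero hr h

lemma chir_grad : ∃ C, 0 < C ∧ ∀ r, 0 < r → ∀ i x, |pd i (chir r) x| ≤ C * r⁻¹ := by
  have h : ∀ i, ∃ C, ∀ x, |pd i chi x| ≤ C := by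
    intro i
    obtain ⟨C, h0, hC⟩ := bound_ball (chi_smooth.pd i).cont 3
    refine ⟨C, fun x => ?_⟩
    rcases le_or_gt ‖x‖ 3 with h | h
    · exact hC x h
    · rw [pd_zero_of_zero (ρ := 2) (fun x hx => chi_zero hx) i (by linarith)]; simpa using h0
  choose C hC using h
  refine ⟨|C 0| + |C 1| + 1, by positivity, fun r hr i x => ?_⟩
  have e : pd i (chir r) x = r⁻¹ * pd i chi (r⁻¹ • x) := pd_scale chi_smooth.diff _ i x
  rw [e, abs_mul, abs_of_pos (inv_pos.2 hr), mul_comm]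
  gcongr
  refine (hC i _).trans ?_
  fin_cases i <;> simp <;> linarith [le_abs_self (C 0), le_abs_self (C 1), abs_nonneg (C 0), abs_nonneg (C 1)]

/-! ### Near-field bound -/

lemma setInt_of_zero {f : E2 → ℝ} {a b : ℝ} (hab : a < b) (h : ∀ x, a < ‖x‖ → f x = 0) :
    ∫ x in ball (0 : E2) b, f x = ∫ x, f x := by
  apply setIntegral_eq_integral_of_forall_compl_eq_zero
  intro x hx
  apply h
  simp at hx; linarith

/-- Near-field estimate: after integrating by parts, the pairing of the cut-off velocity with the
near-field pressure gradient only sees derivatives of the cut-off. -/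
lemma near_bound : ∃ C, 0 < C ∧ ∀ v : Fin 2 → E2 → ℝ, (∀ i, Sm (v i)) →
    (∀ x, pd 0 (v 0) x + pd 1 (v 1) x = 0) → ∀ δ r, 0 < δ → δ ≤ r → ∀ U I, 0 ≤ U → 0 ≤ I →
    (∀ x, ‖x‖ < 5 * r → ∀ i, |v i x| ≤ U) →
    (∫ x in ball (0 : E2) (5 * r), (v 0 x ^ 2 + v 1 x ^ 2)) ≤ I ^ 2 →
    |∑ i, ∫ x, chir r x * v i x * cv (gq v) (pd i (Nk δ r)) x| ≤ C * (U * I * (r⁻¹ * I)) := by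
  obtain ⟨c, hc, hgrad⟩ := chir_grad
  set L := ∫ x, |lap Lk x| with hL
  have hL0 : 0 ≤ L := integral_nonneg fun _ => abs_nonneg _
  refine ⟨16 * (L + 1) * c, by positivity, ?_⟩
  intro v hv hdiv δ r hδ hr U I hU hI hUb hIb
  have hr0 : 0 < r := hδ.trans_le hr
  set N := Nk δ r
  have hN : Sm N := Nk_smooth δ r
  have hNc : HasCompactSupport N := Nk_hcs hδ hr
  set g := gq v
  have hg : Sm g := gq_smooth hv
  -- `h = v · ∇χ` is the divergence of `χ v`, as `v` is divergence-free
  set h : E2 → ℝ := fun x => v 0 x * pd 0 (chir r) x + v 1 x * pd 1 (chir r) x with hh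
  have hχ := chir_smooth r
  have hχc := chir_hcs hr0
  have hs : Sm h := ((hv 0).mul' (hχ.pd 0)).add ((hv 1).mul' (hχ.pd 1))
  have pz : ∀ i, ∀ x : E2, 2 * r < ‖x‖ → pd i (chir r) x = 0 := fun i x hx =>
    pd_zero_of_zero (fun x hx => chir_zero hr0 hx) i hx
  have hz' : ∀ x : E2, 2 * r < ‖x‖ → h x = 0 := by
    intro x hx; simp [hh, pz _ x hx]
  have hz : ∀ x : E2, 5 / 2 * r ≤ ‖x‖ → h x = 0 := fun x hx => hz' x (by linarith)
  have hhc : HasCompactSupport h := hcs_of_zero hz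
  -- the kernel is even and is moved from the source onto `h`
  set Φ := cv h N with hΦdef
  have hΦz : ∀ x : E2, 9 / 2 * r ≤ ‖x‖ → Φ x = 0 := fun x hx =>
    cv_zero hz (fun x hx => Nk_zero hδ hr hx) (by linarith)
  have hΦc : HasCompactSupport Φ := hcs_of_zero hΦz
  have hΦ : Sm Φ := cv_smooth hs.cont hN hNc
  have hcvg : Sm (cv g N) := cv_smooth hg.cont hN hNc
  -- reduction to second derivatives of `Φ`
  have e1 : ∑ i, ∫ x, chir r x * v i x * cv g (pd i N) x = - ∫ x, h x * cv g N x := by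
    have hi : ∀ i, ∫ x, chir r x * v i x * cv g (pd i N) x =
        - ∫ x, pd i (fun x => chir r x * v i x) x * cv g N x := by
      intro i
      rw [← pd_cv hg.cont hN hNc i]
      exact ibp (hχ.mul' (hv i)) hcvg hχc.mul_right i
    have ii : ∀ i, Integrable fun x => pd i (fun x => chir r x * v i x) x * cv g N x := fun i =>
      int_cs (((hχ.mul' (hv i)).pd i).cont.mul hcvg.cont)
        ((hcs_pd (hχc.mul_right (f' := v i)) i).mul_right)
    rw [Fin.sum_univ_two, hi, hi, ← neg_add, ← integral_add (ii 0) (ii 1)]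
    congr 2; funext x
    rw [pd_mul hχ.diff (hv 0).diff, pd_mul hχ.diff (hv 1).diff]
    have := hdiv x
    have h2 : pd 1 (v 1) x = - pd 0 (v 0) x := by linarith
    rw [h2, hh]; ring
  have hev : ∀ x, N (-x) = N x := fun x => by simp [N, Nk, Ls_even]
  have e2 : ∫ x, h x * cv g N x = ∑ j, ∑ k, ∫ y, pd j (pd k Φ) y * (v j y * v k y) := by
    rw [cv_swap hs.cont hN.cont hg.cont hhc hNc hev, ← gq_weak hv hdiv hΦ hΦc]
    simp only [mul_comm]; rfl
  -- `|∇χ| ≲ 1/r`, so `‖h‖_{L²} ≲ I/r`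
  have hsum : Continuous fun x => v 0 x ^ 2 + v 1 x ^ 2 :=
    ((hv 0).cont.pow 2).add ((hv 1).cont.pow 2)
  have hh2 : ∫ x, h x ^ 2 ≤ (2 * c * (r⁻¹ * I)) ^ 2 := by
    rw [← setInt_of_zero (a := 5 / 2 * r) (b := 5 * r) (by linarith)
      (fun x hx => by rw [hz x hx.le]; simp)]
    calc ∫ x in ball (0 : E2) (5 * r), h x ^ 2
        ≤ ∫ x in ball (0 : E2) (5 * r), 2 * (c * r⁻¹) ^ 2 * (v 0 x ^ 2 + v 1 x ^ 2) := by
          apply integral_mono (int_ball (hs.cont.pow 2) _ _)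
            (int_ball (continuous_const.mul hsum) _ _)
          intro x
          simp only
          have h0 := hgrad r hr0 0 x
          have h1 := hgrad r hr0 1 x
          have q0 : pd 0 (chir r) x ^ 2 ≤ (c * r⁻¹) ^ 2 := sq_le_sq' (abs_le.1 h0).1 (abs_le.1 h0).2
          have q1 : pd 1 (chir r) x ^ 2 ≤ (c * r⁻¹) ^ 2 := sq_le_sq' (abs_le.1 h1).1 (abs_le.1 h1).2
          calc h x ^ 2 ≤ 2 * (v 0 x ^ 2 * pd 0 (chir r) x ^ 2 + v 1 x ^ 2 * pd 1 (chir r) x ^ 2) := by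
                rw [hh]; nlinarith [sq_nonneg (v 0 x * pd 0 (chir r) x - v 1 x * pd 1 (chir r) x)]
            _ ≤ 2 * (v 0 x ^ 2 * (c * r⁻¹) ^ 2 + v 1 x ^ 2 * (c * r⁻¹) ^ 2) := by gcongr
            _ = 2 * (c * r⁻¹) ^ 2 * (v 0 x ^ 2 + v 1 x ^ 2) := by ring
      _ ≤ 2 * (c * r⁻¹) ^ 2 * I ^ 2 := by
          rw [integral_const_mul]; gcongr
      _ ≤ _ := by
          have : 0 ≤ (c * r⁻¹ * I) ^ 2 := sq_nonneg _
          nlinarith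
  -- Young: `‖ΔΦ‖_{L²} ≤ ‖ΔN‖_{L¹} ‖h‖_{L²}`
  have hlapΦ : ∫ x, lap Φ x ^ 2 ≤ (2 * L) ^ 2 * (2 * c * (r⁻¹ * I)) ^ 2 := by
    rw [hΦdef, lap_cv hs.cont hN hNc]
    refine (young_sq hs.cont hN.lap.cont hhc (lap_hcs hNc)).trans ?_
    have h1 := lap_Nk_L1 hδ hr
    have h0 : 0 ≤ ∫ x, |lap N x| := integral_nonneg fun _ => abs_nonneg _
    have h2 : 0 ≤ ∫ x, h x ^ 2 := integral_nonneg fun _ => sq_nonneg _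
    gcongr
  have hterm : ∀ j k, |∫ y, pd j (pd k Φ) y * (v j y * v k y)| ≤
      U * I * (2 * L * (2 * c * (r⁻¹ * I))) := by
    intro j k
    have hP := (hΦ.pd k).pd j
    have hPz : ∀ x : E2, 19 / 4 * r < ‖x‖ → pd j (pd k Φ) x = 0 := by
      intro x hx
      refine pd_zero_of_zero (ρ := 14 / 3 * r) (fun y hy => ?_) j (by linarith)
      exact pd_zero_of_zero hΦz k (by linarith)
    have hvv : Continuous fun y => v j y * v k y := (hv j).cont.mul (hv k).cont
    apply abs_le_of_cs (by positivity) (by positivity)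
    rw [← setInt_of_zero (a := 19 / 4 * r) (b := 5 * r) (by linarith)
      (fun x hx => by rw [hPz x hx]; simp)]
    refine (cs_sq (int_ball (hP.cont.pow 2) _ _) (int_ball (hvv.pow 2) _ _)
      (int_ball (hP.cont.mul hvv) _ _)).trans ?_
    have f1 : ∫ x in ball (0 : E2) (5 * r), pd j (pd k Φ) x ^ 2 ≤
        (2 * L * (2 * c * (r⁻¹ * I))) ^ 2 := by
      rw [setInt_of_zero (a := 19 / 4 * r) (b := 5 * r) (by linarith)
        (fun x hx => by rw [hPz x hx]; simp), mul_pow]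
      exact (hess_sq hΦ hΦc j k).trans hlapΦ
    have f2 : ∫ x in ball (0 : E2) (5 * r), (v j x * v k x) ^ 2 ≤ (U * I) ^ 2 := by
      calc ∫ x in ball (0 : E2) (5 * r), (v j x * v k x) ^ 2
          ≤ ∫ x in ball (0 : E2) (5 * r), U ^ 2 * (v 0 x ^ 2 + v 1 x ^ 2) := by
            apply setIntegral_mono_on (int_ball (hvv.pow 2) _ _)
              (int_ball (continuous_const.mul hsum) _ _) measurableSet_ball
            intro x hx
            have hj := abs_le.1 (hUb x (by simpa using hx) j)
            have q : v j x ^ 2 ≤ U ^ 2 := sq_le_sq' hj.1 hj.2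
            have q2 : v k x ^ 2 ≤ v 0 x ^ 2 + v 1 x ^ 2 := by
              fin_cases k <;> simp <;> positivity
            change (v j x * v k x) ^ 2 ≤ U ^ 2 * (v 0 x ^ 2 + v 1 x ^ 2)
            rw [mul_pow]
            gcongr
        _ ≤ U ^ 2 * I ^ 2 := by rw [integral_const_mul]; gcongr
        _ = _ := by ring
    rw [mul_comm ((U * I) ^ 2)]
    have p2 : 0 ≤ ∫ x in ball (0 : E2) (5 * r), (v j x * v k x) ^ 2 :=
      integral_nonneg fun _ => sq_nonneg _
    gcongr
  rw [e1, e2, abs_neg]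
  calc _ ≤ ∑ j, ∑ k, |∫ y, pd j (pd k Φ) y * (v j y * v k y)| :=
        (Finset.abs_sum_le_sum_abs _ _).trans
          (Finset.sum_le_sum fun j _ => Finset.abs_sum_le_sum_abs _ _)
    _ ≤ ∑ _j : Fin 2, ∑ _k : Fin 2, U * I * (2 * L * (2 * c * (r⁻¹ * I))) :=
        Finset.sum_le_sum fun j _ => Finset.sum_le_sum fun k _ => hterm j k
    _ = 16 * L * c * (U * I * (r⁻¹ * I)) := by simp; ring
    _ ≤ _ := by
        have : 0 ≤ U * I * (r⁻¹ * I) := by positivity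
        gcongr; linarith

/-! ### Work of the pressure and the velocity bound -/

lemma abs_prod_le (a : Fin 2 → ℝ) (j k : Fin 2) : |a j * a k| ≤ a 0 ^ 2 + a 1 ^ 2 := by
  have h : ∀ i, a i ^ 2 ≤ a 0 ^ 2 + a 1 ^ 2 := by
    intro i; fin_cases i <;> simp <;> positivity
  have h1 := h j
  have h2 := h k
  rw [abs_le]
  constructor <;> nlinarith [sq_nonneg (a j - a k), sq_nonneg (a j + a k)]

/-- The work of the pressure on the cut-off velocity is `≲ U M² r^(1+2α)`. The near part of
`pressure_decomp` is bounded by `near_bound`, the far part by `far_bound`, and the error vanishes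
as `δ → 0`. -/
lemma pressure_est {α : ℝ} (hα : α < 1 / 2) : ∃ C, 0 < C ∧ ∀ θ, IsCutoff θ → ∀ u : E2 → E2,
    ContDiff ℝ (⊤ : ℕ∞) u →
    (∀ x, pd 0 (fun y => u y 0) x + pd 1 (fun y => u y 1) x = 0) →
    (∀ x, PressureIntegrable θ u x) → (∀ i, Continuous (pressureForce θ u i)) →
    ∀ M r U : ℝ, 0 ≤ M → 0 < r → 0 ≤ U →
    (∀ ρ, r ≤ ρ → ∫ y in ball (0 : E2) ρ, (u y 0 ^ 2 + u y 1 ^ 2) ≤ M ^ 2 * ρ ^ (2 + 2 * α)) →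
    (∀ x, ‖x‖ < 5 * r → ∀ i, |u x i| ≤ U) →
    |∑ i, ∫ x, chir r x * u x i * pressureForce θ u i x| ≤
      C * (U * (M ^ 2 * r ^ (1 + 2 * α))) := by
  obtain ⟨C1, hC1, hdec⟩ := pressure_decomp
  obtain ⟨C2, hC2, hfar⟩ := far_bound hα
  obtain ⟨C3, hC3, hnear⟩ := near_bound
  set X := ∫ x, chi x with hX
  have hX0 : 0 ≤ X := integral_nonneg fun x => Real.smoothTransition.nonneg _
  have h5 : (0 : ℝ) < 5 ^ (2 + 2 * α) := by positivity
  refine ⟨|ac| * C3 * 5 ^ (2 + 2 * α) + 8 * |ac| * C2 * X + 1, by positivity, ?_⟩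
  intro θ hθ u hu hdiv hP hPc M r U hM hr hU hMr hUb
  set v : Fin 2 → E2 → ℝ := fun i y => u y i with hv
  have hvs : ∀ i, Sm (v i) := coord_comp_smooth hu
  have hg : Sm (gq v) := gq_smooth hvs
  obtain ⟨G, hG0, hG⟩ := bound_ball hg.cont (5 * r)
  have hw : Continuous fun y => u y 0 ^ 2 + u y 1 ^ 2 :=
    ((hvs 0).cont.pow 2).add ((hvs 1).cont.pow 2)
  set Y := U * (M ^ 2 * r ^ (1 + 2 * α)) with hY
  have hY0 : 0 ≤ Y := by positivity
  have main : ∀ δ, 0 < δ → δ ≤ r → |∑ i, ∫ x, chir r x * u x i * pressureForce θ u i x| ≤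
      (|ac| * C3 * 5 ^ (2 + 2 * α) + 8 * |ac| * C2 * X) * Y + 2 * (C1 * G * (U * (r ^ 2 * X))) * δ := by
    intro δ hδ hδr
    set Q : Fin 2 → E2 → ℝ := fun i => cv (gq v) (pd i (Nk δ r)) with hQ
    have hQs : ∀ i, Continuous (Q i) := fun i =>
      (cv_smooth hg.cont ((Nk_smooth δ r).pd i) (hcs_pd (Nk_hcs hδ hδr) i)).cont
    have hχ := chir_smooth r
    have hχc := chir_hcs hr
    have hχv : ∀ i, Continuous fun x => chir r x * u x i := fun i => hχ.cont.mul (hvs i).cont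
    have hχvc : ∀ i, HasCompactSupport fun x => chir r x * u x i := fun i => hχc.mul_right
    have hRem : ∀ i x, ‖x‖ ≤ 2 * r → |pressureForce θ u i x - ac * Q i x| ≤
        C1 * δ * G + |ac| * (4 * (C2 * (M ^ 2 * r ^ (2 * α - 1)))) := by
      intro i x hx
      have h1 := hdec θ hθ u hu hdiv x (hP x) δ r hδ hδr G (fun y hy => hG y (by
        calc ‖y‖ = ‖x - (x - y)‖ := by congr 1; abel
          _ ≤ ‖x‖ + ‖x - y‖ := norm_sub_le _ _
          _ ≤ _ := by linarith)) i
      have h2 : |∑ j, ∑ k, ∫ y, pd i (pd j (pd k (Ls r))) (x - y) * (u y j * u y k)| ≤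
          4 * (C2 * (M ^ 2 * r ^ (2 * α - 1))) := by
        calc _ ≤ ∑ j, ∑ k, |∫ y, pd i (pd j (pd k (Ls r))) (x - y) * (u y j * u y k)| :=
              (Finset.abs_sum_le_sum_abs _ _).trans
                (Finset.sum_le_sum fun j _ => Finset.abs_sum_le_sum_abs _ _)
          _ ≤ ∑ _j : Fin 2, ∑ _k : Fin 2, C2 * (M ^ 2 * r ^ (2 * α - 1)) :=
              Finset.sum_le_sum fun j _ => Finset.sum_le_sum fun k _ =>
                hfar _ hw (fun y => by positivity) M r hr hMr _
                  (fun y => abs_prod_le (fun i => u y i) j k) x hx i j k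
          _ = _ := by simp; ring
      set S := ∑ j, ∑ k, ∫ y, pd i (pd j (pd k (Ls r))) (x - y) * (u y j * u y k)
      calc |pressureForce θ u i x - ac * Q i x|
          = |(pressureForce θ u i x - ac * Q i x - ac * S) + ac * S| := by congr 1; ring
        _ ≤ |pressureForce θ u i x - ac * Q i x - ac * S| + |ac * S| := abs_add_le _ _
        _ ≤ _ := by rw [abs_mul]; gcongr
    have iP : ∀ i, Integrable fun x => chir r x * u x i * pressureForce θ u i x := fun i =>
      int_cs ((hχv i).mul (hPc i)) (hχvc i).mul_right
    have iQ : ∀ i, Integrable fun x => chir r x * u x i * Q i x := fun i =>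
      int_cs ((hχv i).mul (hQs i)) (hχvc i).mul_right
    have hsplit : ∑ i, ∫ x, chir r x * u x i * pressureForce θ u i x =
        ac * (∑ i, ∫ x, chir r x * u x i * Q i x) +
        ∑ i, ∫ x, chir r x * u x i * (pressureForce θ u i x - ac * Q i x) := by
      rw [Finset.mul_sum, ← Finset.sum_add_distrib]
      refine Finset.sum_congr rfl fun i _ => ?_
      rw [← integral_const_mul, ← integral_add ((iQ i).const_mul _)]
      · congr 1; funext x; ring
      · have : (fun x => chir r x * u x i * (pressureForce θ u i x - ac * Q i x)) =
            fun x => chir r x * u x i * pressureForce θ u i x - ac * (chir r x * u x i * Q i x) := by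
          funext x; ring
        rw [this]; exact (iP i).sub ((iQ i).const_mul _)
    set Rm := C1 * δ * G + |ac| * (4 * (C2 * (M ^ 2 * r ^ (2 * α - 1)))) with hRm
    have hRm0 : 0 ≤ Rm := by positivity
    have hrest : ∀ i, |∫ x, chir r x * u x i * (pressureForce θ u i x - ac * Q i x)| ≤
        U * Rm * (r ^ 2 * X) := by
      intro i
      have hb : ∀ x, ‖chir r x * u x i * (pressureForce θ u i x - ac * Q i x)‖ ≤
          U * Rm * chir r x := by
        intro x
        rcases le_or_gt ‖x‖ (2 * r) with h | h
        · rw [norm_mul, norm_mul, Real.norm_eq_abs, Real.norm_eq_abs, Real.norm_eq_abs,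
            abs_of_nonneg (chir_nonneg r x)]
          have h1 := hUb x (by linarith) i
          have h2 := hRem i x h
          have h3 := chir_nonneg r x
          calc chir r x * |u x i| * |pressureForce θ u i x - ac * Q i x| ≤ chir r x * U * Rm := by
                gcongr
            _ = _ := by ring
        · rw [chir_zero hr h.le]; simp
      have := norm_integral_le_of_norm_le ((int_cs hχ.cont hχc).const_mul (U * Rm))
        (Filter.Eventually.of_forall hb)
      rwa [integral_const_mul, show ∫ x, chir r x = r ^ 2 * X from integral_scale chi hr] at this
    have hI : ∫ y in ball (0 : E2) (5 * r), (u y 0 ^ 2 + u y 1 ^ 2) ≤ (M * (5 * r) ^ (1 + α)) ^ 2 := by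
      refine (hMr (5 * r) (by linarith)).trans (le_of_eq ?_)
      rw [mul_pow, ← Real.rpow_natCast ((5 * r) ^ (1 + α)) 2, ← Real.rpow_mul (by positivity)]
      congr 2; push_cast; ring
    have hn := hnear v hvs hdiv δ r hδ hδr U (M * (5 * r) ^ (1 + α)) hU (by positivity) hUb hI
    have e5 : U * (M * (5 * r) ^ (1 + α)) * (r⁻¹ * (M * (5 * r) ^ (1 + α))) =
        5 ^ (2 + 2 * α) * Y := by
      have : (5 * r) ^ (1 + α) * (5 * r) ^ (1 + α) = 5 ^ (2 + 2 * α) * (r ^ (1 + 2 * α) * r) := by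
        rw [← Real.rpow_add (by positivity), Real.mul_rpow (by norm_num) hr.le,
          ← Real.rpow_add_one hr.ne']
        congr 2 <;> ring
      calc _ = U * M ^ 2 * r⁻¹ * ((5 * r) ^ (1 + α) * (5 * r) ^ (1 + α)) := by ring
        _ = _ := by rw [this, hY]; field_simp
    rw [e5] at hn
    have er : r ^ (2 * α - 1) * r ^ 2 = r ^ (1 + 2 * α) := by
      rw [← Real.rpow_natCast r 2, ← Real.rpow_add hr]; congr 1; push_cast; ring
    rw [hsplit]
    calc _ ≤ |ac * (∑ i, ∫ x, chir r x * u x i * Q i x)| +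
          |∑ i, ∫ x, chir r x * u x i * (pressureForce θ u i x - ac * Q i x)| := abs_add_le _ _
      _ ≤ |ac| * (C3 * (5 ^ (2 + 2 * α) * Y)) + ∑ _i : Fin 2, U * Rm * (r ^ 2 * X) := by
          rw [abs_mul]
          refine add_le_add (mul_le_mul_of_nonneg_left hn (abs_nonneg _)) ?_
          exact (Finset.abs_sum_le_sum_abs _ _).trans (Finset.sum_le_sum fun i _ => hrest i)
      _ = (|ac| * C3 * 5 ^ (2 + 2 * α) + 8 * |ac| * C2 * X) * Y +
            2 * (C1 * G * (U * (r ^ 2 * X))) * δ := by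
          rw [Finset.sum_const, Finset.card_univ, Fintype.card_fin, hRm, hY, ← er]
          simp only [nsmul_eq_mul]; push_cast; ring
  -- `δ → 0` removes the regularisation error, whose constant depends on `u`
  apply _root_.le_of_forall_pos_le_add
  intro ε hε
  set D := 2 * (C1 * G * (U * (r ^ 2 * X))) with hD
  have hD0 : 0 ≤ D := by positivity
  have hm := main (min r (ε / (D + 1))) (by positivity) (min_le_left _ _)
  refine hm.trans ?_
  have : D * min r (ε / (D + 1)) ≤ ε := by
    calc _ ≤ D * (ε / (D + 1)) := by gcongr; exact min_le_right _ _
      _ ≤ ε := by rw [mul_div_assoc', div_le_iff₀ (by positivity)]; nlinarith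
  nlinarith

/-- `sup_bound` at the optimal scale `ρ ≤ r`, for a field with Morrey-type energy at radius `8r`. -/
lemma sup_cor {α : ℝ} (hα : α < 1 / 2) : ∃ C, 0 < C ∧
    ∀ v : Fin 2 → E2 → ℝ, (∀ i, Sm (v i)) →
    (∀ x, pd 0 (v 0) x + pd 1 (v 1) x = 0) → ∀ W : ℝ, 0 ≤ W →
    (∀ x, |pd 0 (v 1) x - pd 1 (v 0) x| ≤ W) → ∀ M r : ℝ, 0 < M → 0 < r →
    (∫ y in ball (0 : E2) (8 * r), (v 0 y ^ 2 + v 1 y ^ 2) ≤ M ^ 2 * (8 * r) ^ (2 + 2 * α)) →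
    ∀ x, ‖x‖ < 5 * r → ∀ i, |v i x| ≤ C * (M * r ^ α + √(W * (M * r ^ (1 + α)))) := by
  obtain ⟨C, hC, hs⟩ := sup_bound
  refine ⟨65 * C, by positivity, ?_⟩
  intro v hv hdiv W hW0 hW M r hM hr hI x hx i
  set b := M * r ^ (1 + α) with hb
  have hb0 : 0 < b := by positivity
  have hB : ∀ ρ, ρ ≤ r → ∫ y in ball x (3 * ρ), v i y ^ 2 ≤ (64 * b) ^ 2 := by
    intro ρ hρ
    have hw : Continuous fun y => v 0 y ^ 2 + v 1 y ^ 2 :=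
      ((hv 0).cont.pow 2).add ((hv 1).cont.pow 2)
    calc ∫ y in ball x (3 * ρ), v i y ^ 2 ≤ ∫ y in ball x (3 * ρ), (v 0 y ^ 2 + v 1 y ^ 2) := by
          apply integral_mono (int_ball ((hv i).cont.pow 2) _ _) (int_ball hw _ _)
          intro y
          fin_cases i <;> simp <;> positivity
      _ ≤ ∫ y in ball (0 : E2) (8 * r), (v 0 y ^ 2 + v 1 y ^ 2) := by
          apply setIntegral_mono_set (int_ball hw _ _)
            (Filter.Eventually.of_forall fun y => by positivity)
          apply LE.le.eventuallyLE
          intro y hy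
          rw [mem_ball, dist_eq_norm] at hy
          rw [mem_ball_zero_iff]
          calc ‖y‖ = ‖(y - x) + x‖ := by congr 1; abel
            _ ≤ ‖y - x‖ + ‖x‖ := norm_add_le _ _
            _ < _ := by linarith
      _ ≤ M ^ 2 * (8 * r) ^ (2 + 2 * α) := hI
      _ = M ^ 2 * (8 ^ (2 + 2 * α) * (r ^ (1 + α)) ^ 2) := by
          rw [Real.mul_rpow (by norm_num) hr.le, ← Real.rpow_natCast (r ^ (1 + α)) 2,
            ← Real.rpow_mul hr.le]
          congr 3; push_cast; ring
      _ ≤ M ^ 2 * (64 ^ 2 * (r ^ (1 + α)) ^ 2) := by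
          gcongr
          calc (8 : ℝ) ^ (2 + 2 * α) ≤ 8 ^ (4 : ℝ) :=
                Real.rpow_le_rpow_of_exponent_le (by norm_num) (by linarith)
            _ = 64 ^ 2 := by norm_num
      _ = _ := by rw [hb]; ring
  have hbr : b = M * r ^ α * r := by rw [hb, Real.rpow_add hr, Real.rpow_one]; ring
  -- weak vorticity: `ρ = r`; otherwise `ρ = √(W b) / W` balances the two terms of `sup_bound`
  rcases le_or_gt (W * r) (M * r ^ α) with h | h
  · have := hs v hv hdiv W hW x r (64 * b) hr (by positivity) i (hB r le_rfl)
    have e : r⁻¹ * (64 * b) = 64 * (M * r ^ α) := by rw [hbr]; field_simp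
    rw [e] at this
    have hq := Real.sqrt_nonneg (W * b)
    refine this.trans ?_
    nlinarith
  · have hW' : 0 < W := by
      have : 0 < M * r ^ α := by positivity
      nlinarith
    set S := √(W * b) with hS
    have hS0 : 0 < S := Real.sqrt_pos.2 (by positivity)
    have hS2 : S ^ 2 = W * b := Real.sq_sqrt (by positivity)
    have hSr : S / W ≤ r := by
      rw [div_le_iff₀ hW']
      apply le_of_sq_le_sq _ (by positivity)
      rw [hS2, hbr]
      nlinarith [mul_lt_mul_of_pos_left h (mul_pos hW' hr)]
    have := hs v hv hdiv W hW x (S / W) (64 * b) (by positivity) (by positivity) i (hB _ hSr)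
    have e1 : (S / W)⁻¹ * (64 * b) = 64 * S := by
      rw [inv_div, div_mul_eq_mul_div, div_eq_iff hS0.ne']; nlinarith
    have e2 : S / W * W = S := by field_simp
    rw [e1, e2] at this
    have : 0 < M * r ^ α := by positivity
    nlinarith

/-! ### Growth rate of the localised energy -/

/-- The transport term: `v · (v · ∇)v = ½ v · ∇|v|²`, so that one integration by parts puts the
derivative on the cut-off. -/
lemma transport_bound : ∃ C, 0 < C ∧ ∀ v : Fin 2 → E2 → ℝ, (∀ i, Sm (v i)) →
    (∀ x, pd 0 (v 0) x + pd 1 (v 1) x = 0) → ∀ r U I : ℝ, 0 < r → 0 ≤ U →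
    (∀ x, ‖x‖ < 5 * r → ∀ i, |v i x| ≤ U) →
    (∫ x in ball (0 : E2) (5 * r), (v 0 x ^ 2 + v 1 x ^ 2)) ≤ I →
    |∑ i, ∫ x, chir r x * v i x * ∑ j, v j x * pd j (v i) x| ≤ C * (U * (r⁻¹ * I)) := by
  obtain ⟨c, hc, hgrad⟩ := chir_grad
  refine ⟨c, hc, ?_⟩
  intro v hv hdiv r U I hr hU hUb hI
  have hχ := chir_smooth r
  have hχc := chir_hcs hr
  set w : E2 → ℝ := fun x => v 0 x * v 0 x + v 1 x * v 1 x with hw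
  have hws : Sm w := ((hv 0).mul' (hv 0)).add ((hv 1).mul' (hv 1))
  have hpw : ∀ j x, pd j w x = 2 * (v 0 x * pd j (v 0) x + v 1 x * pd j (v 1) x) := by
    intro j x
    rw [hw, pd_add ((hv 0).mul' (hv 0)).diff ((hv 1).mul' (hv 1)).diff,
      pd_mul (hv 0).diff (hv 0).diff, pd_mul (hv 1).diff (hv 1).diff]
    ring
  have hsum : ∀ i, Sm fun x => ∑ j, v j x * pd j (v i) x := fun i =>
    ContDiff.sum fun j _ => (hv j).mul' ((hv i).pd j)
  have i1 : ∀ i, Integrable fun x => chir r x * v i x * ∑ j, v j x * pd j (v i) x := fun i =>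
    int_cs ((hχ.mul' (hv i)).mul' (hsum i)).cont
      ((hχc.mul_right (f' := v i)).mul_right)
  have i2 : ∀ j, Integrable fun x => chir r x * v j x * pd j w x := fun j =>
    int_cs ((hχ.mul' (hv j)).mul' (hws.pd j)).cont ((hχc.mul_right (f' := v j)).mul_right)
  have i3 : ∀ j, Integrable fun x => pd j (fun x => chir r x * v j x) x * w x := fun j =>
    int_cs (((hχ.mul' (hv j)).pd j).mul' hws).cont
      ((hcs_pd (hχc.mul_right (f' := v j)) j).mul_right)
  have e1 : ∑ i, ∫ x, chir r x * v i x * ∑ j, v j x * pd j (v i) x =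
      1 / 2 * ∑ j, ∫ x, chir r x * v j x * pd j w x := by
    rw [Fin.sum_univ_two, Fin.sum_univ_two, ← integral_add (i1 0) (i1 1),
      ← integral_add (i2 0) (i2 1), ← integral_const_mul]
    congr 1; funext x
    simp only [Fin.sum_univ_two, hpw]; ring
  have e2 : ∑ j, ∫ x, chir r x * v j x * pd j w x =
      - ∫ x, (v 0 x * pd 0 (chir r) x + v 1 x * pd 1 (chir r) x) * w x := by
    have h : ∀ j, ∫ x, chir r x * v j x * pd j w x =
      - ∫ x, pd j (fun x => chir r x * v j x) x * w x := fun j =>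
        ibp (hχ.mul' (hv j)) hws hχc.mul_right j
    rw [Fin.sum_univ_two, h, h, ← neg_add, ← integral_add (i3 0) (i3 1)]
    congr 2; funext x
    rw [pd_mul hχ.diff (hv 0).diff, pd_mul hχ.diff (hv 1).diff]
    have h2 : pd 1 (v 1) x = - pd 0 (v 0) x := by linarith [hdiv x]
    rw [h2]; ring
  have hz : ∀ i, ∀ x : E2, 2 * r < ‖x‖ → pd i (chir r) x = 0 := fun i x hx =>
    pd_zero_of_zero (fun x hx => chir_zero hr hx) i hx
  have e3 : |∫ x, (v 0 x * pd 0 (chir r) x + v 1 x * pd 1 (chir r) x) * w x| ≤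
      2 * c * (U * (r⁻¹ * I)) := by
    rw [← setInt_of_zero (a := 2 * r) (b := 5 * r) (by linarith)
      (fun x hx => by rw [hz 0 x hx, hz 1 x hx]; ring)]
    have hb : ∀ x ∈ ball (0 : E2) (5 * r),
        ‖(v 0 x * pd 0 (chir r) x + v 1 x * pd 1 (chir r) x) * w x‖ ≤
        2 * U * (c * r⁻¹) * (v 0 x ^ 2 + v 1 x ^ 2) := by
      intro x hx
      have hx' : ‖x‖ < 5 * r := by simpa using hx
      have ew : w x = v 0 x ^ 2 + v 1 x ^ 2 := by rw [hw]; ring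
      have hw0 : 0 ≤ v 0 x ^ 2 + v 1 x ^ 2 := by positivity
      have hcr : 0 ≤ c * r⁻¹ := by positivity
      rw [norm_mul, Real.norm_eq_abs, Real.norm_eq_abs, ew, abs_of_nonneg hw0]
      gcongr
      calc _ ≤ |v 0 x * pd 0 (chir r) x| + |v 1 x * pd 1 (chir r) x| := abs_add_le _ _
        _ = |v 0 x| * |pd 0 (chir r) x| + |v 1 x| * |pd 1 (chir r) x| := by
            rw [abs_mul, abs_mul]
        _ ≤ U * (c * r⁻¹) + U * (c * r⁻¹) := by
            have a0 := hUb x hx' 0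
            have a1 := hUb x hx' 1
            have b0 := hgrad r hr 0 x
            have b1 := hgrad r hr 1 x
            gcongr
        _ = _ := by ring
    have hwc : Continuous fun x => v 0 x ^ 2 + v 1 x ^ 2 :=
      ((hv 0).cont.pow 2).add ((hv 1).cont.pow 2)
    have := norm_integral_le_of_norm_le (μ := volume.restrict (ball (0 : E2) (5 * r)))
      ((int_ball hwc 0 (5 * r)).const_mul (2 * U * (c * r⁻¹)))
      ((ae_restrict_iff' measurableSet_ball).2 (Filter.Eventually.of_forall hb))
    rw [integral_const_mul, Real.norm_eq_abs] at this
    refine this.trans ?_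
    calc _ ≤ 2 * U * (c * r⁻¹) * I := by gcongr
      _ = _ := by ring
  rw [e1, e2, mul_neg, abs_neg, abs_mul, abs_of_pos (by norm_num : (0 : ℝ) < 1 / 2)]
  linarith

/-- Bound of the growth rate of the localised energy: the transport and pressure terms are both
`≲ U M² r^(1+2α)`, and `U` is taken from `sup_cor`. -/
lemma energy_rate {α : ℝ} (hα : α < 1 / 2) : ∃ C, 0 < C ∧ ∀ θ, IsCutoff θ →
    ∀ u : E2 → E2, ContDiff ℝ (⊤ : ℕ∞) u →
    (∀ x, div2 u x = 0) → (∀ x, PressureIntegrable θ u x) →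
    (∀ i, Continuous (pressureForce θ u i)) → ∀ W : ℝ, 0 ≤ W → (∀ x, |curl2 u x| ≤ W) →
    ∀ M r : ℝ, 0 < M → 0 < r →
    (∀ ρ, r ≤ ρ → ∫ y in ball (0 : E2) ρ, (u y 0 ^ 2 + u y 1 ^ 2) ≤ M ^ 2 * ρ ^ (2 + 2 * α)) →
    2 * ∫ x, chir r x * ∑ i, u x i * (-(∑ j, u x j * pdv j i u x) - pressureForce θ u i x) ≤
      C * (M ^ 2 * (M * r ^ (α - 1) + √(W * (M * r ^ (α - 1))))) * r ^ (2 + 2 * α) := by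
  obtain ⟨C1, hC1, htr⟩ := transport_bound
  obtain ⟨C2, hC2, hpr⟩ := pressure_est hα
  obtain ⟨C3, hC3, hsup⟩ := sup_cor hα
  refine ⟨2 * (C1 * 5 ^ (2 + 2 * α) + C2) * C3, by positivity, ?_⟩
  intro θ hθ u hu hdiv hP hPc W hW hcurl M r hM hr hMr
  set v : Fin 2 → E2 → ℝ := fun i y => u y i with hv
  have hvs : ∀ i, Sm (v i) := coord_comp_smooth hu
  have hdv : ∀ x, pd 0 (v 0) x + pd 1 (v 1) x = 0 := by
    intro x
    have := hdiv x
    rw [div2, Fin.sum_univ_two, pdv_eq hu, pdv_eq hu] at this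
    exact this
  have hcv : ∀ x, |pd 0 (v 1) x - pd 1 (v 0) x| ≤ W := by
    intro x
    have := hcurl x
    rw [curl2, pdv_eq hu, pdv_eq hu] at this
    exact this
  set U := C3 * (M * r ^ α + √(W * (M * r ^ (1 + α)))) with hU
  have hU0 : 0 ≤ U := by positivity
  have hUb : ∀ x : E2, ‖x‖ < 5 * r → ∀ i, |v i x| ≤ U :=
    hsup v hvs hdv W hW hcv M r hM hr (hMr (8 * r) (by linarith))
  have h1 := htr v hvs hdv r U _ hr hU0 hUb (hMr (5 * r) (by linarith))
  have h2 := hpr θ hθ u hu hdv hP hPc M r U hM.le hr hU0 hMr hUb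
  have hχ := chir_smooth r
  have hχc := chir_hcs hr
  have hsum : ∀ i, Sm fun x => ∑ j, v j x * pd j (v i) x := fun i =>
    ContDiff.sum fun j _ => (hvs j).mul' ((hvs i).pd j)
  have i1 : ∀ i, Integrable fun x => chir r x * v i x * ∑ j, v j x * pd j (v i) x := fun i =>
    int_cs ((hχ.mul' (hvs i)).mul' (hsum i)).cont ((hχc.mul_right (f' := v i)).mul_right)
  have i2 : ∀ i, Integrable fun x => chir r x * u x i * pressureForce θ u i x := fun i =>
    int_cs ((hχ.mul' (hvs i)).cont.mul (hPc i)) ((hχc.mul_right (f' := v i)).mul_right)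
  have e : ∫ x, chir r x * ∑ i, u x i * (-(∑ j, u x j * pdv j i u x) - pressureForce θ u i x) =
      - (∑ i, ∫ x, chir r x * v i x * ∑ j, v j x * pd j (v i) x) -
        ∑ i, ∫ x, chir r x * u x i * pressureForce θ u i x := by
    have j1 : Integrable fun x => -∑ i, chir r x * v i x * ∑ j, v j x * pd j (v i) x :=
      (integrable_finsetSum _ fun i _ => i1 i).neg
    rw [← integral_finsetSum _ fun i _ => i1 i, ← integral_finsetSum _ fun i _ => i2 i,
      ← integral_neg, ← integral_sub j1 (integrable_finsetSum _ fun i _ => i2 i)]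
    congr 1; funext x
    simp only [Fin.sum_univ_two, pdv_eq hu, hv]; ring
  rw [e]
  have b1 := abs_le.1 h1
  have b2 := abs_le.1 h2
  have e5 : U * (r⁻¹ * (M ^ 2 * (5 * r) ^ (2 + 2 * α))) =
      5 ^ (2 + 2 * α) * (U * (M ^ 2 * r ^ (1 + 2 * α))) := by
    rw [Real.mul_rpow (by norm_num) hr.le,
      show 2 + 2 * α = 1 + 2 * α + 1 by ring, Real.rpow_add_one hr.ne']
    field_simp
  rw [e5] at b1
  have e6 : U * (M ^ 2 * r ^ (1 + 2 * α)) =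
      C3 * (M ^ 2 * (M * r ^ (α - 1) + √(W * (M * r ^ (α - 1))))) * r ^ (2 + 2 * α) := by
    have s1 : √(W * (M * r ^ (1 + α))) = √(W * (M * r ^ (α - 1))) * r := by
      rw [← Real.sqrt_sq hr.le, ← Real.sqrt_mul (by positivity), Real.sqrt_sq hr.le]
      congr 1
      have : r ^ (1 + α) = r ^ (α - 1) * r ^ 2 := by
        rw [← Real.rpow_natCast r 2, ← Real.rpow_add hr]; congr 1; push_cast; ring
      rw [this]; ring
    have s2 : r ^ α = r ^ (α - 1) * r := by
      rw [← Real.rpow_add_one hr.ne']; congr 1; ring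
    have s3 : r ^ (2 + 2 * α) = r ^ (1 + 2 * α) * r := by
      rw [← Real.rpow_add_one hr.ne']; congr 1; ring
    rw [hU, s1, s2, s3]; ring
  have e7 : 2 * (C1 * 5 ^ (2 + 2 * α) + C2) * C3 *
      (M ^ 2 * (M * r ^ (α - 1) + √(W * (M * r ^ (α - 1))))) * r ^ (2 + 2 * α) =
      2 * (C1 * 5 ^ (2 + 2 * α) + C2) * (U * (M ^ 2 * r ^ (1 + 2 * α))) := by rw [e6]; ring
  rw [e7]
  linarith

/-! ### Evolution of the localised energy -/

/-- The space-time domain `[0, ∞) × ℝ²`. -/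
abbrev St : Set (ℝ × E2) := Set.Ici 0 ×ˢ Set.univ

lemma slice_smooth {u : ℝ → E2 → E2}
    (hu : ContDiffOn ℝ (⊤ : ℕ∞) (fun q : ℝ × E2 => u q.1 q.2) St) {t : ℝ} (ht : 0 ≤ t) :
    ContDiff ℝ (⊤ : ℕ∞) (u t) := by
  have h : ContDiff ℝ (⊤ : ℕ∞) (fun x : E2 => (t, x)) := contDiff_const.prodMk contDiff_id
  have := hu.comp (s := Set.univ) h.contDiffOn (fun x _ => ⟨ht, trivial⟩)
  rwa [contDiffOn_univ] at this

/-- The velocity time derivative given by the Euler equations. -/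
def Dt (θ : E2 → ℝ) (u : ℝ → E2 → E2) (i : Fin 2) (q : ℝ × E2) : ℝ :=
  -(∑ j, u q.1 q.2 j * pdv j i (u q.1) q.2) - pressureForce θ (u q.1) i q.2

/-- By the equations `Dt` is the time derivative of `u`, hence continuous because `u` is smooth up to
`t = 0`. -/
lemma Dt_cont {θ : E2 → ℝ} {u : ℝ → E2 → E2} (h : IsYudovichSolution θ u) (i : Fin 2) :
    ContinuousOn (Dt θ u i) St := by
  obtain ⟨hu, -, -, hE⟩ := h
  have hS : UniqueDiffOn ℝ St := (uniqueDiffOn_Ici 0).prod uniqueDiffOn_univ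
  have hc := hu.continuousOn_fderivWithin hS (by simp)
  have hc2 : ContinuousOn (fun q => (fderivWithin ℝ (fun q : ℝ × E2 => u q.1 q.2) St q (1, 0)) i)
      St :=
    (EuclideanSpace.proj i : E2 →L[ℝ] ℝ).continuous.comp_continuousOn
      (hc.clm_apply continuousOn_const)
  refine hc2.congr ?_
  rintro ⟨t, x⟩ ⟨ht, -⟩
  have hd : HasFDerivWithinAt (fun q : ℝ × E2 => u q.1 q.2) _ St (t, x) :=
    ((hu.differentiableOn (by simp)) (t, x) ⟨ht, trivial⟩).hasFDerivWithinAt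
  have hl : HasDerivWithinAt (fun s : ℝ => (s, x)) ((1 : ℝ), (0 : E2)) (Set.Ici 0) t :=
    ((hasDerivAt_id t).prodMk (hasDerivAt_const t x)).hasDerivWithinAt
  have hm : Set.MapsTo (fun s : ℝ => (s, x)) (Set.Ici 0) St := fun s hs => ⟨hs, trivial⟩
  have hcmp := hd.comp_hasDerivWithinAt t hl hm
  have hci := (EuclideanSpace.proj i : E2 →L[ℝ] ℝ).hasFDerivAt.comp_hasDerivWithinAt t hcmp
  exact ((uniqueDiffOn_Ici 0) t ht).eq_deriv _ (hE t ht x i) hci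

/-- Continuity of the pressure force is read off from the Euler equations, as all the other terms are
continuous. -/
lemma pressure_cont {θ : E2 → ℝ} {u : ℝ → E2 → E2} (h : IsYudovichSolution θ u) {t : ℝ}
    (ht : 0 ≤ t) (i : Fin 2) : Continuous (pressureForce θ (u t) i) := by
  have hu := slice_smooth h.1 ht
  have h1 : Continuous fun x => Dt θ u i (t, x) := by
    rw [← continuousOn_univ]
    exact (Dt_cont h i).comp (continuous_const.prodMk continuous_id).continuousOn
      (fun x _ => ⟨ht, trivial⟩)
  have h2 : Continuous fun x => ∑ j, u t x j * pdv j i (u t) x := by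
    simp only [pdv_eq hu]
    exact continuous_finsetSum _ fun j _ =>
      (coord_comp_smooth hu j).cont.mul ((coord_comp_smooth hu i).pd j).cont
  have : pressureForce θ (u t) i = fun x => -(∑ j, u t x j * pdv j i (u t) x) - Dt θ u i (t, x) := by
    funext x; simp [Dt]
  rw [this]
  exact h2.neg.sub h1

/-- Kinetic energy localised to radius `r`. -/
def enr (u : ℝ → E2 → E2) (r t : ℝ) : ℝ := ∫ x, chir r x * (u t x 0 ^ 2 + u t x 1 ^ 2)

lemma coord_contOn {θ : E2 → ℝ} {u : ℝ → E2 → E2} (h : IsYudovichSolution θ u) (i : Fin 2) :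
    ContinuousOn (fun q : ℝ × E2 => u q.1 q.2 i) St :=
  (EuclideanSpace.proj i : E2 →L[ℝ] ℝ).continuous.comp_continuousOn h.1.continuousOn

lemma slice_cont {f : ℝ × E2 → ℝ} (hf : ContinuousOn f St) {t : ℝ} (ht : 0 ≤ t) :
    Continuous fun x => f (t, x) := by
  rw [← continuousOn_univ]
  exact hf.comp (continuous_const.prodMk continuous_id).continuousOn (fun x _ => ⟨ht, trivial⟩)

lemma compact_bound {f : ℝ × E2 → ℝ} (hf : ContinuousOn f St) (T ρ : ℝ) :
    ∃ C, ∀ t x, 0 ≤ t → t ≤ T → ‖x‖ ≤ ρ → |f (t, x)| ≤ C := by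
  have hK : IsCompact (Set.Icc (0 : ℝ) T ×ˢ closedBall (0 : E2) ρ) :=
    isCompact_Icc.prod (isCompact_closedBall _ _)
  obtain ⟨C, hC⟩ := hK.exists_bound_of_continuousOn
    (hf.mono fun q hq => ⟨hq.1.1, trivial⟩)
  exact ⟨C, fun t x h0 hT hx => hC (t, x) ⟨⟨h0, hT⟩, by simpa using hx⟩⟩

lemma chi_bound {f : ℝ × E2 → ℝ} {T r C : ℝ} (hr : 0 < r)
    (hC : ∀ t x, 0 ≤ t → t ≤ T → ‖x‖ ≤ 2 * r → |f (t, x)| ≤ C) {t : ℝ} (h0 : 0 ≤ t) (hT : t ≤ T)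
    (x : E2) : ‖chir r x * f (t, x)‖ ≤ C * chir r x := by
  rcases le_or_gt ‖x‖ (2 * r) with h | h
  · rw [norm_mul, Real.norm_eq_abs, Real.norm_eq_abs, abs_of_nonneg (chir_nonneg r x), mul_comm]
    have := chir_nonneg r x
    gcongr
    exact hC t x h0 hT h
  · rw [chir_zero hr h.le]; simp

lemma enr_cont {θ : E2 → ℝ} {u : ℝ → E2 → E2} (h : IsYudovichSolution θ u) {r : ℝ} (hr : 0 < r)
    (T : ℝ) : ContinuousOn (enr u r) (Set.Icc 0 T) := by
  set f : ℝ × E2 → ℝ := fun q => u q.1 q.2 0 ^ 2 + u q.1 q.2 1 ^ 2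
  have hf : ContinuousOn f St := ((coord_contOn h 0).pow 2).add ((coord_contOn h 1).pow 2)
  obtain ⟨C, hC⟩ := compact_bound hf T (2 * r)
  refine continuousOn_of_dominated (bound := fun x => C * chir r x)
    (F := fun t x => chir r x * f (t, x)) ?_ ?_ ?_ ?_
  · intro t ht
    exact ((chir_smooth r).cont.mul (slice_cont hf ht.1)).aestronglyMeasurable
  · intro t ht
    exact Filter.Eventually.of_forall fun x => chi_bound hr hC ht.1 ht.2 x
  · exact (int_cs (chir_smooth r).cont (chir_hcs hr)).const_mul _
  · refine Filter.Eventually.of_forall fun x => continuousOn_const.mul ?_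
    exact hf.comp (continuous_id.prodMk continuous_const).continuousOn fun t ht => ⟨ht.1, trivial⟩

/-- Differentiation under the integral sign; the time is interior to `[0, ∞)`, so that the derivative is
two-sided. -/
lemma enr_deriv {θ : E2 → ℝ} {u : ℝ → E2 → E2} (h : IsYudovichSolution θ u) {r : ℝ} (hr : 0 < r)
    {t : ℝ} (ht : 0 < t) :
    HasDerivAt (enr u r) (2 * ∫ x, chir r x * ∑ i, u t x i * Dt θ u i (t, x)) t := by
  set f : ℝ × E2 → ℝ := fun q => u q.1 q.2 0 ^ 2 + u q.1 q.2 1 ^ 2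
  have hf : ContinuousOn f St := ((coord_contOn h 0).pow 2).add ((coord_contOn h 1).pow 2)
  set f' : ℝ × E2 → ℝ := fun q => 2 * ∑ i, u q.1 q.2 i * Dt θ u i q
  have hf' : ContinuousOn f' St := continuousOn_const.mul
    (continuousOn_finsetSum _ fun i _ => (coord_contOn h i).mul (Dt_cont h i))
  obtain ⟨C, hC⟩ := compact_bound hf' (2 * t) (2 * r)
  have hnear : ∀ s ∈ ball t t, 0 < s ∧ s ≤ 2 * t := by
    intro s hs
    rw [mem_ball, Real.dist_eq, abs_lt] at hs
    constructor <;> linarith [hs.1, hs.2]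
  have key := hasDerivAt_integral_of_dominated_loc_of_deriv_le (μ := (volume : Measure E2))
    (F := fun t x => chir r x * f (t, x)) (F' := fun t x => chir r x * f' (t, x)) (x₀ := t)
    (s := ball t t) (bound := fun x => C * chir r x) (ball_mem_nhds t ht) ?_ ?_ ?_ ?_ ?_ ?_
  · have e : 2 * ∫ x, chir r x * ∑ i, u t x i * Dt θ u i (t, x) = ∫ x, chir r x * f' (t, x) := by
      rw [← integral_const_mul]; congr 1; funext x; simp only [f']; ring
    rw [e]; exact key.2
  · filter_upwards [ball_mem_nhds t ht] with s hs
    exact ((chir_smooth r).cont.mul (slice_cont hf (hnear s hs).1.le)).aestronglyMeasurable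
  · exact int_cs ((chir_smooth r).cont.mul (slice_cont hf ht.le)) (chir_hcs hr).mul_right
  · exact ((chir_smooth r).cont.mul (slice_cont hf' ht.le)).aestronglyMeasurable
  · exact Filter.Eventually.of_forall fun x s hs =>
      chi_bound hr hC (hnear s hs).1.le (hnear s hs).2 x
  · exact (int_cs (chir_smooth r).cont (chir_hcs hr)).const_mul _
  · refine Filter.Eventually.of_forall fun x s hs => ?_
    have hs0 := (hnear s hs).1
    have hd : ∀ i, HasDerivAt (fun s => u s x i) (Dt θ u i (s, x)) s := fun i =>
      (h.2.2.2 s hs0.le x i).hasDerivAt (Ici_mem_nhds hs0)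
    have := (((hd 0).pow 2).add ((hd 1).pow 2)).const_mul (chir r x)
    refine this.congr_deriv ?_
    simp only [f', Fin.sum_univ_two]; push_cast; ring

/-- Mean value inequality for the localised energy. -/
lemma enr_step {θ : E2 → ℝ} {u : ℝ → E2 → E2} (h : IsYudovichSolution θ u) {r : ℝ} (hr : 0 < r)
    {s s' Λ : ℝ} (hs : 0 ≤ s) (hss : s ≤ s')
    (hΛ : ∀ t, s ≤ t → t ≤ s' →
      2 * ∫ x, chir r x * ∑ i, u t x i * Dt θ u i (t, x) ≤ Λ) :
    enr u r s' - enr u r s ≤ Λ * (s' - s) := by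
  refine (convex_Icc s s').image_sub_le_mul_sub_of_deriv_le (f := enr u r) (C := Λ)
    ((enr_cont h hr s').mono (Set.Icc_subset_Icc_left hs)) ?_ ?_ s
    (Set.left_mem_Icc.2 hss) s' (Set.right_mem_Icc.2 hss) hss
  · intro t ht
    rw [interior_Icc] at ht
    exact (enr_deriv h hr (lt_of_le_of_lt hs ht.1)).differentiableAt.differentiableWithinAt
  · intro t ht
    rw [interior_Icc] at ht
    rw [(enr_deriv h hr (lt_of_le_of_lt hs ht.1)).deriv]
    exact hΛ t ht.1.le ht.2.le

/-! ### Morrey norm, energy increments and the continuity argument -/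

lemma en_cont {θ : E2 → ℝ} {u : ℝ → E2 → E2} (h : IsYudovichSolution θ u) {t : ℝ} (ht : 0 ≤ t) :
    Continuous fun x => u t x 0 ^ 2 + u t x 1 ^ 2 :=
  slice_cont (f := fun q : ℝ × E2 => u q.1 q.2 0 ^ 2 + u q.1 q.2 1 ^ 2)
    (((coord_contOn h 0).pow 2).add ((coord_contOn h 1).pow 2)) ht

lemma ball_le_enr {θ : E2 → ℝ} {u : ℝ → E2 → E2} (h : IsYudovichSolution θ u) {t ρ : ℝ}
    (ht : 0 ≤ t) (hρ : 0 < ρ) :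
    ∫ y in ball (0 : E2) ρ, (u t y 0 ^ 2 + u t y 1 ^ 2) ≤ enr u ρ t := by
  have hc := en_cont h ht
  unfold enr
  rw [← integral_indicator measurableSet_ball]
  refine integral_mono ((integrable_indicator_iff measurableSet_ball).2 (int_ball hc 0 ρ))
    (int_cs ((chir_smooth ρ).cont.mul hc) (chir_hcs hρ).mul_right) fun x => ?_
  by_cases hx : x ∈ ball (0 : E2) ρ
  · rw [Set.indicator_of_mem hx]
    rw [chir_one hρ (by simpa using (mem_ball_zero_iff.1 hx).le)]; simp
  · rw [Set.indicator_of_notMem hx]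
    have := chir_nonneg ρ x
    positivity

lemma enr_le_ball {θ : E2 → ℝ} {u : ℝ → E2 → E2} (h : IsYudovichSolution θ u) {t ρ : ℝ}
    (ht : 0 ≤ t) (hρ : 0 < ρ) :
    enr u ρ t ≤ ∫ y in ball (0 : E2) (2 * ρ), (u t y 0 ^ 2 + u t y 1 ^ 2) := by
  have hc := en_cont h ht
  unfold enr
  rw [← integral_indicator measurableSet_ball]
  refine integral_mono (int_cs ((chir_smooth ρ).cont.mul hc) (chir_hcs hρ).mul_right)
    ((integrable_indicator_iff measurableSet_ball).2 (int_ball hc 0 _)) fun x => ?_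
  by_cases hx : x ∈ ball (0 : E2) (2 * ρ)
  · rw [Set.indicator_of_mem hx]
    exact mul_le_of_le_one_left (by positivity) (chir_le_one ρ x)
  · rw [Set.indicator_of_notMem hx]
    rw [chir_zero hρ (by simpa using hx)]; simp

lemma lint_eq {f : E2 → E2} (hc : Continuous f) (ρ : ℝ) :
    ∫⁻ x in ball (0 : E2) ρ, (‖f x‖₊ : ℝ≥0∞) ^ 2 =
      ENNReal.ofReal (∫ y in ball (0 : E2) ρ, (f y 0 ^ 2 + f y 1 ^ 2)) := by
  have hc2 : Continuous fun y => f y 0 ^ 2 + f y 1 ^ 2 := by fun_prop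
  rw [ofReal_integral_eq_lintegral_ofReal (int_ball hc2 0 ρ)
    (Filter.Eventually.of_forall fun x => by positivity)]
  refine lintegral_congr fun x => ?_
  rw [← normsq_eq, ENNReal.ofReal_pow (norm_nonneg _), ofReal_norm]
  rfl

/-- A Morrey bound by a real constant is the same as the family of energy bounds on balls. -/
lemma morrey_le_iff {α : ℝ} {f : E2 → E2} (hc : Continuous f) {M : ℝ} (hM : 0 ≤ M) :
    morreyR α 1 f ≤ ENNReal.ofReal M ↔
      ∀ ρ, 1 ≤ ρ → ∫ y in ball (0 : E2) ρ, (f y 0 ^ 2 + f y 1 ^ 2) ≤ M ^ 2 * ρ ^ (2 + 2 * α) := by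
  unfold morreyR
  rw [iSup_le_iff]
  have key : ∀ ρ : ℝ, 1 ≤ ρ →
      (((∫⁻ x in ball (0 : E2) ρ, (‖f x‖₊ : ℝ≥0∞) ^ 2) /
        ENNReal.ofReal (ρ ^ (((2 : ℕ) : ℝ) + 2 * α))) ^ ((1 : ℝ) / 2) ≤ ENNReal.ofReal M ↔
      ∫ y in ball (0 : E2) ρ, (f y 0 ^ 2 + f y 1 ^ 2) ≤ M ^ 2 * ρ ^ (2 + 2 * α)) := by
    intro ρ hρ
    have hp : 0 < ρ ^ (2 + 2 * α) := Real.rpow_pos_of_pos (by linarith) _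
    have h2 : ENNReal.ofReal M = (ENNReal.ofReal (M ^ 2)) ^ ((1 : ℝ) / 2) := by
      rw [ENNReal.ofReal_rpow_of_nonneg (sq_nonneg M) (by norm_num), ← Real.sqrt_eq_rpow,
        Real.sqrt_sq hM]
    rw [lint_eq hc, h2, ENNReal.rpow_le_rpow_iff (by norm_num), Nat.cast_ofNat,
      ENNReal.div_le_iff (by simpa using hp) ENNReal.ofReal_ne_top,
      ← ENNReal.ofReal_mul (sq_nonneg M), ENNReal.ofReal_le_ofReal_iff (by positivity)]
  exact ⟨fun h ρ hρ => (key ρ hρ).1 (h ⟨ρ, hρ⟩), fun h ρ => (key ρ ρ.2).2 (h ρ ρ.2)⟩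

/-- Energy increment on `[s, s']` from a uniform energy bound at all scales `ρ ≥ R`. -/
lemma enr_inc {α : ℝ} (hα : α < 1 / 2) : ∃ C > 0, ∀ θ, IsCutoff θ → ∀ u, IsYudovichSolution θ u →
    ∀ W, 0 ≤ W → (∀ t, 0 ≤ t → ∀ x, |curl2 (u t) x| ≤ W) → ∀ M R s s', 0 < M → 0 < R →
    0 ≤ s → s ≤ s' →
    (∀ τ, s ≤ τ → τ ≤ s' → ∀ ρ, R ≤ ρ → enr u ρ τ ≤ M ^ 2 * ρ ^ (2 + 2 * α)) →
    ∀ r, R ≤ r → enr u r s' - enr u r s ≤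
      C * (M ^ 2 * (M * R ^ (α - 1) + √(W * (M * R ^ (α - 1))))) * r ^ (2 + 2 * α) * (s' - s) := by
  obtain ⟨C, hC, H⟩ := energy_rate hα
  refine ⟨C, hC, ?_⟩
  intro θ hθ u hu W hW hcurl M R s s' hM hR hs hss hb r hr
  have hr0 : 0 < r := hR.trans_le hr
  refine enr_step hu hr0 hs hss fun t h1 h2 => ?_
  have ht : 0 ≤ t := hs.trans h1
  have hsm := slice_smooth hu.1 ht
  refine (H θ hθ (u t) hsm (hu.2.1 t ht) (hu.2.2.1 t ht) (pressure_cont hu ht) W hW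
    (hcurl t ht) M r hM hr0 fun ρ hρ => ?_).trans ?_
  · exact (ball_le_enr hu ht (hr0.trans_le hρ)).trans (hb t h1 h2 ρ (hr.trans hρ))
  · have : r ^ (α - 1) ≤ R ^ (α - 1) :=
      Real.rpow_le_rpow_of_nonpos hR hr (by linarith)
    gcongr

/-- Discrete continuity argument: a family with a common (possibly huge) growth rate that improves
`≤ 2 Y` to `≤ 3/2 Y` never leaves `≤ 2 Y`. -/
lemma bootstrap {G : ℝ → ℝ → ℝ} {R T Y Λ : ℝ} (hY : 0 < Y) (hΛ : 0 ≤ Λ)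
    (h0 : ∀ r, R ≤ r → G r 0 ≤ Y)
    (hrate : ∀ s s', 0 ≤ s → s ≤ s' → s' ≤ T → ∀ r, R ≤ r → G r s' - G r s ≤ Λ * (s' - s))
    (himp : ∀ s, 0 ≤ s → s ≤ T → (∀ τ, 0 ≤ τ → τ ≤ s → ∀ r, R ≤ r → G r τ ≤ 2 * Y) →
      ∀ r, R ≤ r → G r s ≤ 3 / 2 * Y) :
    ∀ s, 0 ≤ s → s ≤ T → ∀ r, R ≤ r → G r s ≤ 2 * Y := by
  -- a time step so short that no member grows by more than `Y / 2`
  set δ := Y / (2 * (Λ + 1)) with hδ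
  have hδ0 : 0 < δ := by positivity
  have hΛδ : Λ * δ ≤ Y / 2 := by
    have : (Λ + 1) * δ = Y / 2 := by rw [hδ]; field_simp
    nlinarith
  have key : ∀ n : ℕ, ∀ s, 0 ≤ s → s ≤ T → s ≤ n * δ → ∀ r, R ≤ r → G r s ≤ 3 / 2 * Y := by
    intro n
    induction n with
    | zero =>
      intro s hs _ hn r hr
      have : s = 0 := le_antisymm (by simpa using hn) hs
      rw [this]; linarith [h0 r hr]
    | succ n ih =>
      intro s hs hT hn
      refine himp s hs hT fun τ hτ hτs r hr => ?_
      rcases le_or_gt τ (n * δ) with h | h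
      · linarith [ih τ hτ (hτs.trans hT) h r hr]
      · have hn0 : 0 ≤ n * δ := by positivity
        have h1 := hrate (n * δ) τ hn0 h.le (hτs.trans hT) r hr
        have h2 := ih (n * δ) hn0 (h.le.trans (hτs.trans hT)) le_rfl r hr
        have h3 : Λ * (τ - n * δ) ≤ Λ * δ := by
          refine mul_le_mul_of_nonneg_left ?_ hΛ
          push_cast at hn; linarith
        linarith
  intro s hs hT r hr
  obtain ⟨n, hn⟩ := exists_nat_ge (s / δ)
  have := key n s hs hT ((div_le_iff₀ hδ0).1 hn) r hr
  linarith

/-! ### Algebraic growth -/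

lemma two_mul_rpow_le {α r : ℝ} (hα : α < 1 / 2) (hr : 0 < r) :
    (2 * r) ^ (2 + 2 * α) ≤ 8 * r ^ (2 + 2 * α) := by
  rw [Real.mul_rpow (by norm_num) hr.le]
  gcongr
  calc (2 : ℝ) ^ (2 + 2 * α) ≤ 2 ^ (3 : ℝ) :=
        Real.rpow_le_rpow_of_exponent_le (by norm_num) (by linarith)
    _ = 8 := by norm_num

/-- Energy bound at scales `≥ R` on `[0, T]`, when `R ^ (1 - α)` dominates `T m + T² W m`. -/
lemma energy_global {α : ℝ} (hα : α < 1 / 2) : ∃ c > 0, ∀ θ, IsCutoff θ → ∀ u,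
    IsYudovichSolution θ u → ∀ W, 0 ≤ W → (∀ t, 0 ≤ t → ∀ x, |curl2 (u t) x| ≤ W) →
    ∀ m T S R, 0 < m → 0 ≤ T → 0 < S → 1 ≤ R →
    morreyR α 1 (u 0) ≤ ENNReal.ofReal m →
    (∀ t, 0 ≤ t → t ≤ T → morreyR α 1 (u t) ≤ ENNReal.ofReal S) →
    c * (T * m) + c * (T ^ 2 * W * m) ≤ R ^ (1 - α) →
    ∀ r, R ≤ r → enr u r T ≤ (4 * m) ^ 2 * r ^ (2 + 2 * α) := by
  obtain ⟨C, hC, H⟩ := enr_inc hα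
  refine ⟨32 * C + 256 * C ^ 2, by positivity, ?_⟩
  intro θ hθ u hu W hW hcurl m T S R hm hT hS hR h0 hap hD
  have hR0 : 0 < R := by linarith
  -- converts a Morrey bound into a bound for the localised energy
  have conv : ∀ t, 0 ≤ t → ∀ B, 0 ≤ B → morreyR α 1 (u t) ≤ ENNReal.ofReal B → ∀ r, R ≤ r →
      enr u r t ≤ 8 * B ^ 2 * r ^ (2 + 2 * α) := by
    intro t ht B hB hb r hr
    have hr0 : 0 < r := hR0.trans_le hr
    have h1 := (morrey_le_iff (slice_smooth hu.1 ht).continuous hB).1 hb (2 * r) (by linarith)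
    calc enr u r t ≤ _ := enr_le_ball hu ht hr0
      _ ≤ B ^ 2 * (2 * r) ^ (2 + 2 * α) := h1
      _ ≤ B ^ 2 * (8 * r ^ (2 + 2 * α)) := by gcongr; exact two_mul_rpow_le hα hr0
      _ = _ := by ring
  set A := R ^ (α - 1) with hA
  have hA0 : 0 < A := Real.rpow_pos_of_pos hR0 _
  have hAD : R ^ (1 - α) * A = 1 := by
    rw [hA, ← Real.rpow_add hR0]; simp
  set G : ℝ → ℝ → ℝ := fun r t => enr u r t / r ^ (2 + 2 * α) with hG
  have hpos : ∀ r, R ≤ r → 0 < r ^ (2 + 2 * α) := fun r hr =>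
    Real.rpow_pos_of_pos (hR0.trans_le hr) _
  have inc : ∀ M s s', 0 < M → 0 ≤ s → s ≤ s' →
      (∀ τ, s ≤ τ → τ ≤ s' → ∀ ρ, R ≤ ρ → enr u ρ τ ≤ M ^ 2 * ρ ^ (2 + 2 * α)) →
      ∀ r, R ≤ r → G r s' - G r s ≤ C * (M ^ 2 * (M * A + √(W * (M * A)))) * (s' - s) := by
    intro M s s' hM hs hss hb r hr
    have := H θ hθ u hu W hW hcurl M R s s' hM hR0 hs hss hb r hr
    simp only [hG]
    rw [← sub_div, div_le_iff₀ (hpos r hr)]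
    linarith
  -- with `A = R ^ (α - 1)` the growth over `[0, T]` is at most half of the initial budget
  have hcoef : T * (C * (4 * m * A + √(W * (4 * m * A)))) ≤ 1 / 4 := by
    have hTm : 0 ≤ T * m := by positivity
    have hTW : 0 ≤ T ^ 2 * W * m := by positivity
    have hsum : (32 * C + 256 * C ^ 2) * (T * m) * A + (32 * C + 256 * C ^ 2) * (T ^ 2 * W * m) * A
        ≤ 1 := by
      rw [← hAD, ← add_mul]; gcongr
    have p1 : 0 ≤ C * (T * m) * A := by positivity
    have p2 : 0 ≤ C ^ 2 * (T * m) * A := by positivity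
    have p3 : 0 ≤ C * (T ^ 2 * W * m) * A := by positivity
    have p4 : 0 ≤ C ^ 2 * (T ^ 2 * W * m) * A := by positivity
    have q1 : C * (T * m) * A ≤ 1 / 32 := by nlinarith
    have q2 : C ^ 2 * (T ^ 2 * W * m) * A ≤ 1 / 256 := by nlinarith
    have q3 : T * (C * √(W * (4 * m * A))) ≤ 1 / 8 := by
      have e : T * (C * √(W * (4 * m * A))) = √((T * C) ^ 2 * (W * (4 * m * A))) := by
        rw [Real.sqrt_mul (sq_nonneg _), Real.sqrt_sq (by positivity)]; ring
      rw [e, Real.sqrt_le_left (by norm_num)]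
      nlinarith
    nlinarith
  -- `Λ` only uses the a priori bound `S`, with `(3 S)² ≥ 8 S²`
  have main := bootstrap (G := G) (R := R) (T := T) (Y := 8 * m ^ 2)
    (Λ := C * ((3 * S) ^ 2 * (3 * S * A + √(W * (3 * S * A))))) (by positivity) (by positivity)
    ?_ ?_ ?_ T hT le_rfl
  · intro r hr
    have := main r hr
    simp only [hG] at this
    rw [div_le_iff₀ (hpos r hr)] at this
    linarith
  · intro r hr
    simp only [hG]
    rw [div_le_iff₀ (hpos r hr)]
    exact conv 0 le_rfl m hm.le h0 r hr
  · intro s s' hs hss hsT r hr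
    refine inc (3 * S) s s' (by positivity) hs hss (fun τ h1 h2 ρ hρ => ?_) r hr
    refine (conv τ (hs.trans h1) S hS.le (hap τ (hs.trans h1) (h2.trans hsT)) ρ hρ).trans ?_
    have := hpos ρ hρ
    have : 0 ≤ S ^ 2 := sq_nonneg S
    gcongr
    linarith
  · intro s hs hsT hb r hr
    have h1 := inc (4 * m) 0 s (by positivity) le_rfl hs (fun τ h1 h2 ρ hρ => by
      have := hb τ h1 h2 ρ hρ
      simp only [hG] at this
      rw [div_le_iff₀ (hpos ρ hρ)] at this
      linarith) r hr
    have h2 : G r 0 ≤ 8 * m ^ 2 := by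
      simp only [hG]
      rw [div_le_iff₀ (hpos r hr)]
      exact conv 0 le_rfl m hm.le h0 r hr
    have h3 : C * ((4 * m) ^ 2 * (4 * m * A + √(W * (4 * m * A)))) * (s - 0) ≤ 4 * m ^ 2 := by
      have e : C * ((4 * m) ^ 2 * (4 * m * A + √(W * (4 * m * A)))) * (s - 0)
        = 16 * m ^ 2 * (s * (C * (4 * m * A + √(W * (4 * m * A))))) := by ring
      have : s * (C * (4 * m * A + √(W * (4 * m * A)))) ≤
        T * (C * (4 * m * A + √(W * (4 * m * A)))) := by gcongr
      rw [e]
      nlinarith [sq_nonneg m]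
    linarith

lemma add3_rpow_le {a b p : ℝ} (ha : 0 ≤ a) (hb : 0 ≤ b) (hp : 0 ≤ p) :
    (1 + a + b) ^ p ≤ 3 ^ p * (1 + a ^ p + b ^ p) := by
  have hx : 1 + a + b ≤ 3 * max 1 (max a b) := by
    have h1 := le_max_left 1 (max a b)
    have h2 := (le_max_left a b).trans (le_max_right 1 (max a b))
    have h3 := (le_max_right a b).trans (le_max_right 1 (max a b))
    linarith
  have h0 : 0 ≤ max 1 (max a b) := zero_le_one.trans (le_max_left _ _)
  calc (1 + a + b) ^ p ≤ (3 * max 1 (max a b)) ^ p := by gcongr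
    _ = 3 ^ p * (max 1 (max a b)) ^ p := Real.mul_rpow (by norm_num) h0
    _ ≤ _ := by
      gcongr
      have ha' := Real.rpow_nonneg ha p
      have hb' := Real.rpow_nonneg hb p
      rcases max_choice 1 (max a b) with h | h
      · rw [h, Real.one_rpow]; linarith
      · rcases max_choice a b with h' | h' <;> rw [h, h'] <;> linarith

/-- The growth bound with `M₀` replaced by any real `m ≥ M₀`, `m > 0`. -/
lemma morrey_real {α : ℝ} (hα0 : 0 ≤ α) (hα : α < 1 / 2) : ∃ K > 0, ∀ θ, IsCutoff θ → ∀ u,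
    IsYudovichSolution θ u → ∀ W, 0 ≤ W → (∀ t, 0 ≤ t → ∀ x, |curl2 (u t) x| ≤ W) →
    ∀ m T S, 0 < m → 0 ≤ T → 0 < S →
    morreyR α 1 (u 0) ≤ ENNReal.ofReal m →
    (∀ t, 0 ≤ t → t ≤ T → morreyR α 1 (u t) ≤ ENNReal.ofReal S) →
    morreyR α 1 (u T) ≤ ENNReal.ofReal (K * (m + T ^ ((1 + α) / (1 - α)) * m ^ (2 / (1 - α)) +
      T ^ (2 * (1 + α) / (1 - α)) * W ^ ((1 + α) / (1 - α)) * m ^ (2 / (1 - α)))) := by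
  obtain ⟨c, hc, H⟩ := energy_global hα
  have h1α : 0 < 1 - α := by linarith
  set p := (1 + α) / (1 - α) with hp
  have hp0 : 0 ≤ p := by positivity
  refine ⟨4 * 3 ^ p * (1 + c ^ p), by positivity, ?_⟩
  intro θ hθ u hu W hW hcurl m T S hm hT hS h0 hap
  -- `R ^ (1 - α) = D` is the smallest choice allowed by `energy_global`, up to the added `1`
  set D := 1 + c * (T * m) + c * (T ^ 2 * W * m) with hD
  have hD1 : 1 ≤ D := by
    have : 0 ≤ c * (T * m) := by positivity
    have : 0 ≤ c * (T ^ 2 * W * m) := by positivity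
    linarith
  set R := D ^ (1 / (1 - α)) with hR
  have hR1 : 1 ≤ R := Real.one_le_rpow hD1 (by positivity)
  have hRD : R ^ (1 - α) = D := by
    rw [hR, ← Real.rpow_mul (by linarith), one_div_mul_cancel h1α.ne', Real.rpow_one]
  have hRp : R ^ (1 + α) = D ^ p := by
    rw [hR, ← Real.rpow_mul (by linarith), hp]; congr 1; ring
  have hen := H θ hθ u hu W hW hcurl m T S R hm hT hS hR1 h0 hap (by rw [hRD, hD]; linarith)
  have hRp1 : 1 ≤ R ^ (1 + α) := Real.one_le_rpow hR1 (by linarith)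
  have hR2 : R ^ (2 + 2 * α) = (R ^ (1 + α)) ^ 2 := by
    have h := Real.rpow_mul_natCast (x := R) (by linarith) (1 + α) 2
    rw [← h]; congr 1; push_cast; ring
  have hstep : morreyR α 1 (u T) ≤ ENNReal.ofReal (4 * m * R ^ (1 + α)) := by
    have hcT := (slice_smooth hu.1 hT).continuous
    refine (morrey_le_iff hcT (by positivity)).2 fun ρ hρ => ?_
    have hρp : 1 ≤ ρ ^ (2 + 2 * α) := Real.one_le_rpow hρ (by linarith)
    rw [mul_pow]
    rcases le_total R ρ with h | h
    · refine (ball_le_enr hu hT (by linarith)).trans ((hen ρ h).trans ?_)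
      have : 1 ≤ (R ^ (1 + α)) ^ 2 := one_le_pow₀ hRp1
      gcongr
      exact le_mul_of_one_le_right (by positivity) this
    -- a ball of radius below `R` is enlarged to radius `R`
    · have hmono : ∫ y in ball (0 : E2) ρ, (u T y 0 ^ 2 + u T y 1 ^ 2) ≤
          ∫ y in ball (0 : E2) R, (u T y 0 ^ 2 + u T y 1 ^ 2) :=
        setIntegral_mono_set (int_ball (en_cont hu hT) 0 R)
          (Filter.Eventually.of_forall fun x => by positivity)
          (Filter.Eventually.of_forall (ball_subset_ball h))
      refine hmono.trans ((ball_le_enr hu hT (by linarith)).trans ((hen R le_rfl).trans ?_))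
      rw [hR2]
      exact le_mul_of_one_le_right (by positivity) hρp
  refine hstep.trans (ENNReal.ofReal_le_ofReal ?_)
  have hmq : m ^ (2 / (1 - α)) = m * m ^ p := by
    have : 2 / (1 - α) = 1 + p := by rw [hp]; field_simp; ring
    rw [this, Real.rpow_add hm, Real.rpow_one]
  have hT2 : T ^ (2 * (1 + α) / (1 - α)) = (T ^ 2) ^ p := by
    rw [← Real.rpow_natCast, ← Real.rpow_mul hT, hp]; congr 1; push_cast; ring
  have hbd := add3_rpow_le (a := c * (T * m)) (b := c * (T ^ 2 * W * m)) (by positivity)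
    (by positivity) hp0
  rw [Real.mul_rpow hc.le (by positivity), Real.mul_rpow hT hm.le,
    Real.mul_rpow hc.le (by positivity), Real.mul_rpow (by positivity) hm.le,
    Real.mul_rpow (by positivity) hW] at hbd
  rw [hRp, hmq, hT2]
  set a := T ^ p
  set b := (T ^ 2) ^ p
  set w := W ^ p
  set n := m ^ p
  set k := c ^ p
  have ha : 0 ≤ a := by positivity
  have hb : 0 ≤ b := by positivity
  have hw : 0 ≤ w := by positivity
  have hn : 0 ≤ n := by positivity
  have hk : 0 ≤ k := by positivity
  have h3 : (0 : ℝ) ≤ 3 ^ p := by positivity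
  calc 4 * m * D ^ p ≤ 4 * m * (3 ^ p * (1 + k * (a * n) + k * (b * w * n))) := by gcongr
    _ ≤ 4 * m * (3 ^ p * ((1 + k) * (1 + a * n + b * w * n))) := by
      gcongr
      have : 0 ≤ a * n := by positivity
      have : 0 ≤ b * w * n := by positivity
      nlinarith
    _ = _ := by ring

/-- Corollary 4.2 (global algebraic growth of the Morrey norm): for a classical Yudovich
solution with locally bounded `L²_α` norm and vorticity bounded by `W = sup_x |ω(0,x)|`,
`‖u(t)‖_{L²_α} ≤ K ( M₀ + t^{(1+α)/(1−α)} M₀^{2/(1−α)}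
  + t^{2(1+α)/(1−α)} W^{(1+α)/(1−α)} M₀^{2/(1−α)} )` with `M₀ = ‖u(0)‖_{L²_α}`
and `K` depending only on `α`. -/
theorem morrey_algebraic_growth (α : ℝ) (hα0 : 0 ≤ α) (hα : α < 1 / 2) :
    ∃ K : ℝ, 0 < K ∧
      ∀ (θ : E2 → ℝ), IsCutoff θ →
      ∀ u : ℝ → E2 → E2, IsYudovichSolution θ u →
        (∀ T : ℝ, 0 < T → (⨆ t : Set.Icc (0 : ℝ) T, morreyR α 1 (u t.1)) < ⊤) →
        ∀ W : ℝ, IsLUB (Set.range fun x => |curl2 (u 0) x|) W →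
        (∀ t, 0 ≤ t → ∀ x, |curl2 (u t) x| ≤ W) →
        ∀ t, 0 ≤ t →
          morreyR α 1 (u t) ≤
            ENNReal.ofReal K *
              (morreyR α 1 (u 0) +
                ENNReal.ofReal (t ^ ((1 + α) / (1 - α))) *
                  (morreyR α 1 (u 0)) ^ (2 / (1 - α)) +
                ENNReal.ofReal (t ^ (2 * (1 + α) / (1 - α))) *
                  ENNReal.ofReal (W ^ ((1 + α) / (1 - α))) *
                  (morreyR α 1 (u 0)) ^ (2 / (1 - α))) := by
  obtain ⟨K, hK, H⟩ := morrey_real hα0 hα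
  refine ⟨K, hK, ?_⟩
  intro θ hθ u hu hsup W _ hcurl t ht
  have hW : 0 ≤ W := (abs_nonneg _).trans (hcurl 0 le_rfl 0)
  have h1α : 0 < 1 - α := by linarith
  -- `max t 1` keeps the time horizon positive when `t = 0`
  have hfin := hsup (max t 1) (by positivity)
  set B := ⨆ s : Set.Icc (0 : ℝ) (max t 1), morreyR α 1 (u s.1) with hB
  have hle : ∀ s, 0 ≤ s → s ≤ t → morreyR α 1 (u s) ≤ B := fun s h0 hs =>
    le_iSup (fun s : Set.Icc (0 : ℝ) (max t 1) => morreyR α 1 (u s.1))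
      ⟨s, h0, hs.trans (le_max_left _ _)⟩
  have hBS : B ≤ ENNReal.ofReal (B.toReal + 1) := by
    rw [← ENNReal.ofReal_toReal hfin.ne]
    exact ENNReal.ofReal_le_ofReal (by rw [ENNReal.toReal_ofReal ENNReal.toReal_nonneg]; linarith)
  have hM : morreyR α 1 (u 0) ≠ ⊤ := ((hle 0 le_rfl ht).trans_lt hfin).ne
  set M := (morreyR α 1 (u 0)).toReal with hMdef
  have hM0 : 0 ≤ M := ENNReal.toReal_nonneg
  have hMe : morreyR α 1 (u 0) = ENNReal.ofReal M := (ENNReal.ofReal_toReal hM).symm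
  have hq : 0 ≤ 2 / (1 - α) := by positivity
  set F : ℝ → ℝ := fun m => K * (m + t ^ ((1 + α) / (1 - α)) * m ^ (2 / (1 - α)) +
      t ^ (2 * (1 + α) / (1 - α)) * W ^ ((1 + α) / (1 - α)) * m ^ (2 / (1 - α))) with hF
  have hFc : Continuous F := by
    have := Real.continuous_rpow_const hq
    fun_prop
  have hlim : Filter.Tendsto (fun m => ENNReal.ofReal (F m)) (nhdsWithin M (Set.Ioi M))
      (nhds (ENNReal.ofReal (F M))) :=
    ((ENNReal.continuous_ofReal.comp hFc).tendsto M).mono_left nhdsWithin_le_nhds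
  -- `morrey_real` needs `m > 0`, hence the limit `m ↓ M` instead of `m = M`
  have hfinal : morreyR α 1 (u t) ≤ ENNReal.ofReal (F M) := by
    refine ge_of_tendsto hlim ?_
    filter_upwards [self_mem_nhdsWithin] with m hm
    rw [Set.mem_Ioi] at hm
    refine H θ hθ u hu W hW hcurl m t (B.toReal + 1) (hM0.trans_lt hm) ht
      (by have : 0 ≤ B.toReal := ENNReal.toReal_nonneg
          linarith) ?_ fun s h0 hs => (hle s h0 hs).trans hBS
    rw [hMe]
    exact ENNReal.ofReal_le_ofReal hm.le
  refine hfinal.trans (le_of_eq ?_)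
  have htp : 0 ≤ t ^ ((1 + α) / (1 - α)) := Real.rpow_nonneg ht _
  have ht2 : 0 ≤ t ^ (2 * (1 + α) / (1 - α)) := Real.rpow_nonneg ht _
  have hWp : 0 ≤ W ^ ((1 + α) / (1 - α)) := Real.rpow_nonneg hW _
  have hMp : 0 ≤ M ^ (2 / (1 - α)) := Real.rpow_nonneg hM0 _
  rw [hMe, ENNReal.ofReal_rpow_of_nonneg hM0 hq, hF, ENNReal.ofReal_mul hK.le,
    ENNReal.ofReal_add (by positivity) (by positivity),
    ENNReal.ofReal_add (by positivity) (by positivity),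
    ENNReal.ofReal_mul htp, ENNReal.ofReal_mul (by positivity), ENNReal.ofReal_mul ht2]

end
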